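/- Let p > 3 be a prime. If p ≡ 1 (mod 3), write p = x^2 + 3y^2 with integers x, y; then (−1)^{(p−1)/2}·Σ_{k=0}^{p−1} k^2·C(2k,k)^3/256^k ≡ (1/9)x^2 − p/18 − p^2/(72x^2) (mod p^3) and (−1)^{(p−1)/2}·Σ_{k=0}^{p−1} k^3·C(2k,k)^3/256^k ≡ (1/18)x^2 + p/72 − p^2/(144x^2) (mod p^3). If p ≡ 2 (mod 3), then (−1)^{(p−1)/2}·Σ_{k=0}^{p−1} k^2·C(2k,k)^3/256^k ≡ −(2/9)R_3(p) (mod p^2) and (−1)^{(p−1)/2}·Σ_{k=0}^{p−1} k^3·C(2k,k)^3/256^k ≡ −(1/9)R_3(p) + (1/24)p (mod p^2). -/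

import Mathlib

/-- `a ≡ b (mod p^r)` for rationals: the numerator of `a - b` in lowest terms
is divisible by `p^r`. -/
def ratCongr (p r : ℕ) (a b : ℚ) : Prop := (p : ℤ)^r ∣ (a - b).num
/-- `R_3(p)`. -/
def R3 (p : ℕ) : ℚ :=
  (1 + 2*(p:ℚ) + 4/3*(2^(p-1) - 1) - 3/2*(3^(p-1) - 1)) *
    (((p-1)/2).choose (p/6) : ℚ)^2
/-!
The terms `C(2k,k)^3 / 256^k` are those of a hypergeometric series, deformed here by a parameter `e`
so that the shift `e ↦ e + 1/2` multiplies three weighted sums by explicit rational factors (by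
creative telescoping). At `e = ±p/4` and `e = p/12` the sums therefore become closed products. As
functions of `e = pδ` the truncated sums are quadratic polynomials modulo `p^3`, so interpolating
at these three nodes gives their values at `e = 0`. Each nonzero product is a rational constant
times a power of `p`, possibly `C((p-1)/2, ⌊p/6⌋)^2` or its inverse, and a unit whose logarithm
modulo `p^3` is a combination of harmonic numbers. For `p ≡ 2 (mod 3)` the logarithms, taken modulo
`p^2`, produce the Fermat quotients of `2` and `3` in `R_3(p)`.

For `p ≡ 1 (mod 3)` the unweighted sum is, up to sign and modulo `p^3`, the square of a Jacobi sum
`J` of powers of the Teichmüller character: the binomial theorem writes `8J` as a combination of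
binomial coefficients, and the logarithms match. Now `J² - 2aJ + p = 0` with `a² = x²`, so the unit
`V = J²` is a root of `V² - (4x² - 2p)V + p² = 0`, that is, `V ≡ 4x² - 2p - p²/(4x²) (mod p^3)`.
-/

namespace CentralBinomCubes

open Finset

/-! ### Congruences between `p`-integral rationals -/

section Divisibility

/-- `p ^ r` divides the rational number `x` in the ring `ℤ_(p)`. -/
def PDvd (p r : ℕ) (x : ℚ) : Prop := padicNorm p x ≤ (p : ℚ) ^ (-r : ℤ)

/-- The congruence `x ≡ y (mod p ^ r)` in `ℚ`, modulo the subgroup `p ^ r ℤ_(p)`. -/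
def PModEq (p r : ℕ) (x y : ℚ) : Prop := PDvd p r (x - y)

variable {p r s : ℕ} {a b c d x y z u : ℚ}

lemma ne_zero_of_norm_eq_one (hu : padicNorm p u = 1) : u ≠ 0 := by
  rintro rfl
  simp at hu

lemma PDvd.zero : PDvd p r 0 := by rw [PDvd, padicNorm.zero]; positivity

lemma PDvd.congr (h : PDvd p r x) (e : x = y) : PDvd p r y := e ▸ h

lemma PDvd.neg (hx : PDvd p r x) : PDvd p r (-x) := by rwa [PDvd, padicNorm.neg]

lemma PModEq.of_sub_eq (h : PDvd p r z) (e : x - y = z) : PModEq p r x y := by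
  rwa [PModEq, e]

lemma PModEq.refl (x : ℚ) : PModEq p r x x := .of_sub_eq .zero (sub_self x)

lemma PModEq.symm (h : PModEq p r x y) : PModEq p r y x := .of_sub_eq (PDvd.neg h) (by ring)

variable [hp : Fact p.Prime]

/-- The ring `ℤ_(p)` of `p`-integral rational numbers. -/
def pInt (p : ℕ) [Fact p.Prime] : Subring ℚ where
  carrier := {x | padicNorm p x ≤ 1}
  mul_mem' {x y} hx hy := by
    simpa using mul_le_one₀ hx (padicNorm.nonneg y) hy
  one_mem' := by simp
  add_mem' hx hy := padicNorm.nonarchimedean.trans (max_le hx hy)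
  zero_mem' := by simp
  neg_mem' hx := by simpa using hx

lemma p_ne_zero : (p : ℚ) ≠ 0 := by exact_mod_cast hp.out.ne_zero

lemma mem_pInt_of_norm_eq_one (hu : padicNorm p u = 1) : u ∈ pInt p := hu.le

lemma inv_mem_pInt_of_norm_eq_one (hu : padicNorm p u = 1) : u⁻¹ ∈ pInt p := by
  have : padicNorm p u⁻¹ = 1 := by rw [← one_div, padicNorm.div, hu]; simp
  exact this.le

lemma norm_eq_one_of_pos_of_lt {k : ℕ} (h0 : 0 < k) (hk : k < p) : padicNorm p k = 1 :=
  (padicNorm.nat_eq_one_iff k).2 (Nat.not_dvd_of_pos_of_lt h0 hk)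

lemma pDvd_zero_iff : PDvd p 0 x ↔ x ∈ pInt p := by
  rw [PDvd, Nat.cast_zero, neg_zero, zpow_zero]; rfl

lemma pDvd_iff_exists : PDvd p r x ↔ ∃ c ∈ pInt p, x = p ^ r * c := by
  have hpr : (0 : ℚ) < p ^ r := by have := hp.out.pos; positivity
  have norm_pr : padicNorm p ((p : ℚ) ^ r) = ((p : ℚ) ^ r)⁻¹ := by
    rw [IsAbsoluteValue.abv_pow (padicNorm p), padicNorm.padicNorm_p hp.out.one_lt, inv_pow]
  rw [PDvd, zpow_neg, zpow_natCast]
  constructor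
  · intro h
    refine ⟨x / p ^ r, ?_, by field_simp⟩
    change padicNorm p (x / p ^ r) ≤ 1
    rw [padicNorm.div, norm_pr, div_inv_eq_mul]
    calc padicNorm p x * (p : ℚ) ^ r ≤ ((p : ℚ) ^ r)⁻¹ * (p : ℚ) ^ r := by gcongr
      _ = 1 := inv_mul_cancel₀ hpr.ne'
  · rintro ⟨c, hc, rfl⟩
    rw [padicNorm.mul, norm_pr]
    exact mul_le_of_le_one_right (by positivity) hc

lemma PDvd.mono (hx : PDvd p r x) (h : s ≤ r) : PDvd p s x :=
  hx.trans (zpow_le_zpow_right₀ (by exact_mod_cast hp.out.one_le) (by simpa using h))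

lemma PDvd.mem (hx : PDvd p r x) : x ∈ pInt p := pDvd_zero_iff.1 (hx.mono r.zero_le)

lemma PDvd.prime : PDvd p 1 (p : ℚ) := pDvd_iff_exists.2 ⟨1, one_mem _, by simp⟩

lemma PDvd.add (hx : PDvd p r x) (hy : PDvd p r y) : PDvd p r (x + y) :=
  padicNorm.nonarchimedean.trans (max_le hx hy)

lemma PDvd.sub (hx : PDvd p r x) (hy : PDvd p r y) : PDvd p r (x - y) :=
  sub_eq_add_neg x y ▸ hx.add hy.neg

lemma PDvd.mul (hx : PDvd p r x) (hy : PDvd p s y) : PDvd p (r + s) (x * y) := by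
  have hp0 : (p : ℚ) ≠ 0 := p_ne_zero
  rw [PDvd, padicNorm.mul, Nat.cast_add, neg_add, zpow_add₀ hp0]
  exact mul_le_mul hx hy (padicNorm.nonneg _) (by positivity)

lemma PDvd.const_mul (hx : PDvd p r x) (hc : c ∈ pInt p) : PDvd p r (c * x) := by
  simpa using (pDvd_zero_iff.2 hc).mul hx

lemma PDvd.mul_const (hx : PDvd p r x) (hc : c ∈ pInt p) : PDvd p r (x * c) :=
  mul_comm c x ▸ hx.const_mul hc

lemma PDvd.sum {ι : Type*} {s : Finset ι} {f : ι → ℚ} (h : ∀ i ∈ s, PDvd p r (f i)) :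
    PDvd p r (∑ i ∈ s, f i) :=
  padicNorm.sum_le' h (zpow_nonneg p.cast_nonneg _)

lemma PDvd.of_unit_mul (hu : padicNorm p u = 1) (h : PDvd p r (u * x)) : PDvd p r x := by
  rwa [PDvd, padicNorm.mul, hu, one_mul] at h

lemma pDvd_intCast_iff {n : ℤ} : PDvd p r n ↔ (p : ℤ) ^ r ∣ n := by
  rw [PDvd, ← padicNorm.dvd_iff_norm_le]
  push_cast
  rfl

lemma not_pDvd_of_norm_eq_one (hu : padicNorm p u = 1) : ¬ PDvd p 1 u := by
  intro h
  have h1 : PDvd p 1 ((1 : ℤ) : ℚ) := by simpa [PDvd, hu] using h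
  have h2 := Int.eq_one_of_dvd_one (Int.natCast_nonneg p) (by simpa using pDvd_intCast_iff.1 h1)
  exact hp.out.one_lt.ne' (by exact_mod_cast h2)

lemma norm_eq_one_of_not_pDvd (hx : x ∈ pInt p) (h : ¬ PDvd p 1 x) : padicNorm p x = 1 := by
  have hx0 : x ≠ 0 := by rintro rfl; exact h PDvd.zero
  obtain ⟨n, hn⟩ := padicNorm.values_discrete hx0
  have hp1 : (1 : ℚ) < p := by exact_mod_cast hp.out.one_lt
  have h0 : (p : ℚ) ^ (-n) ≤ (p : ℚ) ^ (0 : ℤ) := by rw [← hn, zpow_zero]; exact hx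
  have h1 : (p : ℚ) ^ (-1 : ℤ) < (p : ℚ) ^ (-n) := by
    rw [← hn]; simpa [PDvd] using h
  have e0 := (zpow_le_zpow_iff_right₀ hp1).1 h0
  have e1 := (zpow_lt_zpow_iff_right₀ hp1).1 h1
  rw [hn, show -n = 0 by omega, zpow_zero]

lemma norm_eq_one_of_pDvd_sub (hu : padicNorm p u = 1) (h : PDvd p 1 (x - u)) :
    padicNorm p x = 1 := by
  refine norm_eq_one_of_not_pDvd ?_ fun hx => not_pDvd_of_norm_eq_one hu ?_
  · simpa using add_mem h.mem (mem_pInt_of_norm_eq_one hu)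
  · simpa using hx.sub h

lemma PModEq.trans (h : PModEq p r x y) (h' : PModEq p r y z) : PModEq p r x z :=
  .of_sub_eq (PDvd.add h h') (by ring)

lemma PModEq.mono (hx : PModEq p r x y) (h : s ≤ r) : PModEq p s x y := PDvd.mono hx h

lemma PModEq.add (h : PModEq p r a b) (h' : PModEq p r c d) : PModEq p r (a + c) (b + d) :=
  .of_sub_eq (PDvd.add h h') (by ring)

lemma PModEq.sub (h : PModEq p r a b) (h' : PModEq p r c d) : PModEq p r (a - c) (b - d) :=
  .of_sub_eq (PDvd.sub h h') (by ring)

lemma PModEq.const_mul (h : PModEq p r a b) (hc : c ∈ pInt p) : PModEq p r (c * a) (c * b) :=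
  .of_sub_eq (PDvd.const_mul h hc) (by ring)

lemma PModEq.mul (h : PModEq p r a b) (h' : PModEq p r c d) (hb : b ∈ pInt p)
    (hc : c ∈ pInt p) : PModEq p r (a * c) (b * d) :=
  .of_sub_eq ((PDvd.const_mul h hc).add (PDvd.const_mul h' hb)) (by ring)

lemma PModEq.mem (h : PModEq p r x y) (hy : y ∈ pInt p) : x ∈ pInt p := by
  simpa using add_mem (PDvd.mem h) hy

lemma PModEq.ratCongr (h : PModEq p r x y) : ratCongr p r x y := by
  have hden : ((x - y).den : ℚ) ∈ pInt p := natCast_mem _ _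
  have hnum := PDvd.mul_const h hden
  rw [Rat.mul_den_eq_num] at hnum
  exact pDvd_intCast_iff.1 hnum

end Divisibility

section TruncatedExponential

variable {p r : ℕ} {a b x α β : ℚ}

/-- `α` is a logarithm of `a` to the precision `p ^ 3`: `p` divides `α`, and `a` is congruent to
the exponential series of `α`, whose terms of degree at least three vanish modulo `p ^ 3`. -/
def HasLog (p : ℕ) (a α : ℚ) : Prop := PDvd p 1 α ∧ PModEq p 3 a (1 + α + α ^ 2 / 2)

lemma HasLog.one : HasLog p 1 0 := ⟨.zero, .of_sub_eq .zero (by ring)⟩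

lemma HasLog.truncExp (hα : PDvd p 1 α) : HasLog p (1 + α + α ^ 2 / 2) α := ⟨hα, .refl _⟩

lemma HasLog.congr (h : HasLog p a α) (ha : a = b) (hα : α = β) : HasLog p b β := ha ▸ hα ▸ h

variable [hp : Fact p.Prime]

lemma HasLog.pModEq (ha : HasLog p a α) (hb : HasLog p b α) : PModEq p 3 a b :=
  ha.2.trans hb.2.symm

variable [h3 : Fact (3 < p)]

lemma norm_six_pow (k : ℕ) : padicNorm p (6 ^ k) = 1 := by
  have h2 : padicNorm p (2 : ℕ) = 1 := norm_eq_one_of_pos_of_lt two_pos (by have := h3.out; omega)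
  have h3 : padicNorm p (3 : ℕ) = 1 := norm_eq_one_of_pos_of_lt three_pos h3.out
  rw [show (6 : ℚ) ^ k = (((2 : ℕ) : ℚ) * (3 : ℕ)) ^ k by norm_num,
    IsAbsoluteValue.abv_pow (padicNorm p), padicNorm.mul, h2, h3, one_mul, one_pow]

lemma PDvd.of_six_pow_mul (k : ℕ) (h : PDvd p r (6 ^ k * x)) : PDvd p r x :=
  h.of_unit_mul (norm_six_pow k)

lemma mem_pInt_of_six_pow_mul (k : ℕ) (h : 6 ^ k * x ∈ pInt p) : x ∈ pInt p :=
  pDvd_zero_iff.1 ((pDvd_zero_iff.2 h).of_six_pow_mul k)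

lemma mem_pInt_of_six_pow_mul_eq (k : ℕ) (n : ℤ) (h : 6 ^ k * x = n) : x ∈ pInt p :=
  mem_pInt_of_six_pow_mul k (h ▸ intCast_mem _ n)

lemma inv_two_mem_pInt : (2⁻¹ : ℚ) ∈ pInt p := mem_pInt_of_six_pow_mul_eq 1 3 (by norm_num)

lemma HasLog.pDvd_sub_one (h : HasLog p a α) : PDvd p 1 (a - 1) := by
  have h1 : PDvd p 1 (α * (1 + α * 2⁻¹)) :=
    h.1.mul_const (add_mem (one_mem _) (mul_mem h.1.mem inv_two_mem_pInt))
  exact (PDvd.add (h.2.mono (by norm_num)) h1).congr (by ring)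

lemma HasLog.norm_eq_one (h : HasLog p a α) : padicNorm p a = 1 :=
  norm_eq_one_of_pDvd_sub padicNorm.one h.pDvd_sub_one

lemma HasLog.mem (h : HasLog p a α) : a ∈ pInt p := mem_pInt_of_norm_eq_one h.norm_eq_one

lemma HasLog.ne_zero (h : HasLog p a α) : a ≠ 0 := ne_zero_of_norm_eq_one h.norm_eq_one

lemma HasLog.congr_pModEq (h : HasLog p a α) (hα : PModEq p 3 α β) : HasLog p a β := by
  have hβ : PDvd p 1 β := (h.1.sub (hα.mono (by norm_num))).congr (by ring)
  refine ⟨hβ, h.2.trans (.of_sub_eq (PDvd.mul_const hα (c := 1 + (α + β) * 2⁻¹) ?_) (by ring))⟩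
  exact add_mem (one_mem _) (mul_mem (add_mem h.1.mem hβ.mem) inv_two_mem_pInt)

lemma norm_one_add_half_sum (hα : PDvd p 1 α) (hβ : PDvd p 1 β) :
    padicNorm p (1 + (α + β) * 2⁻¹) = 1 :=
  norm_eq_one_of_pDvd_sub padicNorm.one
    (((hα.add hβ).mul_const inv_two_mem_pInt).congr (by ring))

lemma HasLog.unique (h : HasLog p a α) (h' : HasLog p a β) : PModEq p 3 α β :=
  .of_unit_mul (norm_one_add_half_sum h.1 h'.1)
    ((h.2.symm.trans h'.2).congr (by ring))

lemma HasLog.mul (ha : HasLog p a α) (hb : HasLog p b β) : HasLog p (a * b) (α + β) := by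
  refine ⟨ha.1.add hb.1, (ha.2.mul hb.2 (HasLog.truncExp ha.1).mem hb.mem).trans ?_⟩
  have hαβ := ha.1.mul hb.1
  have h3 := (hαβ.mul (ha.1.add hb.1)).mul_const inv_two_mem_pInt
  have h4 := (hαβ.mul hαβ).mul_const (mul_mem inv_two_mem_pInt inv_two_mem_pInt)
  exact .of_sub_eq (h3.add (h4.mono (by norm_num))) (by ring)

lemma HasLog.inv (ha : HasLog p a α) : HasLog p a⁻¹ (-α) := by
  refine ⟨ha.1.neg, .of_unit_mul ha.norm_eq_one ?_⟩
  have hneg := HasLog.truncExp ha.1.neg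
  have h := (ha.mul hneg).2
  have ha0 := ha.ne_zero
  exact h.neg.congr (by field_simp; ring)

lemma HasLog.div (ha : HasLog p a α) (hb : HasLog p b β) : HasLog p (a / b) (α - β) := by
  rw [div_eq_mul_inv, sub_eq_add_neg]
  exact ha.mul hb.inv

lemma HasLog.pow (ha : HasLog p a α) (n : ℕ) : HasLog p (a ^ n) (n * α) := by
  induction n with
  | zero => exact HasLog.one.congr (pow_zero a).symm (by simp)
  | succ n ih => exact (ih.mul ha).congr (pow_succ a n).symm (by push_cast; ring)

lemma HasLog.prod {ι : Type*} {s : Finset ι} {f g : ι → ℚ} (h : ∀ i ∈ s, HasLog p (f i) (g i)) :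
    HasLog p (∏ i ∈ s, f i) (∑ i ∈ s, g i) := by
  classical
  induction s using Finset.induction_on with
  | empty => simpa using HasLog.one
  | insert i s hi ih =>
    rw [sum_insert hi, prod_insert hi]
    exact (h i (mem_insert_self _ _)).mul (ih fun j hj => h j (mem_insert_of_mem hj))

lemma HasLog.one_sub (hx : PDvd p 1 x) : HasLog p (1 - x) (-x - x ^ 2 / 2) := by
  have hx2 := (hx.mul hx).mul_const inv_two_mem_pInt
  have hx3 := (hx.mul hx).mul hx
  refine ⟨(hx.neg.sub (hx2.mono (by norm_num))).congr (by ring), ?_⟩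
  have hc : 2⁻¹ + x * 2⁻¹ ^ 3 ∈ pInt p :=
    add_mem inv_two_mem_pInt (mul_mem hx.mem (pow_mem inv_two_mem_pInt 3))
  exact .of_sub_eq (hx3.mul_const hc).neg (by ring)

lemma HasLog.sqrt (h : HasLog p (a ^ 2) α) (ha : PDvd p 1 (a - 1)) : HasLog p a (α / 2) := by
  have hα : PDvd p 1 (α / 2) := h.1.mul_const inv_two_mem_pInt
  have hb := HasLog.truncExp hα
  set b := 1 + α / 2 + (α / 2) ^ 2 / 2
  have hsq : PModEq p 3 (a ^ 2) (b ^ 2) :=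
    h.pModEq ((hb.pow 2).congr rfl (by push_cast; ring))
  refine ⟨hα, .of_unit_mul (norm_one_add_half_sum ha hb.pDvd_sub_one) ?_⟩
  exact (PDvd.mul_const hsq inv_two_mem_pInt).congr (by ring)

end TruncatedExponential

section Jets

variable {p : ℕ} [hp : Fact p.Prime] {t x y a b c₀ c₁ c₂ d₀ d₁ d₂ : ℚ}

/-- `x` is congruent modulo `p ^ 3` to `c₀ + c₁ t + c₂ t²`, with `p`-integral coefficients. It is
used for `p ∣ t`, where the terms of higher degree in `t` vanish. -/
structure HasJet (p : ℕ) [Fact p.Prime] (t x c₀ c₁ c₂ : ℚ) : Prop where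
  mem₀ : c₀ ∈ pInt p
  mem₁ : c₁ ∈ pInt p
  mem₂ : c₂ ∈ pInt p
  pModEq : PModEq p 3 x (c₀ + c₁ * t + c₂ * t ^ 2)

lemma HasJet.congr (h : HasJet p t x c₀ c₁ c₂) (h₀ : c₀ = d₀) (h₁ : c₁ = d₁) (h₂ : c₂ = d₂) :
    HasJet p t x d₀ d₁ d₂ := h₀ ▸ h₁ ▸ h₂ ▸ h

lemma HasJet.const (hc : c₀ ∈ pInt p) : HasJet p t c₀ c₀ 0 0 :=
  ⟨hc, zero_mem _, zero_mem _, .of_sub_eq .zero (by ring)⟩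

lemma HasJet.self : HasJet p t t 0 1 0 :=
  ⟨zero_mem _, one_mem _, zero_mem _, .of_sub_eq .zero (by ring)⟩

lemma HasJet.add (hx : HasJet p t x c₀ c₁ c₂) (hy : HasJet p t y d₀ d₁ d₂) :
    HasJet p t (x + y) (c₀ + d₀) (c₁ + d₁) (c₂ + d₂) :=
  ⟨add_mem hx.mem₀ hy.mem₀, add_mem hx.mem₁ hy.mem₁, add_mem hx.mem₂ hy.mem₂,
    .of_sub_eq (PDvd.add hx.pModEq hy.pModEq) (by ring)⟩

lemma HasJet.eval_mem (ht : PDvd p 1 t) (hx : HasJet p t x c₀ c₁ c₂) :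
    c₀ + c₁ * t + c₂ * t ^ 2 ∈ pInt p :=
  add_mem (add_mem hx.mem₀ (mul_mem hx.mem₁ ht.mem)) (mul_mem hx.mem₂ (pow_mem ht.mem 2))

lemma HasJet.mul (ht : PDvd p 1 t) (hx : HasJet p t x c₀ c₁ c₂) (hy : HasJet p t y d₀ d₁ d₂) :
    HasJet p t (x * y) (c₀ * d₀) (c₀ * d₁ + c₁ * d₀) (c₀ * d₂ + c₁ * d₁ + c₂ * d₀) := by
  obtain ⟨hc₀, hc₁, hc₂, hc⟩ := id hx
  obtain ⟨hd₀, hd₁, hd₂, hd⟩ := id hy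
  have ht' := ht.mem
  have hrem : c₁ * d₂ + c₂ * d₁ + c₂ * d₂ * t ∈ pInt p := by aesop
  exact ⟨by aesop, by aesop, by aesop,
    (hc.mul hd (hx.eval_mem ht) (hd.mem (hy.eval_mem ht))).trans
      (.of_sub_eq (((ht.mul ht).mul ht).mul_const hrem) (by ring))⟩

lemma HasJet.inv (ht : PDvd p 1 t) (hc : padicNorm p c₀ = 1) (hx : HasJet p t x c₀ c₁ c₂) :
    HasJet p t x⁻¹ c₀⁻¹ (-c₁ * c₀⁻¹ ^ 2) ((c₁ ^ 2 - c₀ * c₂) * c₀⁻¹ ^ 3) := by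
  obtain ⟨hc₀, hc₁, hc₂, h⟩ := id hx
  have hi := inv_mem_pInt_of_norm_eq_one hc
  have hx1 : padicNorm p x = 1 := norm_eq_one_of_pDvd_sub hc <|
    (PDvd.add (h.mono (by norm_num : 1 ≤ 3))
      (ht.mul_const (add_mem hc₁ (mul_mem hc₂ ht.mem)))).congr (by ring)
  have h0 := ne_zero_of_norm_eq_one hc
  have hx0 := ne_zero_of_norm_eq_one hx1
  have hy : HasJet p t (c₀⁻¹ + -c₁ * c₀⁻¹ ^ 2 * t + (c₁ ^ 2 - c₀ * c₂) * c₀⁻¹ ^ 3 * t ^ 2)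
      c₀⁻¹ (-c₁ * c₀⁻¹ ^ 2) ((c₁ ^ 2 - c₀ * c₂) * c₀⁻¹ ^ 3) :=
    ⟨hi, mul_mem (neg_mem hc₁) (pow_mem hi 2),
      mul_mem (sub_mem (pow_mem hc₁ 2) (mul_mem hc₀ hc₂)) (pow_mem hi 3), .refl _⟩
  refine ⟨hi, hy.mem₁, hy.mem₂, .of_unit_mul hx1 ((hx.mul ht hy).pModEq.neg.congr ?_)⟩
  field_simp
  ring

lemma HasJet.pModEq_of_eq (hx : HasJet p t x c₀ c₁ c₂) (hy : HasJet p t y d₀ d₁ d₂)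
    (h₀ : c₀ = d₀) (h₁ : c₁ = d₁) (h₂ : c₂ = d₂) : PModEq p 3 x y :=
  (hx.congr h₀ h₁ h₂).pModEq.trans hy.pModEq.symm

lemma HasJet.pModEq_two_of_eq (ht : PDvd p 1 t)
    (hx : HasJet p t x c₀ c₁ c₂) (hy : HasJet p t y d₀ d₁ d₂) (h₀ : c₀ = d₀) (h₁ : c₁ = d₁) :
    PModEq p 2 x y := by
  have hquad := (ht.mul ht).mul_const (sub_mem hx.mem₂ hy.mem₂)
  refine .of_sub_eq (PDvd.add ((hx.pModEq.sub hy.pModEq).mono (by norm_num)) hquad) ?_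
  rw [h₀, h₁]
  ring

lemma HasLog.hasJet [Fact (3 < p)] {u v : ℚ} (h : HasLog p x (p * u + p ^ 2 * v))
    (hu : u ∈ pInt p) (hv : v ∈ pInt p) : HasJet p p x 1 u (v + u ^ 2 * 2⁻¹) := by
  have hhalf := inv_two_mem_pInt (p := p)
  have hrem : u * v + 2⁻¹ * v ^ 2 * p ∈ pInt p := by aesop
  have hp3 := (PDvd.prime.mul (PDvd.prime (p := p))).mul PDvd.prime
  exact ⟨one_mem _, hu, by aesop, h.2.trans (.of_sub_eq (hp3.mul_const hrem) (by ring))⟩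

/-- `f δ` is a quadratic polynomial in `p δ` modulo `p ^ 3`. -/
def IsQuadratic (p : ℕ) [Fact p.Prime] (f : ℚ → ℚ) : Prop :=
  ∃ c₀ c₁ c₂, ∀ δ ∈ pInt p, HasJet p (p * δ) (f δ) c₀ c₁ c₂

lemma pDvd_prime_mul {δ : ℚ} (hδ : δ ∈ pInt p) : PDvd p 1 (p * δ) := PDvd.prime.mul_const hδ

lemma IsQuadratic.const (ha : a ∈ pInt p) : IsQuadratic p fun _ => a :=
  ⟨a, 0, 0, fun _ _ => .const ha⟩

lemma IsQuadratic.add {f g : ℚ → ℚ} (hf : IsQuadratic p f) (hg : IsQuadratic p g) :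
    IsQuadratic p fun δ => f δ + g δ := by
  obtain ⟨_, _, _, hf⟩ := hf
  obtain ⟨_, _, _, hg⟩ := hg
  exact ⟨_, _, _, fun δ hδ => (hf δ hδ).add (hg δ hδ)⟩

lemma IsQuadratic.mul {f g : ℚ → ℚ} (hf : IsQuadratic p f) (hg : IsQuadratic p g) :
    IsQuadratic p fun δ => f δ * g δ := by
  obtain ⟨_, _, _, hf⟩ := hf
  obtain ⟨_, _, _, hg⟩ := hg
  exact ⟨_, _, _, fun δ hδ => (hf δ hδ).mul (pDvd_prime_mul hδ) (hg δ hδ)⟩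

lemma IsQuadratic.linear (ha : a ∈ pInt p) (hb : b ∈ pInt p) :
    IsQuadratic p fun δ => a + b * (p * δ) :=
  ⟨a, b, 0, fun _ _ => ⟨ha, hb, zero_mem _, .of_sub_eq .zero (by ring)⟩⟩

lemma IsQuadratic.linear_inv (ha : padicNorm p a = 1) (hb : b ∈ pInt p) :
    IsQuadratic p fun δ => (a + b * (p * δ))⁻¹ :=
  ⟨_, _, _, fun _ hδ => HasJet.inv (c₀ := a) (c₁ := b) (c₂ := 0) (pDvd_prime_mul hδ) ha
    ⟨mem_pInt_of_norm_eq_one ha, hb, zero_mem _, .of_sub_eq .zero (by ring)⟩⟩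

lemma IsQuadratic.prod {ι : Type*} {s : Finset ι} {f : ι → ℚ → ℚ}
    (h : ∀ i ∈ s, IsQuadratic p (f i)) : IsQuadratic p fun δ => ∏ i ∈ s, f i δ := by
  classical
  induction s using Finset.induction_on with
  | empty => simpa using IsQuadratic.const (one_mem (pInt p))
  | insert i s hi ih =>
    simp only [prod_insert hi]
    exact (h i (mem_insert_self _ _)).mul (ih fun j hj => h j (mem_insert_of_mem hj))

lemma IsQuadratic.sum {ι : Type*} {s : Finset ι} {f : ι → ℚ → ℚ}
    (h : ∀ i ∈ s, IsQuadratic p (f i)) : IsQuadratic p fun δ => ∑ i ∈ s, f i δ := by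
  classical
  induction s using Finset.induction_on with
  | empty => simpa using IsQuadratic.const (zero_mem (pInt p))
  | insert i s hi ih =>
    simp only [sum_insert hi]
    exact (h i (mem_insert_self _ _)).add (ih fun j hj => h j (mem_insert_of_mem hj))

variable [Fact (3 < p)] {f : ℚ → ℚ}

lemma IsQuadratic.pModEq_two (hf : IsQuadratic p f) :
    PModEq p 2 (f 0) ((f (-1 / 4) + f (1 / 4)) / 2) := by
  obtain ⟨c₀, c₁, c₂, h⟩ := hf
  have h0 := h 0 (zero_mem _)
  have hA := (h (1 / 4) (mem_pInt_of_six_pow_mul_eq 2 9 (by norm_num))).pModEq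
  have hB := (h (-1 / 4) (mem_pInt_of_six_pow_mul_eq 2 (-9) (by norm_num))).pModEq
  have h16 : (1 / 16 : ℚ) ∈ pInt p := mem_pInt_of_six_pow_mul_eq 4 81 (by norm_num)
  have hpp : PDvd p 2 (p * p * (c₂ * (1 / 16))) :=
    (PDvd.prime.mul PDvd.prime).mul_const (mul_mem h0.mem₂ h16)
  have hcomb := h0.pModEq.sub ((hA.add hB).const_mul inv_two_mem_pInt)
  exact (PDvd.sub (hcomb.mono (by norm_num)) hpp).congr (by ring)

lemma IsQuadratic.pModEq_three (hf : IsQuadratic p f) :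
    PModEq p 3 (f 0) (f (-1 / 4) / 8 - f (1 / 4) / 4 + 9 / 8 * f (1 / 12)) := by
  obtain ⟨c₀, c₁, c₂, h⟩ := hf
  have h0 := (h 0 (zero_mem _)).pModEq
  have hA := (h (1 / 4) (mem_pInt_of_six_pow_mul_eq 2 9 (by norm_num))).pModEq
  have hB := (h (-1 / 4) (mem_pInt_of_six_pow_mul_eq 2 (-9) (by norm_num))).pModEq
  have hC := (h (1 / 12) (mem_pInt_of_six_pow_mul_eq 2 3 (by norm_num))).pModEq
  have h8 : (1 / 8 : ℚ) ∈ pInt p := mem_pInt_of_six_pow_mul_eq 3 27 (by norm_num)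
  have h4 : (1 / 4 : ℚ) ∈ pInt p := mem_pInt_of_six_pow_mul_eq 2 9 (by norm_num)
  have h98 : (9 / 8 : ℚ) ∈ pInt p := mem_pInt_of_six_pow_mul_eq 3 243 (by norm_num)
  exact (h0.sub (((hB.const_mul h8).sub (hA.const_mul h4)).add (hC.const_mul h98))).congr (by ring)

end Jets

/-! ### A deformed hypergeometric sum -/

section Deformation

variable {e : ℚ} {N : ℕ}

/-- The `k`-th term of the hypergeometric series
`₃F₂(1/2 + 2e, 1/2 - 6e, 1/2 - 2e; 1 - 4e, 1 - 2e; 1/4)`, a deformation in the parameter `e` of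
`C(2k,k)^3 / 256^k`. -/
def hyperTerm (e : ℚ) (k : ℕ) : ℚ :=
  ∏ i ∈ range k, ((1 / 2 + 2 * e + i) * (1 / 2 - 6 * e + i) * (1 / 2 - 2 * e + i)) /
    ((1 - 4 * e + i) * (1 - 2 * e + i) * (i + 1) * 4)

/-- The term of the series contiguous to the one of `hyperTerm` that divides both `hyperTerm e`
and `hyperTerm (e + 1 / 2)`, up to polynomial factors. -/
def contigTerm (e : ℚ) (k : ℕ) : ℚ :=
  ∏ i ∈ range k, ((1 / 2 + 2 * e + i) * (1 / 2 - 6 * e - 3 + i) * (1 / 2 - 2 * e - 1 + i)) /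
    ((1 - 4 * e + i) * (1 - 2 * e + i) * (i + 1) * 4)

/-- The partial sum of the deformed series with weight `w`. -/
def weightedSum (w : ℚ → ℚ) (e : ℚ) (N : ℕ) : ℚ := ∑ j ∈ range N, w j * hyperTerm e j

/-- The unweighted partial sum of the deformed series. -/
def sumF (e : ℚ) (N : ℕ) : ℚ := weightedSum (fun _ => 1) e N

/-- The partial sum of the deformed series with a linear weight; with `sumF` and `sumW` it is one
of three weights for which the shift `e ↦ e + 1 / 2` multiplies the sum by a rational factor. -/
def sumK (e : ℚ) (N : ℕ) : ℚ := weightedSum (fun j => j + 1 / 6 - 2 * e) e N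

/-- The partial sum of the deformed series with a quadratic weight, see `sumK`. -/
def sumW (e : ℚ) (N : ℕ) : ℚ :=
  weightedSum (fun j => j ^ 2 - (2 * e - 1 / 6) ^ 2 - 4 * e * (j + 1 / 6 - 2 * e)) e N

/-- The parameter `e` is no pole of the terms of index at most `N`, before and after the shift
`e ↦ e + 1 / 2`, nor of the factors picked up under this shift. -/
structure IsRegular (e : ℚ) (N : ℕ) : Prop where
  ne_zero : e ≠ 0
  four_ne : 4 * e + 1 ≠ 0
  twelve_one_ne : 12 * e + 1 ≠ 0
  twelve_five_ne : 12 * e + 5 ≠ 0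
  one_sub_four_ne : ∀ j : ℕ, j < N → 1 - 4 * e + j ≠ 0
  neg_one_sub_four_ne : ∀ j : ℕ, j < N → -1 - 4 * e + j ≠ 0
  one_sub_two_ne : ∀ j : ℕ, j < N → 1 - 2 * e + j ≠ 0
  neg_two_ne : ∀ j : ℕ, j < N → -2 * e + j ≠ 0

lemma hyperTerm_zero (e : ℚ) : hyperTerm e 0 = 1 := rfl

lemma contigTerm_zero (e : ℚ) : contigTerm e 0 = 1 := rfl

lemma hyperTerm_succ (e : ℚ) (k : ℕ) : hyperTerm e (k + 1) = hyperTerm e k *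
    (((1 / 2 + 2 * e + k) * (1 / 2 - 6 * e + k) * (1 / 2 - 2 * e + k)) /
      ((1 - 4 * e + k) * (1 - 2 * e + k) * (k + 1) * 4)) := prod_range_succ _ _

lemma contigTerm_succ (e : ℚ) (k : ℕ) : contigTerm e (k + 1) = contigTerm e k *
    (((1 / 2 + 2 * e + k) * (1 / 2 - 6 * e - 3 + k) * (1 / 2 - 2 * e - 1 + k)) /
      ((1 - 4 * e + k) * (1 - 2 * e + k) * (k + 1) * 4)) := prod_range_succ _ _

lemma hyperTerm_eq_contigTerm_mul (e : ℚ) (j : ℕ) :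
    hyperTerm e j * (3 * (12 * e + 5) * (12 * e + 1) * (4 * e + 1) ^ 2 / 16) =
      contigTerm e j * ((1 / 2 - 6 * e - 3 + j) * (1 / 2 - 6 * e - 2 + j) * (1 / 2 - 6 * e - 1 + j)
        * (1 / 2 - 2 * e - 1 + j)) := by
  induction j with
  | zero => simp only [hyperTerm_zero, contigTerm_zero]; push_cast; ring
  | succ j ih =>
    rw [hyperTerm_succ, contigTerm_succ]
    push_cast
    linear_combination (((1 / 2 + 2 * e + j) * (1 / 2 - 6 * e + j) * (1 / 2 - 2 * e + j)) /
      ((1 - 4 * e + j) * (1 - 2 * e + j) * ((j : ℚ) + 1) * 4)) * ih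

lemma hyperTerm_add_half_eq_contigTerm_mul (h : IsRegular e N) {j : ℕ} (hj : j ≤ N) :
    hyperTerm (e + 1 / 2) j * (-4 * e ^ 2 * (4 * e + 1) ^ 2) =
      contigTerm e j * ((1 / 2 + 2 * e + j) * (-1 - 4 * e + j) * (-4 * e + j) * (-2 * e + j)) := by
  induction j with
  | zero => simp only [hyperTerm_zero, contigTerm_zero]; push_cast; ring
  | succ j ih =>
    have h1 := h.one_sub_four_ne j hj
    have h2 := h.neg_one_sub_four_ne j hj
    have h3 := h.one_sub_two_ne j hj
    have h4 := h.neg_two_ne j hj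
    have hratio : ((1 / 2 + 2 * (e + 1 / 2) + j) * (1 / 2 - 6 * (e + 1 / 2) + j) *
          (1 / 2 - 2 * (e + 1 / 2) + j)) /
          ((1 - 4 * (e + 1 / 2) + j) * (1 - 2 * (e + 1 / 2) + j) * ((j : ℚ) + 1) * 4) =
        ((3 / 2 + 2 * e + j) * (1 / 2 - 6 * e - 3 + j) * (1 / 2 - 2 * e - 1 + j)) /
          ((-1 - 4 * e + j) * (-2 * e + j) * (j + 1) * 4) := by
      congr 1 <;> ring
    rw [hyperTerm_succ, contigTerm_succ, hratio, mul_right_comm, ih (by omega)]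
    push_cast
    have h5 : (j : ℚ) + 1 ≠ 0 := by positivity
    generalize ha : 1 - 4 * e + (j : ℚ) = a at *
    generalize hb : -1 - 4 * e + (j : ℚ) = b at *
    generalize hc : 1 - 2 * e + (j : ℚ) = c at *
    generalize hd : -2 * e + (j : ℚ) = d at *
    field_simp
    subst ha hb hc hd
    ring

lemma contigTerm_succ_mul {j : ℕ} (h : IsRegular e N) (hj : j < N) :
    contigTerm e (j + 1) * ((j + 1) * (1 - 4 * e + j) * (1 - 2 * e + j)) =
      contigTerm e j *
        ((1 / 2 + 2 * e + j) * (1 / 2 - 6 * e - 3 + j) * (1 / 2 - 2 * e - 1 + j) / 4) := by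
  rw [contigTerm_succ]
  have h1 := h.one_sub_four_ne j hj
  have h2 := h.one_sub_two_ne j hj
  have h3 : (j : ℚ) + 1 ≠ 0 := by positivity
  generalize 1 - 4 * e + (j : ℚ) = a at *
  generalize 1 - 2 * e + (j : ℚ) = b at *
  field_simp

/-- `Q` is a rational certificate in the sense of Zeilberger for the relation
`weightedSum w' (e + 1 / 2) = ρ * weightedSum w e`. -/
def IsCertificate (e : ℚ) (w w' Q : ℚ → ℚ) (ρ : ℚ) : Prop :=
  ∀ j : ℚ, w' j * ((1 / 2 + 2 * e + j) * (-1 - 4 * e + j) * (-4 * e + j) * (-2 * e + j)) /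
        (-4 * e ^ 2 * (4 * e + 1) ^ 2) -
      ρ * (w j * ((1 / 2 - 6 * e - 3 + j) * (1 / 2 - 6 * e - 2 + j) * (1 / 2 - 6 * e - 1 + j) *
        (1 / 2 - 2 * e - 1 + j)) / (3 * (12 * e + 5) * (12 * e + 1) * (4 * e + 1) ^ 2 / 16)) =
    Q (j + 1) * ((1 / 2 + 2 * e + j) * (1 / 2 - 6 * e - 3 + j) * (1 / 2 - 2 * e - 1 + j) / 4) -
      Q j * (j * (-4 * e + j) * (-2 * e + j))

lemma IsCertificate.weightedSum_add_half_sub {w w' Q : ℚ → ℚ} {ρ : ℚ}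
    (hQ : IsCertificate e w w' Q ρ) (h : IsRegular e N) {M : ℕ} (hM : M ≤ N) :
    weightedSum w' (e + 1 / 2) M - ρ * weightedSum w e M =
      Q M * (M * (-4 * e + M) * (-2 * e + M)) * contigTerm e M := by
  induction M with
  | zero => simp [weightedSum]
  | succ M ih =>
    have hT : 3 * (12 * e + 5) * (12 * e + 1) * (4 * e + 1) ^ 2 / 16 ≠ 0 := by
      simp [h.four_ne, h.twelve_one_ne, h.twelve_five_ne]
    have hT' : -4 * e ^ 2 * (4 * e + 1) ^ 2 ≠ 0 := by simp [h.ne_zero, h.four_ne]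
    have hterm := (eq_div_iff hT).2 (hyperTerm_eq_contigTerm_mul e M)
    have hterm' := (eq_div_iff hT').2
      (hyperTerm_add_half_eq_contigTerm_mul h (M.le_succ.trans hM))
    have hnext := contigTerm_succ_mul h hM
    have ih := ih (by omega)
    simp only [weightedSum] at ih ⊢
    rw [sum_range_succ, sum_range_succ, hterm, hterm']
    push_cast
    linear_combination ih + contigTerm e M * hQ M - Q (M + 1) * hnext

lemma IsCertificate.weightedSum_add_half {w w' Q : ℚ → ℚ} {ρ : ℚ}
    (hQ : IsCertificate e w w' Q ρ) (h : IsRegular e N) (hu : contigTerm e N = 0) :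
    weightedSum w' (e + 1 / 2) N = ρ * weightedSum w e N := by
  have := hQ.weightedSum_add_half_sub h le_rfl
  rwa [hu, mul_zero, sub_eq_zero] at this

lemma sumF_add_half (h : IsRegular e N) (hu : contigTerm e N = 0) :
    sumF (e + 1 / 2) N = 3 * ((12 * e + 1) / (16 * e)) ^ 2 * sumF e N := by
  refine IsCertificate.weightedSum_add_half (Q := fun j =>
    (306 + 3240 * e + 11232 * e ^ 2 + 12672 * e ^ 3 + (-252 - 1728 * e - 2880 * e ^ 2) * j) /
      (-144 * e ^ 2 * (4 * e + 1) ^ 3 * (12 * e + 5))) (fun j => ?_) h hu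
  obtain ⟨h0, h1, h2, h5, -⟩ := h
  generalize ha : 4 * e + 1 = a at *
  generalize hb : 12 * e + 1 = b at *
  generalize hc : 12 * e + 5 = c at *
  field_simp
  subst ha hb hc
  ring

lemma sumK_add_half (h : IsRegular e N) (hu : contigTerm e N = 0) :
    sumK (e + 1 / 2) N = 3 * (12 * e + 1) * (12 * e + 5) / (16 * e) ^ 2 * sumK e N := by
  refine IsCertificate.weightedSum_add_half (Q := fun j =>
    (-63 - 636 * e - 2064 * e ^ 2 - 2112 * e ^ 3 + (132 + 912 * e + 1536 * e ^ 2) * j +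
      (-60 - 240 * e) * j ^ 2) / (-144 * e ^ 2 * (4 * e + 1) ^ 3)) (fun j => ?_) h hu
  obtain ⟨h0, h1, h2, h5, -⟩ := h
  generalize ha : 4 * e + 1 = a at *
  generalize hb : 12 * e + 1 = b at *
  generalize hc : 12 * e + 5 = c at *
  field_simp
  subst ha hb hc
  ring

lemma sumW_add_half (h : IsRegular e N) (hu : contigTerm e N = 0) :
    sumW (e + 1 / 2) N = 3 * ((12 * e + 5) / (16 * e)) ^ 2 * sumW e N := by
  refine IsCertificate.weightedSum_add_half (Q := fun j =>
    (287 / 2 + 2598 * e + 17808 * e ^ 2 + 57664 * e ^ 3 + 87936 * e ^ 4 + 50688 * e ^ 5 +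
      (-445 - 6600 * e - 35072 * e ^ 2 - 78720 * e ^ 3 - 62208 * e ^ 4) * j +
      (402 + 5016 * e + 19680 * e ^ 2 + 24192 * e ^ 3) * j ^ 2 +
      (-108 - 1152 * e - 2880 * e ^ 2) * j ^ 3) /
      (-144 * e ^ 2 * (4 * e + 1) ^ 3 * (12 * e + 1))) (fun j => ?_) h hu
  obtain ⟨h0, h1, h2, h5, -⟩ := h
  generalize ha : 4 * e + 1 = a at *
  generalize hb : 12 * e + 1 = b at *
  generalize hc : 12 * e + 5 = c at *
  field_simp
  subst ha hb hc
  ring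

end Deformation

section Nodes

variable {e : ℚ} {w : ℚ → ℚ}

/-- The value `p / 4` of the deformation parameter, for `p = 2 * n + 1`. -/
def nodeA (n : ℕ) : ℚ := (2 * n + 1) / 4

/-- The value `-p / 4` of the deformation parameter, for `p = 2 * n + 1`. -/
def nodeB (n : ℕ) : ℚ := -(2 * n + 1) / 4

/-- The value `p / 12` of the deformation parameter, for `p = 2 * n + 1`. -/
def nodeC (n : ℕ) : ℚ := (2 * n + 1) / 12

lemma nodeA_succ (n : ℕ) : nodeA (n + 1) = nodeA n + 1 / 2 := by
  simp only [nodeA]; push_cast; ring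

lemma nodeB_eq_succ_add (n : ℕ) : nodeB n = nodeB (n + 1) + 1 / 2 := by
  simp only [nodeB]; push_cast; ring

lemma nodeC_add_three (n : ℕ) : nodeC (n + 3) = nodeC n + 1 / 2 := by
  simp only [nodeC]; push_cast; ring

lemma hyperTerm_eq_zero {i k : ℕ} (hik : i < k)
    (h : (1 / 2 + 2 * e + i) * (1 / 2 - 6 * e + i) * (1 / 2 - 2 * e + i) = 0) :
    hyperTerm e k = 0 :=
  prod_eq_zero (mem_range.2 hik) (by rw [h, zero_div])

lemma contigTerm_eq_zero {i k : ℕ} (hik : i < k)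
    (h : (1 / 2 + 2 * e + i) * (1 / 2 - 6 * e - 3 + i) * (1 / 2 - 2 * e - 1 + i) = 0) :
    contigTerm e k = 0 :=
  prod_eq_zero (mem_range.2 hik) (by rw [h, zero_div])

lemma weightedSum_eq_of_hyperTerm_eq_zero {M N : ℕ} (hMN : M ≤ N)
    (h : ∀ k, M ≤ k → hyperTerm e k = 0) : weightedSum w e N = weightedSum w e M :=
  (sum_subset (range_mono hMN) fun k _ hk => by
    rw [h k (not_lt.1 (mt mem_range.2 hk)), mul_zero]).symm

lemma weightedSum_nodeA {n N : ℕ} (hN : n < N) :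
    weightedSum w (nodeA n) N = weightedSum w (nodeA n) (n + 1) :=
  weightedSum_eq_of_hyperTerm_eq_zero hN fun k hk =>
    hyperTerm_eq_zero (i := n) hk (by simp only [nodeA]; ring)

lemma weightedSum_nodeB {n N : ℕ} (hN : n < N) :
    weightedSum w (nodeB n) N = weightedSum w (nodeB n) (n + 1) :=
  weightedSum_eq_of_hyperTerm_eq_zero hN fun k hk =>
    hyperTerm_eq_zero (i := n) hk (by simp only [nodeB]; ring)

lemma weightedSum_nodeC {n N : ℕ} (hN : n < N) :
    weightedSum w (nodeC n) N = weightedSum w (nodeC n) (n + 1) :=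
  weightedSum_eq_of_hyperTerm_eq_zero hN fun k hk =>
    hyperTerm_eq_zero (i := n) hk (by simp only [nodeC]; ring)

lemma isRegular_nodeA {n : ℕ} (hn : 2 ≤ n) : IsRegular (nodeA n) (n + 2) where
  ne_zero := by unfold nodeA; positivity
  four_ne := by unfold nodeA; positivity
  twelve_one_ne := by unfold nodeA; positivity
  twelve_five_ne := by unfold nodeA; positivity
  one_sub_four_ne j hj h := by
    have : (j : ℚ) = (2 * n : ℕ) := by push_cast; unfold nodeA at h; linarith
    exact absurd (Nat.cast_injective this) (by omega)
  neg_one_sub_four_ne j hj h := by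
    have : (j : ℚ) = (2 * n + 2 : ℕ) := by push_cast; unfold nodeA at h; linarith
    exact absurd (Nat.cast_injective this) (by omega)
  one_sub_two_ne j hj h := by
    have : ((2 * j + 1 : ℕ) : ℚ) = (2 * n : ℕ) := by push_cast; unfold nodeA at h; linarith
    exact absurd (Nat.cast_injective this) (by omega)
  neg_two_ne j hj h := by
    have : ((2 * j : ℕ) : ℚ) = (2 * n + 1 : ℕ) := by push_cast; unfold nodeA at h; linarith
    exact absurd (Nat.cast_injective this) (by omega)

lemma isRegular_nodeB_succ (n N : ℕ) : IsRegular (nodeB (n + 1)) N := by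
  have hn : (0 : ℚ) ≤ n := n.cast_nonneg
  have hj (j : ℕ) : (0 : ℚ) ≤ j := j.cast_nonneg
  unfold nodeB
  push_cast
  refine ⟨?_, ?_, ?_, ?_, fun j _ => ?_, fun j _ => ?_, fun j _ => ?_, fun j _ => ?_⟩
  iterate 4 exact ne_of_lt (by linarith)
  all_goals exact ne_of_gt (by linarith [hj j])

lemma isRegular_nodeC {n : ℕ} (hn : n % 3 ≠ 1) (N : ℕ) : IsRegular (nodeC n) N where
  ne_zero := by unfold nodeC; positivity
  four_ne := by unfold nodeC; positivity
  twelve_one_ne := by unfold nodeC; positivity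
  twelve_five_ne := by unfold nodeC; positivity
  one_sub_four_ne j _ h := by
    have : ((3 * j + 2 : ℕ) : ℚ) = (2 * n : ℕ) := by push_cast; unfold nodeC at h; linarith
    exact absurd (Nat.cast_injective this) (by omega)
  neg_one_sub_four_ne j _ h := by
    have : ((3 * j : ℕ) : ℚ) = (2 * n + 4 : ℕ) := by push_cast; unfold nodeC at h; linarith
    exact absurd (Nat.cast_injective this) (by omega)
  one_sub_two_ne j _ h := by
    have : ((6 * j + 5 : ℕ) : ℚ) = (2 * n : ℕ) := by push_cast; unfold nodeC at h; linarith
    exact absurd (Nat.cast_injective this) (by omega)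
  neg_two_ne j _ h := by
    have : ((6 * j : ℕ) : ℚ) = (2 * n + 1 : ℕ) := by push_cast; unfold nodeC at h; linarith
    exact absurd (Nat.cast_injective this) (by omega)

lemma sums_nodeA_succ (n : ℕ) :
    sumF (nodeA (n + 1)) (n + 2) =
        3 * ((3 * n + 2) / (4 * n + 2)) ^ 2 * sumF (nodeA n) (n + 1) ∧
      sumK (nodeA (n + 1)) (n + 2) =
        3 * (3 * n + 2) * (3 * n + 4) / (4 * n + 2) ^ 2 * sumK (nodeA n) (n + 1) ∧
      sumW (nodeA (n + 1)) (n + 2) =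
        3 * ((3 * n + 4) / (4 * n + 2)) ^ 2 * sumW (nodeA n) (n + 1) := by
  rcases Nat.lt_or_ge n 2 with hn | hn
  · interval_cases n <;>
      norm_num [sumF, sumK, sumW, weightedSum, hyperTerm, nodeA, sum_range_succ, prod_range_succ]
  have hreg := isRegular_nodeA hn
  have hu : contigTerm (nodeA n) (n + 2) = 0 :=
    contigTerm_eq_zero (lt_add_one (n + 1)) (by unfold nodeA; push_cast; ring)
  have hstable (w : ℚ → ℚ) := weightedSum_nodeA (w := w) (show n < n + 2 by omega)
  have hn1 : 12 * nodeA n + 1 = 2 * (3 * n + 2) := by unfold nodeA; ring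
  have hn5 : 12 * nodeA n + 5 = 2 * (3 * n + 4) := by unfold nodeA; ring
  have hn16 : 16 * nodeA n = 2 * (4 * n + 2) := by unfold nodeA; ring
  refine ⟨?_, ?_, ?_⟩
  · rw [nodeA_succ, sumF_add_half hreg hu, hn1, hn16, sumF, hstable, ← sumF]
    rw [mul_div_mul_left _ _ two_ne_zero]
  · rw [nodeA_succ, sumK_add_half hreg hu, hn1, hn5, hn16, sumK, hstable, ← sumK]
    rw [← mul_div_mul_left (3 * (3 * (n : ℚ) + 2) * (3 * n + 4)) _ (four_ne_zero (α := ℚ))]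
    congr 2 <;> ring
  · rw [nodeA_succ, sumW_add_half hreg hu, hn5, hn16, sumW, hstable, ← sumW]
    rw [mul_div_mul_left _ _ two_ne_zero]

lemma sums_nodeB_succ (n : ℕ) :
    sumF (nodeB (n + 1)) (n + 2) =
        4 / 3 * ((2 * n + 3) / (3 * n + 4)) ^ 2 * sumF (nodeB n) (n + 1) ∧
      sumK (nodeB (n + 1)) (n + 2) =
        4 / 3 * (2 * n + 3) ^ 2 / ((3 * n + 2) * (3 * n + 4)) * sumK (nodeB n) (n + 1) ∧
      sumW (nodeB (n + 1)) (n + 2) =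
        4 / 3 * ((2 * n + 3) / (3 * n + 2)) ^ 2 * sumW (nodeB n) (n + 1) := by
  have hreg := isRegular_nodeB_succ n (n + 2)
  have hu : contigTerm (nodeB (n + 1)) (n + 2) = 0 :=
    contigTerm_eq_zero (lt_add_one (n + 1)) (by unfold nodeB; push_cast; ring)
  have hstable (w : ℚ → ℚ) := weightedSum_nodeB (w := w) (show n < n + 2 by omega)
  have hn1 : 12 * nodeB (n + 1) + 1 = -2 * (3 * n + 4) := by unfold nodeB; push_cast; ring
  have hn5 : 12 * nodeB (n + 1) + 5 = -2 * (3 * n + 2) := by unfold nodeB; push_cast; ring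
  have hn16 : 16 * nodeB (n + 1) = -4 * (2 * n + 3) := by unfold nodeB; push_cast; ring
  have h2 : 3 * (n : ℚ) + 2 ≠ 0 := by positivity
  have h3 : 2 * (n : ℚ) + 3 ≠ 0 := by positivity
  have h4 : 3 * (n : ℚ) + 4 ≠ 0 := by positivity
  have hF := sumF_add_half hreg hu
  have hK := sumK_add_half hreg hu
  have hW := sumW_add_half hreg hu
  rw [← nodeB_eq_succ_add, sumF, hstable, ← sumF, hn1, hn16] at hF
  rw [← nodeB_eq_succ_add, sumK, hstable, ← sumK, hn1, hn5, hn16] at hK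
  rw [← nodeB_eq_succ_add, sumW, hstable, ← sumW, hn5, hn16] at hW
  rw [hF, hK, hW]
  refine ⟨?_, ?_, ?_⟩ <;> field_simp <;> norm_num

lemma sums_nodeC_add_three {n : ℕ} (hn : n % 3 ≠ 1) :
    sumF (nodeC (n + 3)) (n + 4) =
        3 * ((2 * n + 2) / (4 * (2 * n + 1) / 3)) ^ 2 * sumF (nodeC n) (n + 1) ∧
      sumK (nodeC (n + 3)) (n + 4) =
        3 * (2 * n + 2) * (2 * n + 6) / (4 * (2 * n + 1) / 3) ^ 2 * sumK (nodeC n) (n + 1) ∧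
      sumW (nodeC (n + 3)) (n + 4) =
        3 * ((2 * n + 6) / (4 * (2 * n + 1) / 3)) ^ 2 * sumW (nodeC n) (n + 1) := by
  have hreg := isRegular_nodeC hn (n + 4)
  have hu : contigTerm (nodeC n) (n + 4) = 0 :=
    contigTerm_eq_zero (lt_add_one (n + 3)) (by unfold nodeC; push_cast; ring)
  have hstable (w : ℚ → ℚ) := weightedSum_nodeC (w := w) (show n < n + 4 by omega)
  have hn1 : 12 * nodeC n + 1 = 2 * n + 2 := by unfold nodeC; ring
  have hn5 : 12 * nodeC n + 5 = 2 * n + 6 := by unfold nodeC; ring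
  have hn16 : 16 * nodeC n = 4 * (2 * n + 1) / 3 := by unfold nodeC; ring
  refine ⟨?_, ?_, ?_⟩
  · rw [nodeC_add_three, sumF_add_half hreg hu, hn1, hn16, sumF, hstable, ← sumF]
  · rw [nodeC_add_three, sumK_add_half hreg hu, hn1, hn5, hn16, sumK, hstable, ← sumK]
  · rw [nodeC_add_three, sumW_add_half hreg hu, hn5, hn16, sumW, hstable, ← sumW]

lemma eq_mul_prod_range {f s : ℕ → ℚ} (h : ∀ n, s (n + 1) = f n * s n) (n : ℕ) :
    s n = s 0 * ∏ j ∈ range n, f j := by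
  induction n with
  | zero => simp
  | succ n ih => rw [h, ih, prod_range_succ]; ring

lemma sumF_nodeA (n : ℕ) :
    sumF (nodeA n) (n + 1) = ∏ j ∈ range n, 3 * ((3 * (j : ℚ) + 2) / (4 * j + 2)) ^ 2 := by
  refine (eq_mul_prod_range (s := fun n => sumF (nodeA n) (n + 1))
    (fun n => (sums_nodeA_succ n).1) n).trans ?_
  norm_num [sumF, weightedSum, hyperTerm]

lemma sumK_nodeA (n : ℕ) : sumK (nodeA n) (n + 1) =
    -(1 / 3) * ∏ j ∈ range n, 3 * (3 * (j : ℚ) + 2) * (3 * j + 4) / (4 * j + 2) ^ 2 := by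
  refine (eq_mul_prod_range (s := fun n => sumK (nodeA n) (n + 1))
    (fun n => (sums_nodeA_succ n).2.1) n).trans ?_
  norm_num [sumK, weightedSum, hyperTerm, nodeA]

lemma sumW_nodeA (n : ℕ) : sumW (nodeA n) (n + 1) =
    2 / 9 * ∏ j ∈ range n, 3 * ((3 * (j : ℚ) + 4) / (4 * j + 2)) ^ 2 := by
  refine (eq_mul_prod_range (s := fun n => sumW (nodeA n) (n + 1))
    (fun n => (sums_nodeA_succ n).2.2) n).trans ?_
  norm_num [sumW, weightedSum, hyperTerm, nodeA]

lemma sumF_nodeB (n : ℕ) :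
    sumF (nodeB n) (n + 1) = ∏ j ∈ range n, 4 / 3 * ((2 * (j : ℚ) + 3) / (3 * j + 4)) ^ 2 := by
  refine (eq_mul_prod_range (s := fun n => sumF (nodeB n) (n + 1))
    (fun n => (sums_nodeB_succ n).1) n).trans ?_
  norm_num [sumF, weightedSum, hyperTerm]

lemma sumK_nodeB (n : ℕ) : sumK (nodeB n) (n + 1) =
    2 / 3 * ∏ j ∈ range n, 4 / 3 * (2 * (j : ℚ) + 3) ^ 2 / ((3 * j + 2) * (3 * j + 4)) := by
  refine (eq_mul_prod_range (s := fun n => sumK (nodeB n) (n + 1))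
    (fun n => (sums_nodeB_succ n).2.1) n).trans ?_
  norm_num [sumK, weightedSum, hyperTerm, nodeB]

lemma sumW_nodeB (n : ℕ) : sumW (nodeB n) (n + 1) =
    2 / 9 * ∏ j ∈ range n, 4 / 3 * ((2 * (j : ℚ) + 3) / (3 * j + 2)) ^ 2 := by
  refine (eq_mul_prod_range (s := fun n => sumW (nodeB n) (n + 1))
    (fun n => (sums_nodeB_succ n).2.2) n).trans ?_
  norm_num [sumW, weightedSum, hyperTerm, nodeB]

lemma sumF_mul_sumW_nodeA (n : ℕ) :
    sumF (nodeA n) (n + 1) * sumW (nodeA n) (n + 1) = 2 * sumK (nodeA n) (n + 1) ^ 2 := by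
  rw [sumF_nodeA, sumW_nodeA, sumK_nodeA, mul_left_comm, mul_pow, ← prod_pow, ← prod_mul_distrib,
    ← mul_assoc]
  norm_num
  exact prod_congr rfl fun j _ => by field_simp

lemma sumF_nodeC_three_mul (m : ℕ) : sumF (nodeC (3 * m)) (3 * m + 1) =
    ∏ j ∈ range m, 27 / 4 * ((3 * (j : ℚ) + 1) / (6 * j + 1)) ^ 2 := by
  have hstep (m : ℕ) : sumF (nodeC (3 * (m + 1))) (3 * (m + 1) + 1) =
      27 / 4 * ((3 * (m : ℚ) + 1) / (6 * m + 1)) ^ 2 * sumF (nodeC (3 * m)) (3 * m + 1) := by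
    rw [mul_add_one, (sums_nodeC_add_three (n := 3 * m) (by omega)).1]
    have : 6 * (m : ℚ) + 1 ≠ 0 := by positivity
    congr 1
    push_cast
    rw [show 4 * (2 * (3 * (m : ℚ)) + 1) / 3 = 4 / 3 * (6 * m + 1) by ring]
    field_simp
    ring
  refine (eq_mul_prod_range (s := fun m => sumF (nodeC (3 * m)) (3 * m + 1)) hstep m).trans ?_
  norm_num [sumF, weightedSum, hyperTerm]

lemma sumK_sumW_nodeC_three_mul (m : ℕ) :
    sumK (nodeC (3 * m)) (3 * m + 1) = 0 ∧ sumW (nodeC (3 * m)) (3 * m + 1) = 0 := by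
  induction m with
  | zero => norm_num [sumK, sumW, weightedSum, hyperTerm, nodeC]
  | succ m ih =>
    obtain ⟨-, hK, hW⟩ := sums_nodeC_add_three (n := 3 * m) (by omega)
    exact ⟨by rw [mul_add_one, hK, ih.1, mul_zero], by rw [mul_add_one, hW, ih.2, mul_zero]⟩

lemma sumF_sumK_nodeC_three_mul_add_two (m : ℕ) :
    sumF (nodeC (3 * m + 2)) (3 * m + 3) = 0 ∧ sumK (nodeC (3 * m + 2)) (3 * m + 3) = 0 := by
  induction m with
  | zero =>
    norm_num [sumF, sumK, weightedSum, hyperTerm, nodeC, sum_range_succ, prod_range_succ]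
  | succ m ih =>
    obtain ⟨hF, hK, -⟩ := sums_nodeC_add_three (n := 3 * m + 2) (by omega)
    exact ⟨hF.trans (by rw [ih.1, mul_zero]), hK.trans (by rw [ih.2, mul_zero])⟩

end Nodes

/-! ### Reduction of the sums to the special parameters -/

section Reduction

/-- The sum `∑ k^i C(2k,k)^3 / 256^k` over `k < p`. -/
def centralSum (i p : ℕ) : ℚ := ∑ k ∈ range p, (k : ℚ) ^ i * ((2 * k).choose k : ℚ) ^ 3 / 256 ^ k

lemma hyperTerm_zero_left (k : ℕ) : hyperTerm 0 k = ((2 * k).choose k : ℚ) ^ 3 / 256 ^ k := by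
  induction k with
  | zero => simp [hyperTerm_zero]
  | succ k ih =>
    have hsucc : ((2 * (k + 1)).choose (k + 1) : ℚ) =
        2 * (2 * k + 1) * ((2 * k).choose k : ℚ) / (k + 1) := by
      have h := Nat.succ_mul_centralBinom_succ k
      simp only [Nat.centralBinom] at h
      rw [eq_div_iff (by positivity), mul_comm]
      exact_mod_cast h
    rw [hyperTerm_succ, ih, hsucc, pow_succ]
    generalize ((2 * k).choose k : ℚ) = c
    have hden : 1 - 4 * (0 : ℚ) + k = k + 1 ∧ 1 - 2 * (0 : ℚ) + k = k + 1 := by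
      constructor <;> ring
    rw [hden.1, hden.2]
    field_simp
    ring

lemma centralSum_eq_weightedSum (i p : ℕ) :
    centralSum i p = weightedSum (fun j => j ^ i) 0 p :=
  sum_congr rfl fun k _ => by rw [hyperTerm_zero_left, mul_div_assoc]

lemma weightedSum_succ (w : ℚ → ℚ) (e : ℚ) (N : ℕ) :
    weightedSum w e (N + 1) = weightedSum w e N + w N * hyperTerm e N := sum_range_succ _ _

lemma weightedSum_telescoping (N : ℕ) :
    weightedSum (fun j => (2 * j + 1) ^ 3 - 32 * j ^ 3) 0 N = 32 * (N : ℚ) ^ 3 * hyperTerm 0 N := by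
  induction N with
  | zero => simp [weightedSum]
  | succ N ih =>
    have hden : 1 - 4 * (0 : ℚ) + N = N + 1 ∧ 1 - 2 * (0 : ℚ) + N = N + 1 := by
      constructor <;> ring
    rw [weightedSum_succ, ih, hyperTerm_succ, hden.1, hden.2]
    push_cast
    field_simp
    ring

lemma centralSum_telescoping (p : ℕ) :
    -24 * centralSum 3 p + 12 * centralSum 2 p + 6 * centralSum 1 p + centralSum 0 p =
      32 * (p : ℚ) ^ 3 * hyperTerm 0 p := by
  rw [← weightedSum_telescoping]
  simp only [centralSum_eq_weightedSum, weightedSum, mul_sum, ← sum_add_distrib]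
  exact sum_congr rfl fun j _ => by ring

lemma sumF_zero_left (N : ℕ) : sumF 0 N = weightedSum (fun j => j ^ 0) 0 N := by
  simp only [sumF, pow_zero]

lemma sumK_zero_left (N : ℕ) : sumK 0 N =
    weightedSum (fun j => j ^ 1) 0 N + 1 / 6 * weightedSum (fun j => j ^ 0) 0 N := by
  simp only [sumK, weightedSum, mul_sum, ← sum_add_distrib]
  exact sum_congr rfl fun j _ => by ring

lemma sumW_zero_left (N : ℕ) : sumW 0 N =
    weightedSum (fun j => j ^ 2) 0 N - 1 / 36 * weightedSum (fun j => j ^ 0) 0 N := by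
  simp only [sumW, weightedSum, mul_sum, ← sum_sub_distrib]
  exact sum_congr rfl fun j _ => by ring

section Nodes

variable {p n : ℕ}

lemma nodeA_eq_mul (hn : p = 2 * n + 1) : nodeA n = p * (1 / 4) := by
  rw [hn, nodeA]; push_cast; ring

lemma nodeB_eq_mul (hn : p = 2 * n + 1) : nodeB n = p * (-1 / 4) := by
  rw [hn, nodeB]; push_cast; ring

lemma nodeC_eq_mul (hn : p = 2 * n + 1) : nodeC n = p * (1 / 12) := by
  rw [hn, nodeC]; push_cast; ring

end Nodes

lemma IsQuadratic.congr {p : ℕ} [Fact p.Prime] {f g : ℚ → ℚ} (hf : IsQuadratic p f)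
    (h : ∀ δ, f δ = g δ) : IsQuadratic p g := funext h ▸ hf

variable {p : ℕ} [hp : Fact p.Prime] [h3 : Fact (3 < p)]

lemma inv_six_mem_pInt : (1 / 6 : ℚ) ∈ pInt p := mem_pInt_of_six_pow_mul_eq 1 1 (by norm_num)

lemma hyperTerm_zero_left_eq_mul (k : ℕ) :
    ∃ c ∈ pInt p, hyperTerm 0 k = c * ((2 * k).choose k : ℚ) ^ 3 := by
  refine ⟨(2⁻¹ ^ 8) ^ k, pow_mem (pow_mem inv_two_mem_pInt _) _, ?_⟩
  rw [hyperTerm_zero_left, div_eq_inv_mul, ← inv_pow]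
  norm_num

lemma hyperTerm_zero_left_mem (k : ℕ) : hyperTerm 0 k ∈ pInt p := by
  obtain ⟨c, hc, h⟩ := hyperTerm_zero_left_eq_mul (p := p) k
  exact h ▸ mul_mem hc (pow_mem (natCast_mem _ _) _)

lemma pDvd_hyperTerm_zero_left {k : ℕ} (hk : k < p) (h2k : p ≤ 2 * k) :
    PDvd p 3 (hyperTerm 0 k) := by
  obtain ⟨c, hc, h⟩ := hyperTerm_zero_left_eq_mul (p := p) k
  obtain ⟨d, hd⟩ := hp.out.dvd_choose_add hk hk (by omega)
  rw [← two_mul] at hd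
  refine pDvd_iff_exists.2 ⟨c * d ^ 3, mul_mem hc (pow_mem (natCast_mem _ _) _), ?_⟩
  rw [h, hd]
  push_cast
  ring

lemma centralSum_three_pModEq : PModEq p 3 (centralSum 3 p)
    (centralSum 2 p / 2 + (centralSum 1 p + centralSum 0 p / 6) / 4) := by
  have hc : -(4 / 3) * hyperTerm 0 p ∈ pInt p :=
    mul_mem (mem_pInt_of_six_pow_mul_eq 1 (-8) (by norm_num)) (hyperTerm_zero_left_mem p)
  refine pDvd_iff_exists.2 ⟨_, hc, ?_⟩
  linear_combination -(1 / 24) * centralSum_telescoping p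

variable {n : ℕ}

lemma centralSum_pModEq_weightedSum (hn : p = 2 * n + 1) (i : ℕ) :
    PModEq p 3 (centralSum i p) (weightedSum (fun j => j ^ i) 0 (n + 1)) := by
  have hsplit : centralSum i p - weightedSum (fun j => j ^ i) 0 (n + 1) =
      ∑ x ∈ range n, ((n + 1 + x : ℕ) : ℚ) ^ i * hyperTerm 0 (n + 1 + x) := by
    rw [centralSum_eq_weightedSum, weightedSum, weightedSum, show p = n + 1 + n by omega,
      sum_range_add, add_sub_cancel_left]
  refine .of_sub_eq (PDvd.sum fun x hx => ?_) hsplit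
  have hx := mem_range.1 hx
  exact (pDvd_hyperTerm_zero_left (by omega) (by omega)).const_mul (pow_mem (natCast_mem _ _) _)

lemma centralSum_one_pModEq (hn : p = 2 * n + 1) :
    PModEq p 3 (centralSum 1 p + centralSum 0 p / 6) (sumK 0 (n + 1)) := by
  rw [sumK_zero_left, div_eq_mul_one_div, mul_comm (centralSum 0 p)]
  exact (centralSum_pModEq_weightedSum hn 1).add
    ((centralSum_pModEq_weightedSum hn 0).const_mul inv_six_mem_pInt)

lemma centralSum_two_pModEq (hn : p = 2 * n + 1) :
    PModEq p 3 (centralSum 2 p) (sumF 0 (n + 1) / 36 + sumW 0 (n + 1)) := by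
  refine (centralSum_pModEq_weightedSum hn 2).trans (.of_sub_eq .zero ?_)
  rw [sumW_zero_left, sumF_zero_left]
  ring

lemma isQuadratic_hyperTerm (hn : p = 2 * n + 1) {j : ℕ} (hj : j ≤ n) :
    IsQuadratic p fun δ => hyperTerm (p * δ) j := by
  refine IsQuadratic.prod fun i hi => ?_
  have hi := mem_range.1 hi
  have hnum : (1 / 2 + i : ℚ) ∈ pInt p := by
    simpa using add_mem (inv_two_mem_pInt (p := p)) (natCast_mem _ i)
  have hden : padicNorm p ((i : ℚ) + 1) = 1 := by
    exact_mod_cast norm_eq_one_of_pos_of_lt (p := p) i.succ_pos (by omega)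
  have hquarter : (1 / 4 : ℚ) ∈ pInt p := mem_pInt_of_six_pow_mul_eq 2 9 (by norm_num)
  have num₁ := IsQuadratic.linear (p := p) (b := 2) hnum (by aesop)
  have num₂ := IsQuadratic.linear (p := p) (b := -6) hnum (by aesop)
  have num₃ := IsQuadratic.linear (p := p) (b := -2) hnum (by aesop)
  have den₁ := IsQuadratic.linear_inv (p := p) (b := -4) hden (by aesop)
  have den₂ := IsQuadratic.linear_inv (p := p) (b := -2) hden (by aesop)
  have den₃ := IsQuadratic.const (p := p) (mul_mem (inv_mem_pInt_of_norm_eq_one hden) hquarter)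
  refine (((num₁.mul num₂).mul num₃).mul ((den₁.mul den₂).mul den₃)).congr fun δ => ?_
  rw [show 1 - 4 * (p * δ) + (i : ℚ) = i + 1 + -4 * (p * δ) by ring,
    show 1 - 2 * (p * δ) + (i : ℚ) = i + 1 + -2 * (p * δ) by ring]
  simp only [div_eq_mul_inv, mul_inv, one_mul]
  ring

lemma isQuadratic_weightedSum (hn : p = 2 * n + 1) {w : ℚ → ℚ → ℚ}
    (hw : ∀ j : ℕ, IsQuadratic p fun δ => w (p * δ) j) :
    IsQuadratic p fun δ => weightedSum (w (p * δ)) (p * δ) (n + 1) :=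
  .sum fun j hj => (hw j).mul (isQuadratic_hyperTerm hn (Nat.lt_succ_iff.1 (mem_range.1 hj)))

lemma isQuadratic_sumF (hn : p = 2 * n + 1) : IsQuadratic p fun δ => sumF (p * δ) (n + 1) :=
  isQuadratic_weightedSum hn (w := fun _ _ => 1) fun _ => .const (one_mem _)

lemma isQuadratic_weightK (j : ℕ) :
    IsQuadratic p fun δ => (j : ℚ) + 1 / 6 - 2 * (p * δ) :=
  (IsQuadratic.linear (a := j + 1 / 6) (b := -2)
    (add_mem (natCast_mem _ j) inv_six_mem_pInt) (by aesop)).congr fun δ => by ring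

lemma isQuadratic_sumK (hn : p = 2 * n + 1) : IsQuadratic p fun δ => sumK (p * δ) (n + 1) :=
  isQuadratic_weightedSum hn (w := fun e j => j + 1 / 6 - 2 * e) isQuadratic_weightK

lemma isQuadratic_sumW (hn : p = 2 * n + 1) : IsQuadratic p fun δ => sumW (p * δ) (n + 1) := by
  refine isQuadratic_weightedSum hn
    (w := fun e j => j ^ 2 - (2 * e - 1 / 6) ^ 2 - 4 * e * (j + 1 / 6 - 2 * e)) fun j => ?_
  have hlin := IsQuadratic.linear (p := p) (b := 2) (neg_mem inv_six_mem_pInt) (by aesop)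
  have hsq := (IsQuadratic.const (p := p) (a := -1) (by aesop)).mul (hlin.mul hlin)
  have hcross := IsQuadratic.linear (p := p) (a := 0) (b := -4) (by aesop) (by aesop)
  exact (((IsQuadratic.const (p := p) (pow_mem (natCast_mem _ j) 2)).add hsq).add
    (hcross.mul (isQuadratic_weightK j))).congr fun δ => by ring

lemma IsQuadratic.interpolate_two (hn : p = 2 * n + 1) {G : ℚ → ℚ}
    (hG : IsQuadratic p fun δ => G (p * δ)) :
    PModEq p 2 (G 0) ((G (nodeB n) + G (nodeA n)) / 2) := by
  simpa only [nodeA_eq_mul hn, nodeB_eq_mul hn, mul_zero] using hG.pModEq_two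

lemma IsQuadratic.interpolate_three (hn : p = 2 * n + 1) {G : ℚ → ℚ}
    (hG : IsQuadratic p fun δ => G (p * δ)) :
    PModEq p 3 (G 0) (G (nodeB n) / 8 - G (nodeA n) / 4 + 9 / 8 * G (nodeC n)) := by
  simpa only [nodeA_eq_mul hn, nodeB_eq_mul hn, nodeC_eq_mul hn, mul_zero]
    using hG.pModEq_three

end Reduction

/-! ### Rising factorials near `1` and harmonic numbers -/

section RisingFactorial

lemma ascPochhammer_eval_add {R : Type*} [CommSemiring R] (z : R) (k l : ℕ) :
    (ascPochhammer R (k + l)).eval z =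
      (ascPochhammer R k).eval z * (ascPochhammer R l).eval (z + k) := by
  simp [← ascPochhammer_mul, Polynomial.eval_comp]

lemma ascPochhammer_eval_reflect {R : Type*} [CommRing R] {z w : R} (k : ℕ) (h : z + w + k = 1) :
    (ascPochhammer R k).eval z = (-1) ^ k * (ascPochhammer R k).eval w := by
  have hw : -z - k + 1 = w := by linear_combination -h
  rw [← neg_neg z, ascPochhammer_eval_neg_eq_descPochhammer,
    descPochhammer_eval_eq_ascPochhammer, hw]

lemma add_pred_sub_div_succ {m i : ℕ} (hi : i < m) (q : ℕ) :
    (q + 1 + (m - 1 - i)) / m = (q + (m - 1 - i)) / m + if i = q % m then 1 else 0 := by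
  have hdvd : m ∣ q + (m - 1 - i) + 1 ↔ i = q % m := by
    rw [show q + (m - 1 - i) + 1 = q + m - i by omega,
      ← Nat.modEq_iff_dvd' (by omega : i ≤ q + m), Nat.ModEq, Nat.mod_eq_of_lt hi,
      Nat.add_mod_right]
  simp only [add_right_comm q 1, Nat.succ_div, hdvd]

lemma mul_add_pred_sub_mod_div {m : ℕ} (hm : 0 < m) (q : ℕ) :
    m * ((q + (m - 1 - q % m)) / m) + q % m = q := by
  have hlt := Nat.mod_lt q hm
  have hdm := Nat.div_add_mod q m
  rw [show q + (m - 1 - q % m) = m * (q / m) + (m - 1) by omega, Nat.mul_add_div hm,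
    Nat.div_eq_of_lt (show m - 1 < m by omega), add_zero, hdm]

/-- Gauss's multiplication formula. -/
lemma ascPochhammer_eval_nat_mul {F : Type*} [Field F] {m : ℕ} (hm : (m : F) ≠ 0) (z : F) (q : ℕ) :
    (ascPochhammer F q).eval (m * z) =
      m ^ q * ∏ i ∈ range m, (ascPochhammer F ((q + (m - 1 - i)) / m)).eval (z + i / m) := by
  have hm0 : 0 < m := Nat.pos_of_ne_zero fun h => hm (by simp [h])
  induction q with
  | zero =>
    have hzero : ∀ i, (m - 1 - i) / m = 0 := fun i => Nat.div_eq_of_lt (by omega)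
    simp [hzero]
  | succ q ih =>
    have hfactor : ∀ i ∈ range m,
        (ascPochhammer F ((q + 1 + (m - 1 - i)) / m)).eval (z + i / m) =
          (ascPochhammer F ((q + (m - 1 - i)) / m)).eval (z + i / m) *
            if i = q % m then z + q / m else 1 := by
      intro i hi
      have hi := mem_range.1 hi
      rw [add_pred_sub_div_succ hi]
      split_ifs with hiq
      · have hq : (m : F) * ((q + (m - 1 - i)) / m : ℕ) + i = q := by
          rw [← Nat.cast_mul, ← Nat.cast_add, hiq, mul_add_pred_sub_mod_div hm0]
        rw [ascPochhammer_succ_eval, ← hq]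
        congr 1
        field_simp
        ring
      · rw [add_zero, mul_one]
    rw [prod_congr rfl hfactor, prod_mul_distrib, prod_ite_eq',
      if_pos (mem_range.2 (Nat.mod_lt q hm0)), ascPochhammer_succ_eval, ih,
      show (m : F) * z + q = m * (z + q / m) by field_simp]
    ring

lemma ascPochhammer_eval_two_mul (z : ℚ) (q : ℕ) : (ascPochhammer ℚ q).eval (2 * z) =
    2 ^ q * ((ascPochhammer ℚ ((q + 1) / 2)).eval z *
      (ascPochhammer ℚ (q / 2)).eval (z + 1 / 2)) := by
  simpa [prod_range_succ] using ascPochhammer_eval_nat_mul (m := 2) (by norm_num) z q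

lemma ascPochhammer_eval_three_mul (z : ℚ) (q : ℕ) : (ascPochhammer ℚ q).eval (3 * z) =
    3 ^ q * ((ascPochhammer ℚ ((q + 2) / 3)).eval z *
      (ascPochhammer ℚ ((q + 1) / 3)).eval (z + 1 / 3) *
        (ascPochhammer ℚ (q / 3)).eval (z + 2 / 3)) := by
  simpa [prod_range_succ] using ascPochhammer_eval_nat_mul (m := 3) (by norm_num) z q

/-- The normalised rising factorial `(1 - x p)_k / (1)_k`, a polynomial in `x p` with constant
term `1`. -/
def risingRatio (p k : ℕ) (x : ℚ) : ℚ := ∏ s ∈ range k, (1 - x * (p * (s + 1 : ℚ)⁻¹))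

/-- The generalised harmonic number `∑_{s ≤ k} 1 / s²`. -/
def harmonicSq (k : ℕ) : ℚ := ∑ s ∈ range k, (s + 1 : ℚ)⁻¹ ^ 2

lemma risingRatio_zero (p k : ℕ) : risingRatio p k 0 = 1 := by simp [risingRatio]

lemma ascPochhammer_eval_one_sub {p k : ℕ} {x z : ℚ} (hz : z = 1 - x * p) :
    (ascPochhammer ℚ k).eval z = k.factorial * risingRatio p k x := by
  induction k with
  | zero => simp [risingRatio]
  | succ k ih =>
    rw [ascPochhammer_succ_eval, ih, hz, risingRatio, risingRatio, prod_range_succ,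
      Nat.factorial_succ]
    push_cast
    field_simp
    ring

lemma cast_factorial_ne_zero (k : ℕ) : (k.factorial : ℚ) ≠ 0 := mod_cast k.factorial_ne_zero

lemma factorial_pred_mul_risingRatio {p k l : ℕ} (h : p = k + l + 1) (x : ℚ) :
    ((p - 1).factorial : ℚ) * risingRatio p (p - 1) x =
      (-1) ^ l * k.factorial * l.factorial * (risingRatio p k x * risingRatio p l (1 - x)) := by
  have hp : (p : ℚ) = k + l + 1 := by exact_mod_cast h
  rw [← ascPochhammer_eval_one_sub rfl, show p - 1 = k + l by omega, ascPochhammer_eval_add,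
    ascPochhammer_eval_one_sub rfl,
    ascPochhammer_eval_reflect l (w := 1 - (1 - x) * p) (by rw [hp]; ring),
    ascPochhammer_eval_one_sub rfl]
  ring

lemma factorial_pred_eq {p k l : ℕ} (h : p = k + l + 1) :
    ((p - 1).factorial : ℚ) = (-1) ^ l * k.factorial * l.factorial * risingRatio p l 1 := by
  simpa [risingRatio_zero] using factorial_pred_mul_risingRatio h 0

lemma risingRatio_reflect {p k l : ℕ} (h : p = k + l + 1) (x : ℚ) :
    risingRatio p (p - 1) x * risingRatio p l 1 =
      risingRatio p k x * risingRatio p l (1 - x) := by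
  have hx := factorial_pred_mul_risingRatio h x
  rw [factorial_pred_eq h] at hx
  have hne : (-1 : ℚ) ^ l * k.factorial * l.factorial ≠ 0 := by positivity
  exact mul_left_cancel₀ hne (by linear_combination hx)

lemma factorial_pred_mul_risingRatio_half {p n : ℕ} (h : p = 2 * n + 1) (x : ℚ) :
    ((p - 1).factorial : ℚ) * risingRatio p (p - 1) x = (-1) ^ n * 4 ^ n * n.factorial ^ 2 *
      (risingRatio p n (x / 2) * risingRatio p n ((1 - x) / 2)) := by
  have hp : (p : ℚ) = 2 * n + 1 := by exact_mod_cast h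
  rw [← ascPochhammer_eval_one_sub rfl, show 1 - x * (p : ℚ) = 2 * ((1 - x * p) / 2) by ring,
    show p - 1 = 2 * n by omega, ascPochhammer_eval_two_mul, show (2 * n + 1) / 2 = n by omega,
    show 2 * n / 2 = n by omega,
    ascPochhammer_eval_reflect n (w := 1 - (1 - x) / 2 * p) (by rw [hp]; ring),
    ascPochhammer_eval_one_sub rfl, ascPochhammer_eval_one_sub (x := x / 2) (by ring), pow_mul]
  norm_num
  ring

lemma risingRatio_duplication {p n : ℕ} (h : p = 2 * n + 1) (x : ℚ) :
    risingRatio p (p - 1) x * risingRatio p n (1 / 2) =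
      risingRatio p n (x / 2) * risingRatio p n ((1 - x) / 2) := by
  have hx := factorial_pred_mul_risingRatio_half h x
  have h0 := factorial_pred_mul_risingRatio_half h 0
  simp only [risingRatio_zero, zero_div, one_mul, mul_one, sub_zero] at h0
  rw [h0] at hx
  have hne : (-1 : ℚ) ^ n * 4 ^ n * n.factorial ^ 2 ≠ 0 := by positivity
  exact mul_left_cancel₀ hne (by linear_combination hx)

lemma two_pow_mul_risingRatio {p n : ℕ} (h : p = 2 * n + 1) :
    2 ^ (p - 1) * risingRatio p n (1 / 2) = risingRatio p n 1 := by
  have h0 := factorial_pred_mul_risingRatio_half h 0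
  simp only [risingRatio_zero, zero_div, one_mul, mul_one, sub_zero] at h0
  rw [factorial_pred_eq (k := n) (l := n) (by omega)] at h0
  have hne : (-1 : ℚ) ^ n * n.factorial ^ 2 ≠ 0 := by positivity
  rw [show p - 1 = 2 * n by omega, pow_mul]
  norm_num
  exact mul_left_cancel₀ hne (by linear_combination -h0)

end RisingFactorial

section RisingRatioLogarithms

variable {p : ℕ} {x : ℚ}

lemma ascPochhammer_third_mul_eq (hp : p % 6 = 1 ∨ p % 6 = 5) :
    (ascPochhammer ℚ ((p + 1) / 3)).eval (1 / 3) * (ascPochhammer ℚ (p / 3)).eval (2 / 3) =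
      (-1) ^ (2 * p / 3) * (ascPochhammer ℚ (2 * p / 3)).eval (1 - 1 / 3 * (p : ℚ)) := by
  set k := p / 3
  rcases hp with h | h
  · have hpk : (p : ℚ) = 3 * k + 1 := by exact_mod_cast (by omega : p = 3 * k + 1)
    have heven : Even (2 * p / 3) := ⟨k, by omega⟩
    rw [heven.neg_one_pow, show 2 * p / 3 = k + k by omega, ascPochhammer_eval_add,
      show (p + 1) / 3 = k by omega, show 1 - 1 / 3 * (p : ℚ) + k = 2 / 3 by rw [hpk]; ring,
      ascPochhammer_eval_reflect (z := 1 / 3) (w := 1 - 1 / 3 * (p : ℚ)) k (by rw [hpk]; ring),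
      Even.neg_one_pow (Nat.even_iff.2 (by omega))]
    ring
  · have hpk : (p : ℚ) = 3 * k + 2 := by exact_mod_cast (by omega : p = 3 * k + 2)
    have hodd : Odd (2 * p / 3) := ⟨k, by omega⟩
    rw [hodd.neg_one_pow, show 2 * p / 3 = k + (k + 1) by omega, ascPochhammer_eval_add,
      show (p + 1) / 3 = k + 1 by omega, show 1 - 1 / 3 * (p : ℚ) + k = 1 / 3 by rw [hpk]; ring,
      ascPochhammer_eval_reflect (z := 2 / 3) (w := 1 - 1 / 3 * (p : ℚ)) k (by rw [hpk]; ring),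
      Odd.neg_one_pow (Nat.odd_iff.2 (by omega))]
    ring

lemma three_pow_mul_risingRatio (hp : p % 6 = 1 ∨ p % 6 = 5) :
    3 ^ (p - 1) * risingRatio p (2 * p / 3) (1 / 3) = risingRatio p (2 * p / 3) 1 := by
  have hsplit : p = p / 3 + 2 * p / 3 + 1 := by omega
  have htrip := ascPochhammer_eval_three_mul (1 / 3) (p - 1)
  rw [show (3 : ℚ) * (1 / 3) = 1 by norm_num, show (1 : ℚ) / 3 + 1 / 3 = 2 / 3 by norm_num,
    show (1 : ℚ) / 3 + 2 / 3 = 1 by norm_num, show (p - 1 + 2) / 3 = (p + 1) / 3 by omega,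
    show (p - 1 + 1) / 3 = p / 3 by omega, show (p - 1) / 3 = p / 3 by omega,
    ascPochhammer_eval_one, ascPochhammer_eval_one, ascPochhammer_third_mul_eq hp,
    ascPochhammer_eval_one_sub rfl, factorial_pred_eq hsplit] at htrip
  have hne : (-1 : ℚ) ^ (2 * p / 3) * (p / 3).factorial * (2 * p / 3).factorial ≠ 0 := by positivity
  exact mul_left_cancel₀ hne (by linear_combination -htrip)

lemma factorial_mul_risingRatio_sixth (hp : p % 6 = 1 ∨ p % 6 = 5) (x : ℚ) :
    ((p / 3).factorial : ℚ) * (p / 2).factorial *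
        (risingRatio p (p / 3) x * risingRatio p (p / 2) ((1 + x) / 2)) =
      2 ^ (p / 3) * (p / 6).factorial * (2 * p / 3).factorial *
        (risingRatio p (p / 6) (x / 2) * risingRatio p (2 * p / 3) ((1 + x) / 2)) := by
  have hdup := ascPochhammer_eval_two_mul ((1 - x * p) / 2) (p / 3)
  have hadd := ascPochhammer_eval_add (1 - (1 + x) / 2 * (p : ℚ)) (p / 2) ((p / 3 + 1) / 2)
  have hn : ((p / 2 : ℕ) : ℚ) = (p - 1) / 2 := by
    rw [eq_div_iff two_ne_zero, eq_sub_iff_add_eq]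
    exact_mod_cast (by omega : p / 2 * 2 + 1 = p)
  rw [mul_div_cancel₀ _ two_ne_zero, ascPochhammer_eval_one_sub rfl,
    show p / 3 / 2 = p / 6 by omega,
    ascPochhammer_eval_one_sub (x := x / 2) (k := p / 6) (by ring)] at hdup
  rw [show p / 2 + (p / 3 + 1) / 2 = 2 * p / 3 by omega, ascPochhammer_eval_one_sub rfl,
    ascPochhammer_eval_one_sub rfl, hn,
    show 1 - (1 + x) / 2 * (p : ℚ) + (p - 1) / 2 = (1 - x * p) / 2 by ring] at hadd
  linear_combination ((p / 2).factorial * risingRatio p (p / 2) ((1 + x) / 2)) * hdup -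
    (2 ^ (p / 3) * (p / 6).factorial * risingRatio p (p / 6) (x / 2)) * hadd

lemma risingRatio_sixth (hp : p % 6 = 1 ∨ p % 6 = 5) (x : ℚ) :
    risingRatio p (p / 3) x * risingRatio p (p / 2) ((1 + x) / 2) *
        risingRatio p (2 * p / 3) (1 / 2) =
      risingRatio p (p / 2) (1 / 2) * risingRatio p (p / 6) (x / 2) *
        risingRatio p (2 * p / 3) ((1 + x) / 2) := by
  have hx := factorial_mul_risingRatio_sixth hp x
  have h0 := factorial_mul_risingRatio_sixth hp 0
  simp only [risingRatio_zero, zero_div, add_zero, one_mul] at h0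
  have hn := cast_factorial_ne_zero (p / 2)
  have hk := cast_factorial_ne_zero (p / 3)
  refine mul_left_cancel₀ (mul_ne_zero hk hn) (mul_left_cancel₀
    (show (2 : ℚ) ^ (p / 3) * (p / 6).factorial * (2 * p / 3).factorial ≠ 0 by positivity) ?_)
  linear_combination (2 ^ (p / 3) * (p / 6).factorial * (2 * p / 3).factorial *
      risingRatio p (2 * p / 3) (1 / 2)) * hx - (2 ^ (p / 3) * (p / 6).factorial *
      (2 * p / 3).factorial * risingRatio p (p / 6) (x / 2) *
      risingRatio p (2 * p / 3) ((1 + x) / 2)) * h0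

variable [hp : Fact p.Prime] {k l n : ℕ}

lemma inv_succ_mem_pInt {s : ℕ} (hk : k < p) (hs : s < k) : ((s : ℚ) + 1)⁻¹ ∈ pInt p := by
  exact_mod_cast inv_mem_pInt_of_norm_eq_one (norm_eq_one_of_pos_of_lt s.succ_pos (by omega))

lemma harmonic_mem_pInt (hk : k < p) : harmonic k ∈ pInt p :=
  sum_mem fun s hs => by exact_mod_cast inv_succ_mem_pInt hk (mem_range.1 hs)

lemma harmonicSq_mem_pInt (hk : k < p) : harmonicSq k ∈ pInt p :=
  sum_mem fun _ hs => pow_mem (inv_succ_mem_pInt hk (mem_range.1 hs)) 2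

variable [h3 : Fact (3 < p)]

lemma odd_of_three_lt : p = 2 * (p / 2) + 1 := by
  have := hp.out.eq_two_or_odd
  have := h3.out
  omega

lemma mod_six_eq : p % 6 = 1 ∨ p % 6 = 5 := by
  have h2 : p % 2 = 1 := hp.out.eq_two_or_odd.resolve_left (by have := h3.out; omega)
  have h3 : ¬ 3 ∣ p := fun h => by
    have := (Nat.prime_dvd_prime_iff_eq Nat.prime_three hp.out).1 h
    have := h3.out
    omega
  omega

lemma hasLog_risingRatio (hk : k < p) (hx : x ∈ pInt p) : HasLog p (risingRatio p k x)
    (p * (-x * harmonic k) + p ^ 2 * (-x ^ 2 * harmonicSq k / 2)) := by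
  refine (HasLog.prod fun s hs => HasLog.one_sub (PDvd.const_mul
    (PDvd.prime.mul_const (inv_succ_mem_pInt hk (mem_range.1 hs))) hx)).congr rfl ?_
  simp only [harmonic, harmonicSq, mul_sum, sum_div, ← sum_add_distrib]
  exact sum_congr rfl fun s _ => by push_cast; ring

lemma hasLog_mul_unique {a b c d α β γ δ : ℚ} (ha : HasLog p a α) (hb : HasLog p b β)
    (hc : HasLog p c γ) (hd : HasLog p d δ) (h : a * b = c * d) :
    PModEq p 3 (α + β) (γ + δ) :=
  ((ha.mul hb).congr h rfl).unique (hc.mul hd)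

lemma prime_mul_harmonic_reflect (h : p = k + l + 1) :
    PModEq p 3 (p ^ 2 * harmonicSq (p - 1)) (p ^ 2 * (harmonicSq k + harmonicSq l)) ∧
      PModEq p 3 (p * harmonic (p - 1)) (p * (harmonic k - harmonic l) - p ^ 2 * harmonicSq l) := by
  have hp1 : p - 1 < p := by omega
  have hk : k < p := by omega
  have hl : l < p := by omega
  have hone := one_mem (pInt p)
  have hneg := neg_mem hone
  have hpos := hasLog_mul_unique (hasLog_risingRatio hp1 hone) (hasLog_risingRatio hl hone)
    (hasLog_risingRatio hk hone) (hasLog_risingRatio hl (sub_mem hone hone))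
    (risingRatio_reflect h 1)
  have hminus := hasLog_mul_unique (hasLog_risingRatio hp1 hneg) (hasLog_risingRatio hl hone)
    (hasLog_risingRatio hk hneg) (hasLog_risingRatio hl (sub_mem hone hneg))
    (risingRatio_reflect h (-1))
  exact ⟨.of_sub_eq (PDvd.add hpos hminus).neg (by ring),
    .of_sub_eq ((PDvd.sub hminus hpos).const_mul inv_two_mem_pInt) (by ring)⟩

lemma pDvd_prime_mul_harmonic :
    PDvd p 3 (p * harmonic (p - 1)) ∧ PDvd p 3 (p ^ 2 * harmonicSq (p - 1)) ∧
      PDvd p 3 (p ^ 2 * harmonicSq (p / 2)) := by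
  have hn : p = 2 * (p / 2) + 1 := odd_of_three_lt
  obtain ⟨hsq, hharm⟩ := prime_mul_harmonic_reflect (p := p) (k := p / 2) (l := p / 2) (by omega)
  have hp1 : p - 1 < p := by omega
  have hn' : p / 2 < p := by omega
  have hhalf : (1 / 2 : ℚ) ∈ pInt p := mem_pInt_of_six_pow_mul_eq 1 3 (by norm_num)
  have hhalf' : (-1 / 2 : ℚ) ∈ pInt p := mem_pInt_of_six_pow_mul_eq 1 (-3) (by norm_num)
  have hdup := hasLog_mul_unique (hasLog_risingRatio hp1 (neg_mem (one_mem _)))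
    (hasLog_risingRatio hn' hhalf) (hasLog_risingRatio hn' hhalf')
    (hasLog_risingRatio hn' (by norm_num)) (risingRatio_duplication hn (-1))
  have hzero : PDvd p 3 (p * harmonic (p - 1)) :=
    .of_six_pow_mul 1 ((PDvd.add (PDvd.const_mul hdup (natCast_mem _ 4)) (PDvd.add
      (PDvd.const_mul hsq (natCast_mem _ 2)) (PDvd.const_mul hharm (natCast_mem _ 2)))).congr
      (by push_cast; ring))
  have hhalfSq : PDvd p 3 (p ^ 2 * harmonicSq (p / 2)) :=
    (PDvd.sub hharm hzero).congr (by ring)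
  exact ⟨hzero, (PDvd.add hsq (hhalfSq.add hhalfSq)).congr (by ring), hhalfSq⟩

lemma hasLog_risingRatio_pred (hx : x ∈ pInt p) : HasLog p (risingRatio p (p - 1) x) 0 := by
  obtain ⟨hH, hSq, -⟩ := pDvd_prime_mul_harmonic (p := p)
  refine (hasLog_risingRatio (by have := h3.out; omega) hx).congr_pModEq ?_
  exact .of_sub_eq ((hH.const_mul (neg_mem hx)).sub
    ((hSq.const_mul (pow_mem hx 2)).const_mul inv_two_mem_pInt)) (by ring)

lemma hasLog_risingRatio_half (hx : x ∈ pInt p) :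
    HasLog p (risingRatio p (p / 2) x) (p * (-x * harmonic (p / 2))) := by
  obtain ⟨-, -, hSq⟩ := pDvd_prime_mul_harmonic (p := p)
  refine (hasLog_risingRatio (by have := h3.out; omega) hx).congr_pModEq ?_
  exact .of_sub_eq ((hSq.const_mul (pow_mem hx 2)).const_mul inv_two_mem_pInt).neg (by ring)

lemma hasLog_two_pow : HasLog p (2 ^ (p - 1)) (p * (-harmonic (p / 2) / 2)) := by
  have hhalf := hasLog_risingRatio_half (p := p) inv_two_mem_pInt
  refine ((hasLog_risingRatio_half (one_mem _)).div hhalf).congr ?_ (by ring)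
  rw [← two_pow_mul_risingRatio odd_of_three_lt, one_div, mul_div_cancel_right₀ _ hhalf.ne_zero]

lemma hasLog_risingRatio_third (hx : x ∈ pInt p) : HasLog p (risingRatio p (p / 3) x)
    (p * (-x * harmonic (p / 3)) + p ^ 2 * (-x ^ 2 * harmonicSq (p / 3) / 2)) :=
  hasLog_risingRatio (by have := h3.out; omega) hx

lemma hasLog_risingRatio_two_thirds (hx : x ∈ pInt p) : HasLog p (risingRatio p (2 * p / 3) x)
    (p * (-x * harmonic (p / 3)) + p ^ 2 * ((x ^ 2 / 2 - x) * harmonicSq (p / 3))) := by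
  have hmod := mod_six_eq (p := p)
  obtain ⟨hH, hSq, -⟩ := pDvd_prime_mul_harmonic (p := p)
  obtain ⟨hsum, hdiff⟩ :=
    prime_mul_harmonic_reflect (p := p) (k := p / 3) (l := 2 * p / 3) (by omega)
  have hSqAdd : PDvd p 3 (p ^ 2 * (harmonicSq (p / 3) + harmonicSq (2 * p / 3))) :=
    (PDvd.sub hSq hsum).congr (by ring)
  have hHSub : PDvd p 3
      (p * (harmonic (2 * p / 3) - harmonic (p / 3)) - p ^ 2 * harmonicSq (p / 3)) :=
    (PDvd.sub hdiff (hH.add hSqAdd)).congr (by ring)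
  refine (hasLog_risingRatio (by omega) hx).congr_pModEq ?_
  exact .of_sub_eq ((hHSub.const_mul (neg_mem hx)).sub
    ((hSqAdd.const_mul (pow_mem hx 2)).const_mul inv_two_mem_pInt)) (by ring)

lemma hasLog_three_pow : HasLog p (3 ^ (p - 1))
    (p * (-2 / 3 * harmonic (p / 3)) + p ^ 2 * (-2 / 9 * harmonicSq (p / 3))) := by
  have hthird := hasLog_risingRatio_two_thirds (p := p) (x := 1 / 3)
    (mem_pInt_of_six_pow_mul_eq 1 2 (by norm_num))
  refine ((hasLog_risingRatio_two_thirds (one_mem _)).div hthird).congr ?_ (by ring)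
  rw [← three_pow_mul_risingRatio mod_six_eq, mul_div_cancel_right₀ _ hthird.ne_zero]

lemma prime_mul_harmonic_sixth :
    PModEq p 3 (p ^ 2 * harmonicSq (p / 6)) (5 * (p ^ 2 * harmonicSq (p / 3))) ∧
      PModEq p 3 (p * harmonic (p / 6))
        (p * (harmonic (p / 2) + harmonic (p / 3)) - p ^ 2 * harmonicSq (p / 3) / 2) := by
  have hm : p / 6 < p := by have := h3.out; omega
  have hone := one_mem (pInt p)
  have hhalf : (1 / 2 : ℚ) ∈ pInt p := mem_pInt_of_six_pow_mul_eq 1 3 (by norm_num)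
  have hhalf' : (-1 / 2 : ℚ) ∈ pInt p := mem_pInt_of_six_pow_mul_eq 1 (-3) (by norm_num)
  have hneg := neg_mem hone
  have hone' : (1 + 1) / 2 ∈ pInt p := by norm_num
  have hzero : (1 + -1) / 2 ∈ pInt p := by norm_num
  have hpos := hasLog_mul_unique
    ((hasLog_risingRatio_third hone).mul (hasLog_risingRatio_half hone'))
    (hasLog_risingRatio_two_thirds hhalf)
    ((hasLog_risingRatio_half hhalf).mul (hasLog_risingRatio hm hhalf))
    (hasLog_risingRatio_two_thirds hone') (risingRatio_sixth mod_six_eq 1)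
  have hminus := hasLog_mul_unique
    ((hasLog_risingRatio_third hneg).mul (hasLog_risingRatio_half hzero))
    (hasLog_risingRatio_two_thirds hhalf)
    ((hasLog_risingRatio_half hhalf).mul (hasLog_risingRatio hm hhalf'))
    (hasLog_risingRatio_two_thirds hzero) (risingRatio_sixth mod_six_eq (-1))
  exact ⟨.of_sub_eq (PDvd.const_mul (PDvd.add hpos hminus) (natCast_mem _ 4))
      (by push_cast; ring),
    .of_sub_eq (PDvd.sub hpos hminus) (by ring)⟩

lemma hasLog_risingRatio_sixth (hx : x ∈ pInt p) : HasLog p (risingRatio p (p / 6) x)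
    (p * (-x * (harmonic (p / 2) + harmonic (p / 3))) +
      p ^ 2 * ((x - 5 * x ^ 2) / 2 * harmonicSq (p / 3))) := by
  obtain ⟨hSq, hH⟩ := prime_mul_harmonic_sixth (p := p)
  refine (hasLog_risingRatio (by have := h3.out; omega) hx).congr_pModEq ?_
  exact .of_sub_eq (PDvd.sub (PDvd.const_mul hH (neg_mem hx))
    (PDvd.const_mul (PDvd.const_mul hSq (pow_mem hx 2)) inv_two_mem_pInt)) (by ring)

end RisingRatioLogarithms

/-! ### The quadratic character and the values at the nodes -/

section NodeProducts

lemma prod_range_sq_div (n : ℕ) :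
    ∏ j ∈ range n, ((2 * (j : ℚ) + 3) / (2 * j + 1)) ^ 2 = (2 * (n : ℚ) + 1) ^ 2 := by
  induction n with
  | zero => simp
  | succ n ih =>
    rw [prod_range_succ, ih]
    push_cast
    field_simp
    ring

lemma sumK_nodeA_mul_sumK_nodeB (n : ℕ) :
    sumK (nodeA n) (n + 1) * sumK (nodeB n) (n + 1) = -2 / 9 * (2 * n + 1) ^ 2 := by
  rw [sumK_nodeA, sumK_nodeB, mul_mul_mul_comm, ← prod_mul_distrib, ← prod_range_sq_div]
  norm_num
  exact prod_congr rfl fun j _ => by field_simp; ring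

lemma sumF_nodeA_mul_sumW_nodeB (n : ℕ) :
    sumF (nodeA n) (n + 1) * sumW (nodeB n) (n + 1) = 2 / 9 * (2 * n + 1) ^ 2 := by
  rw [sumF_nodeA, sumW_nodeB, mul_left_comm, ← prod_mul_distrib, ← prod_range_sq_div]
  norm_num
  exact prod_congr rfl fun j _ => by field_simp; ring

lemma sumF_nodeB_mul_sumW_nodeA (n : ℕ) :
    sumF (nodeB n) (n + 1) * sumW (nodeA n) (n + 1) = 2 / 9 * (2 * n + 1) ^ 2 := by
  rw [sumF_nodeB, sumW_nodeA, mul_left_comm, ← prod_mul_distrib, ← prod_range_sq_div]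
  norm_num
  exact prod_congr rfl fun j _ => by field_simp; ring

lemma prod_range_four_mul_add_two (n : ℕ) :
    (∏ j ∈ range n, (4 * (j : ℚ) + 2)) * n.factorial = (2 * n).factorial := by
  induction n with
  | zero => simp
  | succ n ih =>
    rw [prod_range_succ, show 2 * (n + 1) = 2 * n + 1 + 1 by ring, Nat.factorial_succ,
      Nat.factorial_succ, Nat.factorial_succ]
    push_cast
    rw [← ih]
    ring

lemma prod_range_three_mul_factorial (n : ℕ) :
    (∏ j ∈ range n, 3 * (3 * (j : ℚ) + 2) * (3 * j + 4)) * n.factorial =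
      (3 * n + 1).factorial := by
  induction n with
  | zero => simp
  | succ n ih =>
    rw [prod_range_succ, show 3 * (n + 1) + 1 = 3 * n + 1 + 1 + 1 + 1 by ring]
    simp only [Nat.factorial_succ (3 * n + 1), Nat.factorial_succ (3 * n + 1 + 1),
      Nat.factorial_succ (3 * n + 1 + 1 + 1), Nat.factorial_succ n]
    push_cast
    rw [← ih]
    ring

lemma prod_range_mul_add {a : ℚ} (ha : a ≠ 0) (b : ℚ) (n : ℕ) :
    ∏ j ∈ range n, (a * j + b) = a ^ n * (ascPochhammer ℚ n).eval (b / a) := by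
  induction n with
  | zero => simp
  | succ n ih =>
    rw [prod_range_succ, ih, ascPochhammer_succ_eval]
    field_simp
    ring

lemma neg_one_pow_mul_self (n : ℕ) : (-1 : ℚ) ^ n * (-1) ^ n = 1 := by
  rw [← mul_pow]
  norm_num

lemma sumF_nodeA_eq_ascPochhammer (n : ℕ) : sumF (nodeA n) (n + 1) = 3 ^ (3 * n) *
    ((ascPochhammer ℚ n).eval (2 / 3) * n.factorial / (2 * n).factorial) ^ 2 := by
  have hn := cast_factorial_ne_zero n
  rw [sumF_nodeA, prod_mul_distrib, prod_pow, prod_div_distrib, prod_const, card_range,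
    prod_range_mul_add three_ne_zero, ← prod_range_four_mul_add_two, mul_div_mul_right _ _ hn,
    show 3 * n = n + n + n by ring]
  ring

lemma sumW_nodeA_eq_ascPochhammer (n : ℕ) : sumW (nodeA n) (n + 1) = 2 / 9 * (3 ^ (3 * n) *
    ((ascPochhammer ℚ n).eval (4 / 3) * n.factorial / (2 * n).factorial) ^ 2) := by
  have hn := cast_factorial_ne_zero n
  rw [sumW_nodeA, prod_mul_distrib, prod_pow, prod_div_distrib, prod_const, card_range,
    prod_range_mul_add three_ne_zero, ← prod_range_four_mul_add_two, mul_div_mul_right _ _ hn,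
    show 3 * n = n + n + n by ring]
  ring

lemma factorial_prime_add {p : ℕ} (hp : 0 < p) (n : ℕ) :
    ((p + n).factorial : ℚ) = p * (p - 1).factorial * n.factorial * risingRatio p n (-1) := by
  rw [← Nat.cast_mul, Nat.mul_factorial_pred hp.ne', ← ascPochhammer_eval_one,
    ascPochhammer_eval_add, ascPochhammer_eval_one, mul_assoc,
    ascPochhammer_eval_one_sub (x := -1) (by ring)]

lemma sumK_nodeA_eq_risingRatio {p n : ℕ} (hn : p = 2 * n + 1) :
    sumK (nodeA n) (n + 1) * risingRatio p n 1 = -p / 3 * ((-1) ^ n * risingRatio p n (-1)) := by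
  have hfac := cast_factorial_ne_zero n
  have hpred := cast_factorial_ne_zero (p - 1)
  have hsgn := neg_one_pow_mul_self n
  have hprod : ∏ j ∈ range n, 3 * (3 * (j : ℚ) + 2) * (3 * j + 4) =
      p * (p - 1).factorial * risingRatio p n (-1) := by
    refine mul_right_cancel₀ hfac ?_
    rw [prod_range_three_mul_factorial, show 3 * n + 1 = p + n by omega,
      factorial_prime_add (by omega)]
    ring
  have hden : ∏ j ∈ range n, (4 * (j : ℚ) + 2) = (p - 1).factorial / n.factorial := by
    rw [eq_div_iff hfac, prod_range_four_mul_add_two, show p - 1 = 2 * n by omega]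
  have hone := factorial_pred_eq (k := n) (l := n) (p := p) (by omega)
  rw [sumK_nodeA, prod_div_distrib, prod_pow, hprod, hden]
  field_simp
  rw [hone]
  linear_combination ((p : ℚ) * n.factorial ^ 2 * risingRatio p n 1 * risingRatio p n (-1)) * hsgn

end NodeProducts

section NodeValues

variable {p : ℕ}

lemma legendreSym_three_eq_one (h : p % 3 = 1) : legendreSym 3 p = 1 := by
  rw [legendreSym.mod, show (p : ℤ) % (3 : ℕ) = 1 by omega]
  decide

lemma legendreSym_three_eq_neg_one (h : p % 3 = 2) : legendreSym 3 p = -1 := by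
  rw [legendreSym.mod, show (p : ℤ) % (3 : ℕ) = 2 by omega]
  decide

variable [hp : Fact p.Prime] [h3 : Fact (3 < p)]

lemma legendreSym_neg_three : legendreSym p (-3) = legendreSym 3 p := by
  have h2 : p ≠ 2 := by have := h3.out; omega
  have hrec := legendreSym.quadratic_reciprocity' (p := 3) (q := p) (by norm_num) h2
  rw [show (-3 : ℤ) = -1 * (3 : ℕ) by norm_num, legendreSym.mul, legendreSym.at_neg_one h2,
    ZMod.χ₄_eq_neg_one_pow (hp.out.eq_two_or_odd.resolve_left h2), hrec, ← mul_assoc,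
    show 3 / 2 * (p / 2) = p / 2 by omega, ← mul_pow]
  norm_num

lemma legendreSym_three_sq : legendreSym 3 p ^ 2 = 1 := by
  rw [← legendreSym_neg_three]
  refine legendreSym.sq_one p ?_
  have hlt := h3.out
  rw [Ne, ZMod.intCast_zmod_eq_zero_iff_dvd, dvd_neg]
  exact fun h => absurd (Int.le_of_dvd three_pos h) (by omega)

/-- The `p`-adic unit `(-3)^((p-1)/2)` multiplied by its residue `±1` modulo `p`. -/
def signedNegThreePow (p : ℕ) : ℚ := legendreSym 3 p * (-3) ^ (p / 2)

lemma hasLog_signedNegThreePow : HasLog p (signedNegThreePow p)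
    (p * (-1 / 3 * harmonic (p / 3)) + p ^ 2 * (-1 / 9 * harmonicSq (p / 3))) := by
  have hcong : (p : ℤ) ∣ legendreSym 3 p * (-3) ^ (p / 2) - 1 := by
    have heuler := legendreSym.eq_pow p (-3)
    rw [legendreSym_neg_three] at heuler
    rw [← ZMod.intCast_zmod_eq_zero_iff_dvd, ← legendreSym_three_sq (p := p)]
    push_cast at heuler ⊢
    rw [← heuler]
    ring
  have hone : PDvd p 1 (signedNegThreePow p - 1) :=
    (pDvd_intCast_iff.2 (by simpa using hcong)).congr (by push_cast [signedNegThreePow]; ring)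
  have hsq : (3 : ℚ) ^ (p - 1) = signedNegThreePow p ^ 2 := by
    have h := odd_of_three_lt (p := p)
    rw [signedNegThreePow, mul_pow, ← pow_mul, mul_comm (p / 2), pow_mul,
      ← Int.cast_pow, legendreSym_three_sq, show p - 1 = 2 * (p / 2) by omega, pow_mul]
    norm_num
  exact ((hasLog_three_pow.congr hsq rfl).sqrt hone).congr rfl (by ring)

/-- The unit `(1 + p)_n / (1 - p)_n` with `n = (p - 1) / 2`. -/
def halfUnit (p : ℕ) : ℚ := risingRatio p (p / 2) (-1) / risingRatio p (p / 2) 1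

lemma hasLog_halfUnit : HasLog p (halfUnit p) (p * (2 * harmonic (p / 2))) :=
  ((hasLog_risingRatio_half (neg_mem (one_mem _))).div (hasLog_risingRatio_half (one_mem _))).congr
    rfl (by ring)

lemma sumK_nodeA_eq : sumK (nodeA (p / 2)) (p / 2 + 1) =
    -p / 3 * ((-1) ^ (p / 2) * halfUnit p) := by
  have h := sumK_nodeA_eq_risingRatio (odd_of_three_lt (p := p))
  have hne := (hasLog_risingRatio_half (one_mem (pInt p))).ne_zero
  rw [halfUnit, mul_div_assoc', mul_div_assoc', eq_div_iff hne, h]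

lemma cast_eq_two_mul_half_add_one : (2 * (p / 2 : ℕ) + 1 : ℚ) = p := by
  exact_mod_cast (odd_of_three_lt (p := p)).symm

lemma sumK_nodeB_eq : sumK (nodeB (p / 2)) (p / 2 + 1) =
    2 * p / 3 * ((-1) ^ (p / 2) * (halfUnit p)⁻¹) := by
  have h := sumK_nodeA_mul_sumK_nodeB (p / 2)
  have hp0 := p_ne_zero (p := p)
  have hU := (hasLog_halfUnit (p := p)).ne_zero
  have hsgn := neg_one_pow_mul_self (p / 2)
  rw [sumK_nodeA_eq, cast_eq_two_mul_half_add_one] at h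
  have hA : (-p / 3 * ((-1) ^ (p / 2) * halfUnit p) : ℚ) ≠ 0 :=
    mul_ne_zero (div_ne_zero (neg_ne_zero.2 hp0) three_ne_zero)
      (mul_ne_zero (pow_ne_zero _ (by norm_num)) hU)
  refine mul_left_cancel₀ hA (h.trans ?_)
  field_simp
  linear_combination 9 * hsgn

lemma sumK_nodeC_eq_zero : sumK (nodeC (p / 2)) (p / 2 + 1) = 0 := by
  rcases mod_six_eq (p := p) with h | h
  · rw [show p / 2 = 3 * (p / 6) by omega]
    exact (sumK_sumW_nodeC_three_mul _).1
  · rw [show p / 2 = 3 * (p / 6) + 2 by omega]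
    exact (sumF_sumK_nodeC_three_mul_add_two _).2

lemma sumK_zero_pModEq : PModEq p 3 (sumK 0 (p / 2 + 1)) ((-1) ^ (p / 2) * p / 6) := by
  have hn := odd_of_three_lt (p := p)
  have hH : harmonic (p / 2) ∈ pInt p := harmonic_mem_pInt (by have := h3.out; omega)
  have hsgn : (-1 : ℚ) ^ (p / 2) * (1 / 12) ∈ pInt p :=
    mul_mem (pow_mem (neg_mem (one_mem _)) _) (mem_pInt_of_six_pow_mul_eq 2 3 (by norm_num))
  have hu : 2 * harmonic (p / 2) ∈ pInt p := mul_mem (ofNat_mem _ 2) hH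
  have hU := (hasLog_halfUnit (p := p)).congr (β := p * (2 * harmonic (p / 2)) + p ^ 2 * 0)
    rfl (by ring)
  have hUinv := hU.inv.congr (β := p * -(2 * harmonic (p / 2)) + p ^ 2 * 0) rfl (by ring)
  have hself := HasJet.self (p := p) (t := p)
  have hpU : PModEq p 3 (p * (halfUnit p + (halfUnit p)⁻¹)) (p * 2) :=
    (hself.mul .prime ((hU.hasJet hu (zero_mem _)).add
      (hUinv.hasJet (neg_mem hu) (zero_mem _)))).pModEq_of_eq
      (hself.mul .prime (.const (ofNat_mem _ 2))) (by ring) (by ring) (by ring)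
  have hinterp := IsQuadratic.interpolate_three hn (G := fun e => sumK e (p / 2 + 1))
    (isQuadratic_sumK hn)
  rw [sumK_nodeA_eq, sumK_nodeB_eq, sumK_nodeC_eq_zero] at hinterp
  exact .of_sub_eq (PDvd.add hinterp (PDvd.const_mul hpU hsgn)) (by ring)

end NodeValues

section NodeUnits

variable {p : ℕ}

lemma factorial_mul_ascPochhammer_mul {k N m : ℕ} (h : p = k + N + m + 1) (x : ℚ) :
    (ascPochhammer ℚ N).eval (1 - x * p + k) * (k.factorial * risingRatio p k x) *
        (m.factorial * risingRatio p m (1 - x)) =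
      (-1) ^ m * ((p - 1).factorial * risingRatio p (p - 1) x) := by
  have hp : (p : ℚ) = k + N + m + 1 := by exact_mod_cast h
  have hsgn := neg_one_pow_mul_self m
  rw [← ascPochhammer_eval_one_sub rfl, ← ascPochhammer_eval_one_sub rfl,
    ← ascPochhammer_eval_one_sub rfl, show p - 1 = k + N + m by omega, ascPochhammer_eval_add,
    ascPochhammer_eval_add, ascPochhammer_eval_reflect (z := 1 - x * p + (k + N : ℕ))
      (w := 1 - (1 - x) * p) m (by push_cast; rw [hp]; ring)]
  linear_combination (-(ascPochhammer ℚ k).eval (1 - x * p) *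
    (ascPochhammer ℚ N).eval (1 - x * p + k) *
      (ascPochhammer ℚ m).eval (1 - (1 - x) * p)) * hsgn

/-- The binomial coefficient `C((p-1)/2, ⌊p/6⌋)`. -/
def sixthChoose (p : ℕ) : ℚ := (p / 2).choose (p / 6)

lemma sixthChoose_mul_factorial (h : p % 6 = 1) :
    sixthChoose p * (p / 3).factorial * (p / 6).factorial = (p / 2).factorial := by
  rw [sixthChoose, show p / 2 = p / 3 + p / 6 by omega]
  exact_mod_cast Nat.add_choose_mul_factorial_mul_factorial _ _

variable [hp : Fact p.Prime] [h3 : Fact (3 < p)]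

lemma sumF_nodeA_mul_sumW_nodeA : sumF (nodeA (p / 2)) (p / 2 + 1) *
    sumW (nodeA (p / 2)) (p / 2 + 1) = 2 / 9 * p ^ 2 * halfUnit p ^ 2 := by
  have hsgn := neg_one_pow_mul_self (p / 2)
  rw [sumF_mul_sumW_nodeA, sumK_nodeA_eq]
  linear_combination 2 / 9 * p ^ 2 * halfUnit p ^ 2 * hsgn

lemma sumF_nodeA_eq_halfUnit_mul : sumF (nodeA (p / 2)) (p / 2 + 1) =
    halfUnit p ^ 2 * sumF (nodeB (p / 2)) (p / 2 + 1) := by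
  have hBA := sumF_nodeB_mul_sumW_nodeA (p / 2)
  have hAA := sumF_nodeA_mul_sumW_nodeA (p := p)
  have hp0 := p_ne_zero (p := p)
  rw [cast_eq_two_mul_half_add_one] at hBA
  refine mul_right_cancel₀ (right_ne_zero_of_mul (hBA.trans_ne (by positivity))) ?_
  rw [hAA, mul_assoc (halfUnit p ^ 2), hBA, mul_comm]

lemma sumW_nodeA_eq_halfUnit_mul : sumW (nodeA (p / 2)) (p / 2 + 1) =
    halfUnit p ^ 2 * sumW (nodeB (p / 2)) (p / 2 + 1) := by
  have hAB := sumF_nodeA_mul_sumW_nodeB (p / 2)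
  have hAA := sumF_nodeA_mul_sumW_nodeA (p := p)
  have hp0 := p_ne_zero (p := p)
  rw [cast_eq_two_mul_half_add_one] at hAB
  refine mul_left_cancel₀ (left_ne_zero_of_mul (hAB.trans_ne (by positivity))) ?_
  rw [hAA, mul_left_comm, hAB, mul_comm]

lemma norm_sixthChoose : padicNorm p (sixthChoose p) = 1 := by
  have hlt := h3.out
  refine (padicNorm.nat_eq_one_iff _).2 fun hdvd => ?_
  have hfac : p ∣ (p / 2).factorial := by
    rw [← Nat.choose_mul_factorial_mul_factorial (by omega : p / 6 ≤ p / 2), mul_assoc]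
    exact hdvd.mul_right _
  exact absurd (hp.out.dvd_factorial.1 hfac) (by omega)

/-- The unit `(1 - p/3)_{p-1} / (p-1)!` divided by the analogous units for the partial rising
factorials of lengths `⌊p/6⌋` and `⌊p/3⌋`. -/
def thirdUnit (p : ℕ) : ℚ := risingRatio p (p - 1) (1 / 3) /
  (risingRatio p (p / 6) (2 / 3) * risingRatio p (p / 3) (1 / 3))

lemma hasLog_thirdUnit : HasLog p (thirdUnit p)
    (p * (2 / 3 * harmonic (p / 2) + harmonic (p / 3)) + p ^ 2 * (5 / 6 * harmonicSq (p / 3))) := by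
  have hx : (1 / 3 : ℚ) ∈ pInt p := mem_pInt_of_six_pow_mul_eq 1 2 (by norm_num)
  have hx' : (2 / 3 : ℚ) ∈ pInt p := mem_pInt_of_six_pow_mul_eq 1 4 (by norm_num)
  exact ((hasLog_risingRatio_pred hx).div ((hasLog_risingRatio_sixth hx').mul
    (hasLog_risingRatio_third hx))).congr rfl (by ring)

/-- The unit factor of the value at `nodeA` besides the square of the binomial coefficient. -/
def nodeUnit (p : ℕ) : ℚ := signedNegThreePow p ^ 3 * thirdUnit p ^ 2

lemma hasLog_nodeUnit : HasLog p (nodeUnit p)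
    (p * (4 / 3 * harmonic (p / 2) + harmonic (p / 3)) + p ^ 2 * (4 / 3 * harmonicSq (p / 3))) :=
  ((hasLog_signedNegThreePow.pow 3).mul (hasLog_thirdUnit.pow 2)).congr rfl (by push_cast; ring)

lemma three_pow_eq_signedNegThreePow : (3 : ℚ) ^ (3 * (p / 2)) =
    legendreSym 3 p * (-1) ^ (p / 2) * signedNegThreePow p ^ 3 := by
  have hε : ((legendreSym 3 p : ℤ) : ℚ) ^ 2 = 1 := by exact_mod_cast legendreSym_three_sq (p := p)
  have hsgn := neg_one_pow_mul_self (p / 2)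
  set s : ℚ := (-1) ^ (p / 2)
  set ε : ℚ := ((legendreSym 3 p : ℤ) : ℚ)
  have hpow : (-3 : ℚ) ^ (p / 2) = s * 3 ^ (p / 2) := by rw [← mul_pow]; norm_num
  rw [signedNegThreePow, hpow, mul_comm 3, pow_mul]
  linear_combination (-(3 ^ (p / 2)) ^ 3 * (1 + ε ^ 2)) * hε -
    (3 ^ (p / 2)) ^ 3 * ε ^ 4 * (1 + s * s) * hsgn

lemma ascPochhammer_two_thirds_eq (h : p % 3 = 1) :
    (ascPochhammer ℚ (p / 2)).eval (2 / 3) * (p / 2).factorial / (2 * (p / 2)).factorial =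
      (-1) ^ (p / 6) * (sixthChoose p * thirdUnit p) := by
  have hmod := mod_six_eq (p := p)
  have hx : (1 / 3 : ℚ) ∈ pInt p := mem_pInt_of_six_pow_mul_eq 1 2 (by norm_num)
  have hx' : (2 / 3 : ℚ) ∈ pInt p := mem_pInt_of_six_pow_mul_eq 1 4 (by norm_num)
  have hP := (hasLog_risingRatio_sixth hx').ne_zero
  have hP' := (hasLog_risingRatio_third hx).ne_zero
  have hpk : (p : ℚ) = 3 * (p / 3 : ℕ) + 1 := by exact_mod_cast (by omega : p = 3 * (p / 3) + 1)
  have hchoose := sixthChoose_mul_factorial (p := p) (by omega)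
  have hsplit := factorial_mul_ascPochhammer_mul (p := p) (k := p / 3) (N := p / 2) (m := p / 6)
    (by omega) (1 / 3)
  have hpred := cast_factorial_ne_zero (p - 1)
  rw [show 1 - 1 / 3 * (p : ℚ) + (p / 3 : ℕ) = 2 / 3 by linear_combination -hpk / 3,
    show (1 : ℚ) - 1 / 3 = 2 / 3 by norm_num] at hsplit
  rw [show 2 * (p / 2) = p - 1 by omega, ← hchoose, thirdUnit]
  field_simp
  linear_combination sixthChoose p * hsplit

lemma ascPochhammer_four_thirds_eq (h : p % 3 = 2) :
    (ascPochhammer ℚ (p / 2)).eval (4 / 3) * (p / 2).factorial / (2 * (p / 2)).factorial =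
      (-1) ^ (p / 6) * (sixthChoose p * (p + 1) * thirdUnit p) := by
  have hmod := mod_six_eq (p := p)
  have hx : (1 / 3 : ℚ) ∈ pInt p := mem_pInt_of_six_pow_mul_eq 1 2 (by norm_num)
  have hx' : (2 / 3 : ℚ) ∈ pInt p := mem_pInt_of_six_pow_mul_eq 1 4 (by norm_num)
  have hP := (hasLog_risingRatio_sixth hx').ne_zero
  have hP' := (hasLog_risingRatio_third hx).ne_zero
  have hpk : (p : ℚ) = 3 * (p / 3 : ℕ) + 2 := by exact_mod_cast (by omega : p = 3 * (p / 3) + 2)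
  have hchoose : sixthChoose p * ((p + 1) * (p / 3).factorial) * (p / 6).factorial =
      3 * (p / 2).factorial := by
    rw [sixthChoose, show p / 2 = p / 3 + 1 + p / 6 by omega,
      ← Nat.add_choose_mul_factorial_mul_factorial, Nat.factorial_succ]
    push_cast
    rw [hpk]
    ring
  have hsplit := factorial_mul_ascPochhammer_mul (p := p) (k := p / 3) (N := 1 + p / 2)
    (m := p / 6) (by omega) (1 / 3)
  have hpred := cast_factorial_ne_zero (p - 1)
  rw [show 1 - 1 / 3 * (p : ℚ) + (p / 3 : ℕ) = 1 / 3 by linear_combination -hpk / 3,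
    show (1 : ℚ) - 1 / 3 = 2 / 3 by norm_num, ascPochhammer_eval_add, ascPochhammer_one,
    Polynomial.eval_X, show (1 : ℚ) / 3 + (1 : ℕ) = 4 / 3 by norm_num] at hsplit
  rw [show 2 * (p / 2) = p - 1 by omega,
    show ((p / 2).factorial : ℚ) =
      sixthChoose p * ((p + 1) * (p / 3).factorial) * (p / 6).factorial / 3 by
      rw [hchoose]; ring, thirdUnit]
  field_simp
  linear_combination 3 * sixthChoose p * hsplit

lemma sumF_nodeA_eq (h : p % 3 = 1) : sumF (nodeA (p / 2)) (p / 2 + 1) =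
    (-1) ^ (p / 2) * (sixthChoose p ^ 2 * nodeUnit p) := by
  rw [sumF_nodeA_eq_ascPochhammer, ascPochhammer_two_thirds_eq h, three_pow_eq_signedNegThreePow,
    legendreSym_three_eq_one h, nodeUnit]
  have hsgn := neg_one_pow_mul_self (p / 6)
  push_cast
  linear_combination (-1) ^ (p / 2) * (sixthChoose p ^ 2 *
    (signedNegThreePow p ^ 3 * thirdUnit p ^ 2)) * hsgn

lemma sumW_nodeA_eq (h : p % 3 = 2) : sumW (nodeA (p / 2)) (p / 2 + 1) =
    (-1) ^ (p / 2) * (-(2 / 9) * ((sixthChoose p * (p + 1)) ^ 2 * nodeUnit p)) := by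
  rw [sumW_nodeA_eq_ascPochhammer, ascPochhammer_four_thirds_eq h, three_pow_eq_signedNegThreePow,
    legendreSym_three_eq_neg_one h, nodeUnit]
  have hsgn := neg_one_pow_mul_self (p / 6)
  push_cast
  linear_combination (-1) ^ (p / 2) * (-(2 / 9) * ((sixthChoose p * (p + 1)) ^ 2 *
    (signedNegThreePow p ^ 3 * thirdUnit p ^ 2))) * hsgn

lemma signed_centralSum_three_pModEq : PModEq p 3 ((-1) ^ (p / 2) * centralSum 3 p)
    ((-1) ^ (p / 2) * centralSum 2 p / 2 + p / 24) := by
  have hn := odd_of_three_lt (p := p)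
  have hsgn := neg_one_pow_mul_self (p / 2)
  have hfour : (1 / 4 : ℚ) ∈ pInt p := mem_pInt_of_six_pow_mul_eq 2 9 (by norm_num)
  have hK := PDvd.const_mul ((centralSum_one_pModEq hn).trans sumK_zero_pModEq) hfour
  have hsgn_mem : (-1 : ℚ) ^ (p / 2) ∈ pInt p := pow_mem (neg_mem (one_mem _)) _
  refine .of_sub_eq (PDvd.const_mul (PDvd.add centralSum_three_pModEq hK) hsgn_mem) ?_
  linear_combination (p : ℚ) / 24 * hsgn

lemma pDvd_sumF_nodeA_and_sumF_nodeB (h : p % 3 = 2) :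
    PDvd p 2 (sumF (nodeA (p / 2)) (p / 2 + 1)) ∧ PDvd p 2 (sumF (nodeB (p / 2)) (p / 2 + 1)) := by
  have hAA := sumF_nodeA_mul_sumW_nodeA (p := p)
  have hBA := sumF_nodeB_mul_sumW_nodeA (p / 2)
  rw [sumW_nodeA_eq h] at hAA hBA
  rw [cast_eq_two_mul_half_add_one] at hBA
  have hsgn := neg_one_pow_mul_self (p / 2)
  have hsgn_mem : -(-1 : ℚ) ^ (p / 2) ∈ pInt p := neg_mem (pow_mem (neg_mem (one_mem _)) _)
  have hsq : PDvd p 2 ((p : ℚ) * p) := PDvd.prime.mul .prime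
  have hsucc : padicNorm p ((p : ℚ) + 1) = 1 :=
    norm_eq_one_of_pDvd_sub padicNorm.one (PDvd.prime.congr (by ring))
  have hunit : padicNorm p ((sixthChoose p * (p + 1)) ^ 2 * nodeUnit p) = 1 := by
    rw [padicNorm.mul, sq, padicNorm.mul, padicNorm.mul, norm_sixthChoose, hsucc,
      hasLog_nodeUnit.norm_eq_one]
    norm_num
  have hU := pow_mem (hasLog_halfUnit (p := p)).mem 2
  refine ⟨.of_unit_mul hunit ((hsq.mul_const (mul_mem hU hsgn_mem)).congr ?_),
    .of_unit_mul hunit ((hsq.mul_const hsgn_mem).congr ?_)⟩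
  · linear_combination 9 / 2 * (-1) ^ (p / 2) * hAA + sumF (nodeA (p / 2)) (p / 2 + 1) *
      ((sixthChoose p * (p + 1)) ^ 2 * nodeUnit p) * hsgn
  · linear_combination 9 / 2 * (-1) ^ (p / 2) * hBA + sumF (nodeB (p / 2)) (p / 2 + 1) *
      ((sixthChoose p * (p + 1)) ^ 2 * nodeUnit p) * hsgn

lemma nodeUnit_mul_pModEq : PModEq p 2 ((p + 1) ^ 2 * (nodeUnit p * (1 + (halfUnit p ^ 2)⁻¹)))
    (2 * (1 + 2 * p + 4 / 3 * (2 ^ (p - 1) - 1) - 3 / 2 * (3 ^ (p - 1) - 1))) := by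
  have hlt := h3.out
  have ha : harmonic (p / 2) ∈ pInt p := harmonic_mem_pInt (by omega)
  have hb : harmonic (p / 3) ∈ pInt p := harmonic_mem_pInt (by omega)
  have hc : harmonicSq (p / 3) ∈ pInt p := harmonicSq_mem_pInt (by omega)
  have hconst (r : ℚ) (z : ℤ) (hr : 6 ^ 2 * r = z) : r ∈ pInt p := mem_pInt_of_six_pow_mul_eq 2 z hr
  have hfour := hconst (4 / 3) 48 (by norm_num)
  have hthree := hconst (3 / 2) 54 (by norm_num)
  have hE := (hasLog_nodeUnit (p := p)).hasJet (add_mem (mul_mem hfour ha) hb) (mul_mem hfour hc)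
  have hU := ((hasLog_halfUnit (p := p)).pow 2).inv.congr rfl
    (show _ = p * (-4 * harmonic (p / 2)) + p ^ 2 * 0 by push_cast; ring)
  have htwo := (hasLog_two_pow (p := p)).congr rfl
    (show _ = p * (-(1 / 2) * harmonic (p / 2)) + p ^ 2 * 0 by ring)
  have hUjet := hU.hasJet (mul_mem (hconst (-4) (-144) (by norm_num)) ha) (zero_mem _)
  have htwoJet := htwo.hasJet (mul_mem (hconst (-(1 / 2)) (-18) (by norm_num)) ha) (zero_mem _)
  have hthreeJet := (hasLog_three_pow (p := p)).hasJet
    (mul_mem (hconst (-2 / 3) (-24) (by norm_num)) hb)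
    (mul_mem (hconst (-2 / 9) (-8) (by norm_num)) hc)
  have hself := HasJet.self (p := p) (t := p)
  have hone := HasJet.const (p := p) (t := p) (one_mem _)
  have hlhs := HasJet.mul .prime (HasJet.mul .prime (hself.add hone) (hself.add hone))
    (HasJet.mul .prime hE (hone.add hUjet))
  have hneg := HasJet.const (p := p) (t := p) (neg_mem (one_mem _))
  have hrhs := HasJet.mul .prime (HasJet.const (ofNat_mem _ 2)) (((hone.add
    (HasJet.mul .prime (.const (ofNat_mem _ 2)) hself)).add
      (HasJet.mul .prime (.const hfour) (htwoJet.add hneg))).add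
        (HasJet.mul .prime (.const (neg_mem hthree)) (hthreeJet.add hneg)))
  exact .of_sub_eq (hlhs.pModEq_two_of_eq .prime hrhs (by ring) (by ring)) (by ring)

theorem signed_centralSum_two_of_mod_three_eq_two (h : p % 3 = 2) :
    PModEq p 2 ((-1) ^ (p / 2) * centralSum 2 p) (-(2 / 9) * R3 p) := by
  have hn := odd_of_three_lt (p := p)
  have hsgn := neg_one_pow_mul_self (p / 2)
  have hsgn_mem : (-1 : ℚ) ^ (p / 2) ∈ pInt p := pow_mem (neg_mem (one_mem _)) _
  have hU := (hasLog_halfUnit (p := p)).ne_zero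
  obtain ⟨hFA, hFB⟩ := pDvd_sumF_nodeA_and_sumF_nodeB h
  have hF := PDvd.add ((isQuadratic_sumF hn).interpolate_two hn (G := fun e => sumF e (p / 2 + 1)))
    ((hFB.add hFA).mul_const inv_two_mem_pInt)
  have hW := (isQuadratic_sumW hn).interpolate_two hn (G := fun e => sumW e (p / 2 + 1))
  have hWB : sumW (nodeB (p / 2)) (p / 2 + 1) =
      (halfUnit p ^ 2)⁻¹ * sumW (nodeA (p / 2)) (p / 2 + 1) := by
    rw [sumW_nodeA_eq_halfUnit_mul, inv_mul_cancel_left₀ (pow_ne_zero 2 hU)]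
  rw [hWB, sumW_nodeA_eq h] at hW
  have hsum := PDvd.add ((centralSum_two_pModEq hn).mono (by norm_num)) (PDvd.add
    (hF.const_mul (mem_pInt_of_six_pow_mul_eq 2 1 (by norm_num) : (1 / 36 : ℚ) ∈ pInt p)) hW)
  have hβ : -(1 / 9) * sixthChoose p ^ 2 ∈ pInt p :=
    mul_mem (mem_pInt_of_six_pow_mul_eq 2 (-4) (by norm_num)) (pow_mem (natCast_mem _ _) 2)
  refine .of_sub_eq (PDvd.add (PDvd.const_mul hsum hsgn_mem)
    (PDvd.const_mul nodeUnit_mul_pModEq hβ)) ?_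
  rw [R3, sixthChoose, show (p - 1) / 2 = p / 2 by omega]
  linear_combination -1 / 9 * (((p / 2).choose (p / 6) * (p + 1)) ^ 2 *
    (nodeUnit p * (1 + (halfUnit p ^ 2)⁻¹)) : ℚ) * hsgn

theorem signed_centralSum_three_of_mod_three_eq_two (h : p % 3 = 2) :
    PModEq p 2 ((-1) ^ (p / 2) * centralSum 3 p) (-(1 / 9) * R3 p + p / 24) := by
  have htwo := (signed_centralSum_two_of_mod_three_eq_two h).const_mul inv_two_mem_pInt
  exact (signed_centralSum_three_pModEq.mono (by norm_num)).trans (.of_sub_eq htwo (by ring))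

end NodeUnits

section ThirdNodeRatio

variable {p : ℕ}

lemma sumF_nodeC_eq_ascPochhammer (m : ℕ) : sumF (nodeC (3 * m)) (3 * m + 1) =
    (27 / 16) ^ m *
      ((ascPochhammer ℚ m).eval (1 / 3) / (ascPochhammer ℚ m).eval (1 / 6)) ^ 2 := by
  rw [sumF_nodeC_three_mul, prod_mul_distrib, prod_const, card_range, prod_pow, prod_div_distrib,
    prod_range_mul_add three_ne_zero, prod_range_mul_add (by norm_num : (6 : ℚ) ≠ 0),
    mul_div_mul_comm, ← div_pow, mul_pow, ← mul_assoc, pow_right_comm, ← mul_pow]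
  norm_num

lemma factorial_pred_mul_factorial_third (h : p % 6 = 1) :
    ((p - 1).factorial : ℚ) * (p / 3).factorial = (-1) ^ (p / 2) * 4 ^ (p / 2) * 2 ^ (p / 3) *
      ((p / 2).factorial * (p / 6).factorial * (2 * p / 3).factorial *
        risingRatio p (2 * p / 3) (1 / 2)) := by
  have hhalf := factorial_pred_mul_risingRatio_half (p := p) (n := p / 2) (by omega) 0
  have hsixth := factorial_mul_risingRatio_sixth (.inl h) 0
  simp only [risingRatio_zero, zero_div, one_mul, mul_one, sub_zero, add_zero] at hhalf hsixth
  rw [hhalf]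
  linear_combination (-1) ^ (p / 2) * 4 ^ (p / 2) * (p / 2).factorial * hsixth

variable [hp : Fact p.Prime] [h3 : Fact (3 < p)]

/-- The unit factor of the value at `nodeC` besides the square of the binomial coefficient. -/
def nodeUnitC (p : ℕ) : ℚ := signedNegThreePow p * (2 ^ (p - 1) *
  (risingRatio p (2 * p / 3) (1 / 2) * risingRatio p (p - 1) (2 / 3) /
    (risingRatio p (p / 6) (1 / 3) * risingRatio p (2 * p / 3) (2 / 3) *
      risingRatio p (p / 6) (1 / 6)))) ^ 2

lemma hasLog_nodeUnitC : HasLog p (nodeUnitC p)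
    (p * harmonic (p / 3) + p ^ 2 * (2 / 9 * harmonicSq (p / 3))) := by
  have h2 : (1 / 2 : ℚ) ∈ pInt p := mem_pInt_of_six_pow_mul_eq 1 3 (by norm_num)
  have h3 : (1 / 3 : ℚ) ∈ pInt p := mem_pInt_of_six_pow_mul_eq 1 2 (by norm_num)
  have h3' : (2 / 3 : ℚ) ∈ pInt p := mem_pInt_of_six_pow_mul_eq 1 4 (by norm_num)
  exact (hasLog_signedNegThreePow.mul ((hasLog_two_pow.mul
    (((hasLog_risingRatio_two_thirds h2).mul (hasLog_risingRatio_pred h3')).div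
      (((hasLog_risingRatio_sixth h3).mul (hasLog_risingRatio_two_thirds h3')).mul
        (hasLog_risingRatio_sixth inv_six_mem_pInt)))).pow 2)).congr rfl (by push_cast; ring)

lemma ascPochhammer_third_div_sixth (h : p % 6 = 1) :
    (ascPochhammer ℚ (p / 6)).eval (1 / 3) / (ascPochhammer ℚ (p / 6)).eval (1 / 6) =
      (-1) ^ (p / 2) * 4 ^ (p / 2) * 2 ^ (p / 3) * (sixthChoose p *
        (risingRatio p (2 * p / 3) (1 / 2) * risingRatio p (p - 1) (2 / 3) /
          (risingRatio p (p / 6) (1 / 3) * risingRatio p (2 * p / 3) (2 / 3) *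
            risingRatio p (p / 6) (1 / 6)))) := by
  have h3 : (1 / 3 : ℚ) ∈ pInt p := mem_pInt_of_six_pow_mul_eq 1 2 (by norm_num)
  have h3' : (2 / 3 : ℚ) ∈ pInt p := mem_pInt_of_six_pow_mul_eq 1 4 (by norm_num)
  have hP₁ := (hasLog_risingRatio_sixth h3).ne_zero
  have hP₂ := (hasLog_risingRatio_two_thirds h3').ne_zero
  have hP₃ := (hasLog_risingRatio_sixth (inv_six_mem_pInt (p := p))).ne_zero
  have hpm : (p : ℚ) = 6 * (p / 6 : ℕ) + 1 := by exact_mod_cast (by omega : p = 6 * (p / 6) + 1)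
  have hpl : ((2 * p / 3 : ℕ) : ℚ) = 4 * (p / 6 : ℕ) := by
    exact_mod_cast (by omega : 2 * p / 3 = 4 * (p / 6))
  have hsplit := factorial_mul_ascPochhammer_mul (p := p) (k := 2 * p / 3) (N := p / 6)
    (m := p / 6) (by omega) (2 / 3)
  rw [show 1 - 2 / 3 * (p : ℚ) + (2 * p / 3 : ℕ) = 1 / 3 by rw [hpl, hpm]; ring,
    show (1 : ℚ) - 2 / 3 = 1 / 3 by norm_num] at hsplit
  have hsixth := ascPochhammer_eval_reflect (z := (1 / 6 : ℚ)) (w := 1 - 1 / 6 * p) (p / 6)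
    (by rw [hpm]; ring)
  rw [ascPochhammer_eval_one_sub rfl] at hsixth
  have hfac : ((p - 1).factorial : ℚ) = (-1) ^ (p / 2) * 4 ^ (p / 2) * 2 ^ (p / 3) *
      (sixthChoose p * (p / 6).factorial ^ 2 * (2 * p / 3).factorial *
        risingRatio p (2 * p / 3) (1 / 2)) := by
    refine mul_right_cancel₀ (Nat.cast_ne_zero.2 (p / 3).factorial_ne_zero) ?_
    rw [factorial_pred_mul_factorial_third h]
    linear_combination (-(-1) ^ (p / 2) * 4 ^ (p / 2) * 2 ^ (p / 3) * (p / 6).factorial *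
      (2 * p / 3).factorial * risingRatio p (2 * p / 3) (1 / 2)) *
        sixthChoose_mul_factorial h
  have hm : ((p / 6).factorial : ℚ) ≠ 0 := Nat.cast_ne_zero.2 (p / 6).factorial_ne_zero
  have hl : ((2 * p / 3).factorial : ℚ) ≠ 0 := Nat.cast_ne_zero.2 (2 * p / 3).factorial_ne_zero
  have hsgn : (-1 : ℚ) ^ (p / 6) ≠ 0 := pow_ne_zero _ (by norm_num)
  rw [hfac] at hsplit
  rw [hsixth, div_eq_iff (mul_ne_zero hsgn (mul_ne_zero hm hP₃))]
  refine mul_right_cancel₀ (mul_ne_zero (mul_ne_zero hl hP₂) (mul_ne_zero hm hP₁)) ?_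
  rw [← mul_assoc, hsplit]
  field_simp

end ThirdNodeRatio

section ThirdNodeUnit

variable {p : ℕ} [hp : Fact p.Prime] [h3 : Fact (3 < p)]

lemma sumF_nodeC_eq (h : p % 3 = 1) : sumF (nodeC (p / 2)) (p / 2 + 1) =
    (-1) ^ (p / 2) * (sixthChoose p ^ 2 * nodeUnitC p) := by
  have hmod := mod_six_eq (p := p)
  have hsgn := neg_one_pow_mul_self (p / 2)
  have hthree : (27 : ℚ) ^ (p / 6) = (-1) ^ (p / 2) * signedNegThreePow p := by
    rw [signedNegThreePow, legendreSym_three_eq_one h, Int.cast_one, one_mul, ← mul_pow,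
      show p / 2 = 3 * (p / 6) by omega, pow_mul]
    norm_num
  have htwo : ((4 : ℚ) ^ (p / 2) * 2 ^ (p / 3)) ^ 2 = 16 ^ (p / 6) * (2 ^ (p - 1)) ^ 2 := by
    rw [show (4 : ℚ) = 2 ^ 2 by norm_num, show (16 : ℚ) = 2 ^ 4 by norm_num]
    simp only [← pow_mul, ← pow_add]
    congr 1
    omega
  have hC := sumF_nodeC_eq_ascPochhammer (p / 6)
  rw [show 3 * (p / 6) = p / 2 by omega, ascPochhammer_third_div_sixth (by omega), div_pow,
    hthree] at hC
  rw [hC, nodeUnitC, div_mul_eq_mul_div, div_eq_iff (by positivity)]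
  set Y := risingRatio p (2 * p / 3) (1 / 2) * risingRatio p (p - 1) (2 / 3) /
    (risingRatio p (p / 6) (1 / 3) * risingRatio p (2 * p / 3) (2 / 3) *
      risingRatio p (p / 6) (1 / 6))
  linear_combination ((-1) ^ (p / 2) * signedNegThreePow p * sixthChoose p ^ 2 * Y ^ 2) * htwo +
    ((-1) ^ (p / 2) * signedNegThreePow p * sixthChoose p ^ 2 * Y ^ 2) *
      ((4 : ℚ) ^ (p / 2) * 2 ^ (p / 3)) ^ 2 * hsgn

lemma nodeUnit_interpolation {ξ : ℚ}
    (hξ : HasLog p ξ (p * (harmonic (p / 3) / 2 - harmonic (p / 2) / 3) +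
      p ^ 2 * (harmonicSq (p / 3) / 24))) :
    PModEq p 3 (1 / 8 * (nodeUnit p * (halfUnit p ^ 2)⁻¹) + -1 / 4 * nodeUnit p +
      9 / 8 * nodeUnitC p) (ξ ^ 2) := by
  have hlt := h3.out
  have ha : harmonic (p / 2) ∈ pInt p := harmonic_mem_pInt (by omega)
  have hb : harmonic (p / 3) ∈ pInt p := harmonic_mem_pInt (by omega)
  have hc : harmonicSq (p / 3) ∈ pInt p := harmonicSq_mem_pInt (by omega)
  have hconst (r : ℚ) (z : ℤ) (hr : 6 ^ 3 * r = z) : r ∈ pInt p := mem_pInt_of_six_pow_mul_eq 3 z hr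
  have hfour := hconst (4 / 3) 288 (by norm_num)
  have hE := (hasLog_nodeUnit (p := p)).hasJet (add_mem (mul_mem hfour ha) hb) (mul_mem hfour hc)
  have hU := (((hasLog_halfUnit (p := p)).pow 2).inv.congr rfl
    (show _ = p * (-4 * harmonic (p / 2)) + p ^ 2 * 0 by push_cast; ring)).hasJet
      (mul_mem (hconst (-4) (-864) (by norm_num)) ha) (zero_mem _)
  have hEC := (hasLog_nodeUnitC (p := p)).hasJet hb
    (mul_mem (hconst (2 / 9) 48 (by norm_num)) hc)
  have hξ' := ((hξ.pow 2).congr rfl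
    (show _ = p * (harmonic (p / 3) + -2 / 3 * harmonic (p / 2)) +
      p ^ 2 * (1 / 12 * harmonicSq (p / 3)) by push_cast; ring)).hasJet
    (add_mem hb (mul_mem (hconst (-2 / 3) (-144) (by norm_num)) ha))
    (mul_mem (hconst (1 / 12) 18 (by norm_num)) hc)
  have hlhs := ((HasJet.mul .prime (.const (hconst (1 / 8) 27 (by norm_num)))
    (HasJet.mul .prime hE hU)).add
      (HasJet.mul .prime (.const (hconst (-1 / 4) (-54) (by norm_num))) hE)).add
        (HasJet.mul .prime (.const (hconst (9 / 8) 243 (by norm_num))) hEC)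
  exact hlhs.pModEq_of_eq hξ' (by ring) (by ring) (by ring)

lemma signed_sumF_zero (h : p % 3 = 1) {ξ : ℚ}
    (hξ : HasLog p ξ (p * (harmonic (p / 3) / 2 - harmonic (p / 2) / 3) +
      p ^ 2 * (harmonicSq (p / 3) / 24))) :
    PModEq p 3 ((-1) ^ (p / 2) * sumF 0 (p / 2 + 1)) ((sixthChoose p * ξ) ^ 2) := by
  have hn := odd_of_three_lt (p := p)
  have hsgn := neg_one_pow_mul_self (p / 2)
  have hU := (hasLog_halfUnit (p := p)).ne_zero
  have hFB : sumF (nodeB (p / 2)) (p / 2 + 1) =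
      (halfUnit p ^ 2)⁻¹ * sumF (nodeA (p / 2)) (p / 2 + 1) := by
    rw [sumF_nodeA_eq_halfUnit_mul, inv_mul_cancel_left₀ (pow_ne_zero 2 hU)]
  have hF := (isQuadratic_sumF hn).interpolate_three hn (G := fun e => sumF e (p / 2 + 1))
  rw [hFB, sumF_nodeA_eq h, sumF_nodeC_eq h] at hF
  refine .of_sub_eq (PDvd.add (PDvd.const_mul hF (pow_mem (neg_mem (one_mem _)) (p / 2)))
    ((nodeUnit_interpolation hξ).const_mul
      (pow_mem (mem_pInt_of_norm_eq_one norm_sixthChoose) 2))) ?_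
  linear_combination (-sixthChoose p ^ 2) * (-1 / 8 * (nodeUnit p * (halfUnit p ^ 2)⁻¹) +
    1 / 4 * nodeUnit p - 9 / 8 * nodeUnitC p) * hsgn

lemma sumW_nodeB_eq (h : p % 3 = 1) : sumW (nodeB (p / 2)) (p / 2 + 1) =
    (-1) ^ (p / 2) * (2 / 9 * p ^ 2 * (sixthChoose p ^ 2)⁻¹ * (nodeUnit p)⁻¹) := by
  have hsgn := neg_one_pow_mul_self (p / 2)
  have hAB := sumF_nodeA_mul_sumW_nodeB (p / 2)
  have hβ := ne_zero_of_norm_eq_one (norm_sixthChoose (p := p))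
  have hE := (hasLog_nodeUnit (p := p)).ne_zero
  rw [cast_eq_two_mul_half_add_one, sumF_nodeA_eq h] at hAB
  field_simp
  linear_combination 9 * (-1) ^ (p / 2) * hAB -
    9 * sixthChoose p ^ 2 * nodeUnit p * sumW (nodeB (p / 2)) (p / 2 + 1) * hsgn

lemma signed_sumW_zero (h : p % 3 = 1) :
    PModEq p 3 ((-1) ^ (p / 2) * sumW 0 (p / 2 + 1)) (-(p ^ 2 / (36 * sixthChoose p ^ 2))) := by
  have hn := odd_of_three_lt (p := p)
  have hsgn := neg_one_pow_mul_self (p / 2)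
  have hβ := norm_sixthChoose (p := p)
  have hE := (hasLog_nodeUnit (p := p)).inv
  have hUE := ((hasLog_halfUnit (p := p)).pow 2).mul hE
  have hconst (r : ℚ) (z : ℤ) (hr : 6 ^ 3 * r = z) : r ∈ pInt p := mem_pInt_of_six_pow_mul_eq 3 z hr
  have hW := (isQuadratic_sumW hn).interpolate_three hn (G := fun e => sumW e (p / 2 + 1))
  have hWC : sumW (nodeC (p / 2)) (p / 2 + 1) = 0 := by
    rw [show p / 2 = 3 * (p / 6) by omega]
    exact (sumK_sumW_nodeC_three_mul _).2
  rw [hWC, sumW_nodeA_eq_halfUnit_mul, sumW_nodeB_eq h] at hW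
  have hunits : PDvd p 1 ((nodeUnit p)⁻¹ / 8 - halfUnit p ^ 2 * (nodeUnit p)⁻¹ / 4 + 1 / 8) :=
    PDvd.congr ((hE.pDvd_sub_one.const_mul (hconst (1 / 8) 27 (by norm_num))).add
      (hUE.pDvd_sub_one.const_mul (hconst (-1 / 4) (-54) (by norm_num)))) (by ring)
  have hcube := ((PDvd.prime.mul PDvd.prime).mul hunits).const_mul
    (mul_mem (hconst (2 / 9) 48 (by norm_num))
      (pow_mem (inv_mem_pInt_of_norm_eq_one hβ) 2))
  refine .of_sub_eq (PDvd.add (PDvd.const_mul hW (pow_mem (neg_mem (one_mem _)) (p / 2)))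
    hcube) ?_
  linear_combination 2 / 9 * p ^ 2 * (sixthChoose p ^ 2)⁻¹ *
    ((nodeUnit p)⁻¹ / 8 - halfUnit p ^ 2 * (nodeUnit p)⁻¹ / 4) * hsgn

end ThirdNodeUnit

/-! ### A Jacobi sum modulo `p ^ 3` -/

section Teichmuller

variable {p r : ℕ}

lemma natCast_pow_eq_zero : (p : ZMod (p ^ r)) ^ r = 0 := by
  exact_mod_cast ZMod.natCast_self (p ^ r)

variable [hp : Fact p.Prime] [NeZero r]

/-- Reduction modulo `p` on `ℤ/p^r`. -/
def reduction (p r : ℕ) [NeZero r] : ZMod (p ^ r) →+* ZMod p :=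
  ZMod.castHom (dvd_pow_self p (NeZero.ne r)) (ZMod p)

lemma isUnit_of_reduction_ne_zero {x : ZMod (p ^ r)} (h : reduction p r x ≠ 0) : IsUnit x := by
  have : NeZero (p ^ r) := ⟨pow_ne_zero _ hp.out.ne_zero⟩
  rw [← ZMod.natCast_zmod_val x] at h ⊢
  rw [map_natCast, Ne, ZMod.natCast_eq_zero_iff] at h
  exact (ZMod.isUnit_iff_coprime _ _).2 ((hp.out.coprime_iff_not_dvd.2 h).symm.pow_right r)

lemma prime_dvd_of_reduction_eq_zero {x : ZMod (p ^ r)} (h : reduction p r x = 0) :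
    (p : ZMod (p ^ r)) ∣ x := by
  have : NeZero (p ^ r) := ⟨pow_ne_zero _ hp.out.ne_zero⟩
  rw [← ZMod.natCast_zmod_val x] at h ⊢
  rw [map_natCast, ZMod.natCast_eq_zero_iff] at h
  exact Nat.cast_dvd_cast h

lemma pow_eq_pow_of_reduction_eq {x y : ZMod (p ^ r)} (h : reduction p r x = reduction p r y) :
    x ^ p ^ (r - 1) = y ^ p ^ (r - 1) := by
  have hdvd := dvd_sub_pow_of_dvd_sub (prime_dvd_of_reduction_eq_zero
    (x := x - y) (by rw [map_sub, h, sub_self])) (r - 1)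
  rw [Nat.sub_add_cancel NeZero.one_le, natCast_pow_eq_zero, zero_dvd_iff] at hdvd
  exact sub_eq_zero.1 hdvd

lemma pow_eq_val_pow {a : ZMod p} {x : ZMod (p ^ r)} (h : reduction p r x = a) :
    (a.val : ZMod (p ^ r)) ^ p ^ (r - 1) = x ^ p ^ (r - 1) :=
  pow_eq_pow_of_reduction_eq (by rw [h, map_natCast, ZMod.natCast_zmod_val])

/-- The Teichmüller character with values modulo `p^r`: the multiplicative section of the
reduction, obtained by raising any lift to the power `p^(r-1)`. -/
def teichmuller (p r : ℕ) [hp : Fact p.Prime] [NeZero r] : MulChar (ZMod p) (ZMod (p ^ r)) where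
  toFun a := (a.val : ZMod (p ^ r)) ^ p ^ (r - 1)
  map_one' := by rw [pow_eq_val_pow (map_one _), one_pow]
  map_mul' a b := by
    rw [← mul_pow]
    exact pow_eq_val_pow (by simp only [map_mul, map_natCast, ZMod.natCast_zmod_val])
  map_nonunit' a ha := by
    rw [isUnit_iff_ne_zero, not_not] at ha
    rw [ha, ZMod.val_zero, Nat.cast_zero, zero_pow (pow_ne_zero _ hp.out.ne_zero)]

lemma teichmuller_eq_pow {a : ZMod p} {x : ZMod (p ^ r)} (h : reduction p r x = a) :
    teichmuller p r a = x ^ p ^ (r - 1) := pow_eq_val_pow h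

lemma reduction_teichmuller (a : ZMod p) : reduction p r (teichmuller p r a) = a := by
  change reduction p r ((a.val : ZMod (p ^ r)) ^ p ^ (r - 1)) = a
  rw [map_pow, map_natCast, ZMod.natCast_zmod_val, ZMod.pow_card_pow]

lemma teichmuller_pow_card_sub_one {a : ZMod p} (ha : a ≠ 0) :
    teichmuller p r a ^ (p - 1) = 1 := by
  rw [← map_pow, ZMod.pow_card_sub_one_eq_one ha, map_one]

lemma teichmuller_one_sub (a : ZMod p) :
    teichmuller p r (1 - a) = (1 - teichmuller p r a) ^ p ^ (r - 1) :=
  teichmuller_eq_pow (by rw [map_sub, map_one, reduction_teichmuller])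

lemma teichmuller_pow_half (h2 : p ≠ 2) :
    teichmuller p r ^ (p / 2) = (quadraticChar (ZMod p)).ringHomComp (Int.castRingHom _) := by
  ext a
  have hEuler := quadraticChar_eq_pow_of_char_ne_two' (F := ZMod p)
    (by rwa [ZMod.ringChar_zmod_n]) a
  rw [ZMod.card] at hEuler
  rw [MulChar.pow_apply_coe, ← map_pow, ← hEuler, MulChar.ringHomComp_apply,
    teichmuller_eq_pow (map_intCast (reduction p r) _), eq_intCast]
  rcases quadraticChar_dichotomy a.ne_zero with h | h
  · rw [h, Int.cast_one, one_pow]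
  · rw [h, Int.cast_neg, Int.cast_one, ((hp.out.odd_of_ne_two h2).pow).neg_one_pow]

lemma pow_eq_one_iff_of_generator {g : (ZMod p)ˣ} (hg : ∀ x, x ∈ Subgroup.zpowers g) {k : ℕ} :
    (g : ZMod p) ^ k = 1 ↔ p - 1 ∣ k := by
  rw [← Units.val_pow_eq_pow_val, Units.val_eq_one, ← orderOf_dvd_iff_pow_eq_one,
    orderOf_eq_card_of_forall_mem_zpowers hg, Nat.card_eq_fintype_card, ZMod.card_units]

lemma sum_teichmuller_pow {k : ℕ} (hk : 0 < k) : ∑ a, teichmuller p r a ^ k =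
    if p - 1 ∣ k then ((p - 1 : ℕ) : ZMod (p ^ r)) else 0 := by
  split_ifs with hdvd
  · obtain ⟨j, rfl⟩ := hdvd
    have hterm (a : ZMod p) : teichmuller p r a ^ ((p - 1) * j) = if a ≠ 0 then 1 else 0 := by
      split_ifs with ha
      · rw [pow_mul, teichmuller_pow_card_sub_one ha, one_pow]
      · rw [not_not.1 ha, MulChar.map_zero, zero_pow hk.ne']
    simp only [hterm, sum_boole, filter_ne', card_erase_of_mem (mem_univ (0 : ZMod p)), card_univ,
      ZMod.card]
  · obtain ⟨g, hg⟩ := IsCyclic.exists_generator (α := (ZMod p)ˣ)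
    have hunit : IsUnit (teichmuller p r g ^ k - 1) := isUnit_of_reduction_ne_zero (by
      rw [map_sub, map_pow, reduction_teichmuller, map_one]
      exact sub_ne_zero.2 ((pow_eq_one_iff_of_generator hg).not.2 hdvd))
    have hshift : ∑ a, teichmuller p r (g * a) ^ k = ∑ a, teichmuller p r a ^ k :=
      Fintype.sum_equiv (Units.mulLeft g) _ _ fun _ => rfl
    simp only [map_mul, mul_pow, ← mul_sum] at hshift
    exact hunit.mul_right_eq_zero.1 (by rw [sub_mul, one_mul, hshift, sub_self])

lemma sum_teichmuller_pow_mul_one_sub_pow {k : ℕ} (hk : 0 < k) (N : ℕ) :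
    ∑ a, teichmuller p r a ^ k * (1 - teichmuller p r a) ^ N = ((p - 1 : ℕ) : ZMod (p ^ r)) *
      ∑ j ∈ range (N + 1) with p - 1 ∣ k + j, (-1) ^ j * (N.choose j : ZMod (p ^ r)) := by
  have hexpand (x : ZMod (p ^ r)) : x ^ k * (1 - x) ^ N =
      ∑ j ∈ range (N + 1), (-1) ^ j * (N.choose j : ZMod (p ^ r)) * x ^ (k + j) := by
    rw [sub_eq_neg_add, add_pow, mul_sum]
    refine sum_congr rfl fun j _ => ?_
    rw [neg_pow, one_pow, pow_add]
    ring
  simp only [hexpand]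
  rw [sum_comm, mul_sum, sum_filter]
  refine sum_congr rfl fun j _ => ?_
  rw [← mul_sum, sum_teichmuller_pow (Nat.add_pos_left hk j), mul_ite, mul_zero, mul_comm]

end Teichmuller

section JacobiSumExpansion

lemma two_mul_one_add_pow {R : Type*} [CommRing R] {x : R} (h : x ^ 3 = 0) (N : ℕ) :
    2 * (1 + x) ^ N = 2 + 2 * N * x + N * (N - 1) * x ^ 2 := by
  induction N with
  | zero => simp
  | succ N ih =>
    rw [pow_succ]
    push_cast
    linear_combination (1 + x) * ih + (N * (N - 1) : R) * h

lemma filter_dvd_range {m : ℕ} (hm : 0 < m) (l : ℕ) :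
    {j ∈ range (3 * m + 6 * m * l + 1) | 6 * m ∣ 5 * m + j} =
      (range (l + 1)).image fun i => m + 6 * m * i := by
  ext j
  simp only [mem_filter, mem_range, mem_image]
  constructor
  · rintro ⟨hj, k, hk⟩
    obtain ⟨i, rfl⟩ := Nat.exists_eq_succ_of_ne_zero (n := k) (by rintro rfl; omega)
    rw [Nat.mul_succ] at hk
    refine ⟨i, ?_, by omega⟩
    by_contra! hil
    have := Nat.mul_le_mul_left (6 * m) hil
    rw [Nat.mul_succ] at this
    omega
  · rintro ⟨i, hi, rfl⟩
    have := Nat.mul_le_mul_left (6 * m) (Nat.lt_succ_iff.1 hi)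
    exact ⟨by omega, i + 1, by ring⟩

variable {p m : ℕ} [hp : Fact p.Prime]

lemma eight_mul_pow_eq {N : ℕ} (hN : 2 * N + 1 = p ^ 2) {u : ZMod (p ^ 3)}
    (hu : reduction p 3 u = 1) : 8 * u ^ N = 15 - 10 * u + 3 * u ^ 2 := by
  obtain ⟨z, hz⟩ := prime_dvd_of_reduction_eq_zero (x := u - 1)
    (by rw [map_sub, hu, map_one, sub_self])
  obtain rfl : u = 1 + p * z := by rw [← hz, add_sub_cancel]
  have hp3 : (p : ZMod (p ^ 3)) ^ 3 = 0 := natCast_pow_eq_zero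
  have hN' : 2 * (N : ZMod (p ^ 3)) + 1 = p ^ 2 := by exact_mod_cast congrArg Nat.cast hN
  have hpow := two_mul_one_add_pow (x := (p : ZMod (p ^ 3)) * z) (by rw [mul_pow, hp3, zero_mul]) N
  linear_combination 4 * hpow + (4 * (p * z) + (2 * N - 3) * (p * z) ^ 2) * hN' +
    (4 * z + (2 * N - 3) * z ^ 2 * p) * hp3

lemma sum_teichmuller_pow_mul_one_sub_pow_eq (h : p = 6 * m + 1) (hm : 0 < m) (l : ℕ) :
    ∑ a, teichmuller p 3 a ^ (5 * m) * (1 - teichmuller p 3 a) ^ (3 * m + 6 * m * l) =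
      (-1) ^ m * (6 * m) *
        ∑ i ∈ range (l + 1), ((3 * m + 6 * m * l).choose (m + 6 * m * i) : ZMod (p ^ 3)) := by
  rw [sum_teichmuller_pow_mul_one_sub_pow (by omega), show p - 1 = 6 * m by omega,
    filter_dvd_range hm, sum_image fun i _ j _ hij =>
      Nat.eq_of_mul_eq_mul_left (by omega : 0 < 6 * m) (Nat.add_left_cancel hij), mul_sum, mul_sum]
  refine sum_congr rfl fun i _ => ?_
  rw [pow_add, Even.neg_one_pow (n := 6 * m * i) ⟨3 * m * i, by ring⟩]
  push_cast
  ring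

/-- The combination of binomial coefficients that represents, up to sign, eight times the Jacobi
sum of the characters `τ^(5m)` and `τ^(3m)` modulo `p^3`, where `p = 6m + 1` and `τ` is the
Teichmüller character. -/
def jacobiChoose (m : ℕ) : ℤ := 6 * m * (15 * (3 * m).choose m -
  10 * ((9 * m).choose m + (9 * m).choose (7 * m)) +
  3 * ((15 * m).choose m + (15 * m).choose (7 * m) + (15 * m).choose (13 * m)))

/- The factor `(1 - τ a)^(p²·3m)` of the Jacobi sum equals `(1 - τ a)^(3m) u^((p²-1)/2)` with
`u = (1 - τ a)^(p-1) ≡ 1 (mod p)`, and `u^((p²-1)/2) ≡ u^(-1/2)` is quadratic in `u` mod `p³`. -/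
lemma eight_mul_teichmuller_pow_mul (h : p = 6 * m + 1) (hm : 0 < m) (a : ZMod p) :
    8 * (teichmuller p 3 a ^ (5 * m) * teichmuller p 3 (1 - a) ^ (3 * m)) =
      15 * (teichmuller p 3 a ^ (5 * m) * (1 - teichmuller p 3 a) ^ (3 * m + 6 * m * 0)) -
      10 * (teichmuller p 3 a ^ (5 * m) * (1 - teichmuller p 3 a) ^ (3 * m + 6 * m * 1)) +
      3 * (teichmuller p 3 a ^ (5 * m) * (1 - teichmuller p 3 a) ^ (3 * m + 6 * m * 2)) := by
  rcases eq_or_ne a 1 with rfl | ha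
  · simp only [sub_self, MulChar.map_zero, map_one, zero_pow (by omega : 3 * m ≠ 0), pow_add]
    ring
  · have hu : reduction p 3 ((1 - teichmuller p 3 a) ^ (6 * m)) = 1 := by
      rw [map_pow, map_sub, map_one, reduction_teichmuller, show 6 * m = p - 1 by omega]
      exact ZMod.pow_card_sub_one_eq_one (sub_ne_zero.2 ha.symm)
    have hpow := eight_mul_pow_eq (N := 3 * m * (p + 1)) (by subst h; ring) hu
    rw [teichmuller_one_sub, ← pow_mul,
      show p ^ (3 - 1) * (3 * m) = 3 * m + 6 * m * (3 * m * (p + 1)) by subst h; ring]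
    simp only [pow_add, pow_mul _ (6 * m), pow_zero, pow_one] at hpow ⊢
    linear_combination teichmuller p 3 a ^ (5 * m) * (1 - teichmuller p 3 a) ^ (3 * m) * hpow

lemma eight_mul_jacobiSum_teichmuller (h : p = 6 * m + 1) (hm : 0 < m) :
    8 * jacobiSum (teichmuller p 3 ^ (5 * m)) (teichmuller p 3 ^ (3 * m)) =
      (-1) ^ m * (jacobiChoose m : ZMod (p ^ 3)) := by
  simp only [jacobiSum, MulChar.pow_apply' _ (by omega : 5 * m ≠ 0),
    MulChar.pow_apply' _ (by omega : 3 * m ≠ 0)]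
  rw [mul_sum, sum_congr rfl fun a _ => eight_mul_teichmuller_pow_mul h hm a, sum_add_distrib,
    sum_sub_distrib, ← mul_sum, ← mul_sum, ← mul_sum,
    sum_teichmuller_pow_mul_one_sub_pow_eq h hm, sum_teichmuller_pow_mul_one_sub_pow_eq h hm,
    sum_teichmuller_pow_mul_one_sub_pow_eq h hm, jacobiChoose]
  simp only [sum_range_succ, sum_range_zero]
  ring_nf
  push_cast
  ring

end JacobiSumExpansion

section CubicClassSums

variable {p : ℕ} [hp : Fact p.Prime]

lemma prime_eq_sq_add_three_mul_sq_unique {a b x y : ℤ} (hab : (p : ℤ) = a ^ 2 + 3 * b ^ 2)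
    (hxy : (p : ℤ) = x ^ 2 + 3 * y ^ 2) : a ^ 2 = x ^ 2 := by
  have hprime : Prime (p : ℤ) := Nat.prime_iff_prime_int.1 hp.out
  have hpos : (0 : ℤ) < p := by exact_mod_cast hp.out.pos
  have hprod : (a * y - b * x) * (a * y + b * x) = p * (y ^ 2 - b ^ 2) := by
    linear_combination (-y ^ 2) * hab + b ^ 2 * hxy
  have hsmall (t s : ℤ) (hts : (p : ℤ) ^ 2 = s ^ 2 + 3 * t ^ 2) (hpt : (p : ℤ) ∣ t) : t = 0 :=
    Int.eq_zero_of_abs_lt_dvd hpt (abs_lt_of_sq_lt_sq (by nlinarith [sq_nonneg s]) hpos.le)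
  have hzero : (a * y - b * x) * (a * y + b * x) = 0 := by
    rcases hprime.dvd_or_dvd (Dvd.intro _ hprod.symm) with h | h
    · rw [hsmall _ (a * x + 3 * b * y) (by
        linear_combination (p : ℤ) * hab + (a ^ 2 + 3 * b ^ 2) * hxy) h, zero_mul]
    · rw [hsmall _ (a * x - 3 * b * y) (by
        linear_combination (p : ℤ) * hab + (a ^ 2 + 3 * b ^ 2) * hxy) h, mul_zero]
  rw [hzero] at hprod
  linear_combination hxy - hab + 3 * (mul_eq_zero.1 hprod.symm).resolve_left hpos.ne'

/-- The quadratic character with values in an arbitrary commutative ring. -/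
def quadraticCharIn (p : ℕ) [Fact p.Prime] (R : Type*) [CommRing R] : MulChar (ZMod p) R :=
  (quadraticChar (ZMod p)).ringHomComp (Int.castRingHom R)

/-- The product `φ(a) φ(1 - a)` of values of the quadratic character `φ`. -/
def quadraticPair (a : ZMod p) : ℤ := quadraticChar (ZMod p) a * quadraticChar (ZMod p) (1 - a)

lemma quadraticPair_dichotomy {a : ZMod p} (h0 : a ≠ 0) (h1 : a ≠ 1) :
    quadraticPair a = 1 ∨ quadraticPair a = -1 := by
  rcases quadraticChar_dichotomy h0 with h | h <;>
    rcases quadraticChar_dichotomy (sub_ne_zero.2 h1.symm) with h' | h' <;>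
      simp [quadraticPair, h, h']

/-- The sum of `φ(a) φ(1 - a)` over the residues `a` whose logarithm `e a` is congruent to `i`
modulo `3`. -/
def cubicClassSum (e : ZMod p → ℕ) (i : ℕ) : ℤ := ∑ a with e a % 3 = i, quadraticPair a

lemma sum_quadraticPair_mul_pow {R : Type*} [CommRing R] (e : ZMod p → ℕ) {w : R}
    (hw : w ^ 3 = 1) : ∑ a, (quadraticPair a : R) * w ^ e a =
      cubicClassSum e 0 + cubicClassSum e 1 * w + cubicClassSum e 2 * w ^ 2 := by
  simp only [cubicClassSum, sum_filter, Int.cast_sum, sum_mul, ← sum_add_distrib]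
  refine sum_congr rfl fun a _ => ?_
  rw [pow_eq_pow_mod _ hw]
  have hlt := Nat.mod_lt (e a) three_pos
  interval_cases e a % 3 <;> simp

lemma jacobiSum_mul_quadraticCharIn {R : Type*} [CommRing R] {e : ZMod p → ℕ} {w : R}
    (hw : w ^ 3 = 1) {χ : MulChar (ZMod p) R} (hχ : ∀ a ≠ 0, χ a = w ^ e a) :
    jacobiSum (χ * quadraticCharIn p R) (quadraticCharIn p R) =
      cubicClassSum e 0 + cubicClassSum e 1 * w + cubicClassSum e 2 * w ^ 2 := by
  rw [← sum_quadraticPair_mul_pow e hw, jacobiSum]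
  refine sum_congr rfl fun a _ => ?_
  rw [MulChar.mul_apply, quadraticCharIn, MulChar.ringHomComp_apply, MulChar.ringHomComp_apply,
    quadraticPair, eq_intCast, eq_intCast]
  rcases eq_or_ne a 0 with rfl | ha
  · simp
  · rw [hχ a ha]
    push_cast
    ring

variable {g : (ZMod p)ˣ} {e : ZMod p → ℕ}

lemma exists_pow_eq_of_generator (hg : ∀ x, x ∈ Subgroup.zpowers g) :
    ∃ e : ZMod p → ℕ, ∀ a ≠ 0, (g : ZMod p) ^ e a = a := by
  have hlog (a : ZMod p) : ∃ k : ℕ, a ≠ 0 → (g : ZMod p) ^ k = a := by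
    rcases eq_or_ne a 0 with ha | ha
    · exact ⟨0, fun h => absurd ha h⟩
    · obtain ⟨k, hk⟩ := (mem_powers_iff_mem_zpowers (x := g)).2 (hg (Units.mk0 a ha))
      exact ⟨k, fun _ => by simpa using congrArg Units.val hk⟩
  choose e he using hlog
  exact ⟨e, he⟩

/- Inversion swaps the classes `1` and `2`, and `φ(a) φ(1 - a)` is odd there. -/
lemma two_dvd_cubicClassSum_sub (h : p % 3 = 1) (hg : ∀ x, x ∈ Subgroup.zpowers g)
    (he : ∀ a ≠ 0, (g : ZMod p) ^ e a = a) : 2 ∣ cubicClassSum e 1 - cubicClassSum e 2 := by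
  have hlog {k : ℕ} (hk : (g : ZMod p) ^ k = 1) : k % 3 = 0 :=
    Nat.mod_eq_zero_of_dvd ((by omega : 3 ∣ p - 1).trans
      ((pow_eq_one_iff_of_generator hg).1 hk))
  have hinv : cubicClassSum e 2 = ∑ a, if e a⁻¹ % 3 = 2 then quadraticPair a⁻¹ else 0 := by
    rw [cubicClassSum, sum_filter]
    exact (Fintype.sum_equiv (Equiv.inv (ZMod p)) _ _ fun _ => rfl).symm
  rw [hinv, cubicClassSum, sum_filter, ← sum_sub_distrib]
  refine dvd_sum fun a _ => ?_
  rcases eq_or_ne a 0 with rfl | h0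
  · simp [quadraticPair]
  have hsum : (e a + e a⁻¹) % 3 = 0 := hlog (by
    rw [pow_add, he a h0, he _ (inv_ne_zero h0), mul_inv_cancel₀ h0])
  by_cases hclass : e a % 3 = 1
  · have h1 : a ≠ 1 := by
      rintro rfl
      exact absurd (hlog (he 1 h0)) (by omega)
    rw [if_pos hclass, if_pos (by omega)]
    rcases quadraticPair_dichotomy h0 h1 with h | h <;>
      rcases quadraticPair_dichotomy (inv_ne_zero h0) (inv_ne_one.2 h1) with h' | h' <;>
        norm_num [h, h']
  · rw [if_neg hclass, if_neg (by omega), sub_zero]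
    exact dvd_zero 2

lemma exists_cubic_mulChar {R : Type*} [CommRing R] {w : R} (hw : w ^ 3 = 1) (h : p % 3 = 1)
    (hg : ∀ x, x ∈ Subgroup.zpowers g) (he : ∀ a ≠ 0, (g : ZMod p) ^ e a = a) :
    ∃ χ : MulChar (ZMod p) R, χ g = w ∧ ∀ a ≠ 0, χ a = w ^ e a := by
  have hmem : Units.ofPowEqOne w 3 hw three_ne_zero ∈ rootsOfUnity (Fintype.card (ZMod p)ˣ) R := by
    obtain ⟨k, hk⟩ : 3 ∣ p - 1 := by omega
    rw [mem_rootsOfUnity, ZMod.card_units, hk, pow_mul, Units.pow_ofPowEqOne, one_pow]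
  have hspec : MulChar.ofRootOfUnity hmem hg g = w := MulChar.ofRootOfUnity_spec hmem hg
  exact ⟨_, hspec, fun a ha => by conv_lhs => rw [← he a ha, map_pow, hspec]⟩

lemma jacobiSum_mul_jacobiSum_sq {F R : Type*} [Field F] [Fintype F] [Field R]
    (hchar : ringChar R ≠ ringChar F) {χ φ : MulChar F R} (hχ3 : χ ^ 3 = 1) (hχ1 : χ ≠ 1)
    (hφ2 : φ ^ 2 = 1) (hφ1 : φ ≠ 1) :
    jacobiSum (χ * φ) φ * jacobiSum (χ ^ 2 * φ) φ = Fintype.card F := by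
  have hφ : φ * φ = 1 := by rw [← pow_two, hφ2]
  have hχφ : χ * φ ≠ 1 := fun heq => hχ1 (by
    rw [eq_inv_of_mul_eq_one_left heq, inv_eq_of_mul_eq_one_left hφ] at hχ3 ⊢
    rwa [pow_succ, hφ2, one_mul] at hχ3)
  rw [← jacobiSum_mul_jacobiSum_inv hchar hχφ hφ1 (by rwa [mul_assoc, hφ, mul_one]), mul_inv,
    inv_eq_of_mul_eq_one_left hφ,
    inv_eq_of_mul_eq_one_left (by rw [← pow_succ, hχ3] : χ ^ 2 * χ = 1)]

lemma cubicClassSum_norm (h : p % 3 = 1) (hg : ∀ x, x ∈ Subgroup.zpowers g)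
    (he : ∀ a ≠ 0, (g : ZMod p) ^ e a = a) :
    cubicClassSum e 0 ^ 2 + cubicClassSum e 1 ^ 2 + cubicClassSum e 2 ^ 2 -
      cubicClassSum e 0 * cubicClassSum e 1 - cubicClassSum e 1 * cubicClassSum e 2 -
      cubicClassSum e 2 * cubicClassSum e 0 = (p : ℤ) := by
  obtain ⟨w, hprim⟩ : ∃ w : ℂ, IsPrimitiveRoot w 3 :=
    ⟨_, Complex.isPrimitiveRoot_exp 3 (by norm_num)⟩
  have hw3 := hprim.pow_eq_one
  have hw1 := hprim.ne_one (by norm_num)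
  have hquad : w ^ 2 + w + 1 = 0 :=
    (mul_eq_zero.1 (by linear_combination hw3 : (w - 1) * (w ^ 2 + w + 1) = 0)).resolve_left
      (sub_ne_zero.2 hw1)
  obtain ⟨χ, hχg, hχ⟩ := exists_cubic_mulChar hw3 h hg he
  have hχ3 : χ ^ 3 = 1 := by
    ext a
    rw [MulChar.pow_apply_coe, hχ a a.ne_zero, pow_right_comm, hw3, one_pow, MulChar.one_apply_coe]
  have hχ1 : χ ≠ 1 := by
    rintro rfl
    exact hw1 (by rw [← hχg, MulChar.one_apply_coe])
  have hφ2 : quadraticCharIn p ℂ ^ 2 = 1 :=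
    ((quadraticChar_isQuadratic (ZMod p)).comp _).sq_eq_one
  have hφ1 : quadraticCharIn p ℂ ≠ 1 :=
    (MulChar.ringHomComp_ne_one_iff (RingHom.injective_int _)).2
      (quadraticChar_ne_one (by rw [ZMod.ringChar_zmod_n]; rintro rfl; omega))
  have hchar : ringChar ℂ ≠ ringChar (ZMod p) := by
    rw [ringChar.eq_zero, ZMod.ringChar_zmod_n]
    exact hp.out.ne_zero.symm
  have hnorm := jacobiSum_mul_jacobiSum_sq hchar hχ3 hχ1 hφ2 hφ1
  rw [jacobiSum_mul_quadraticCharIn hw3 hχ, jacobiSum_mul_quadraticCharIn (w := w ^ 2)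
    (by rw [pow_right_comm, hw3, one_pow])
    (fun a ha => by rw [MulChar.pow_apply' χ two_ne_zero, hχ a ha, pow_right_comm]),
    ZMod.card] at hnorm
  rw [← Int.cast_inj (α := ℂ)]
  push_cast
  rw [← hnorm]
  generalize (cubicClassSum e 0 : ℂ) = a
  generalize (cubicClassSum e 1 : ℂ) = b
  generalize (cubicClassSum e 2 : ℂ) = c
  linear_combination (-(a * b + a * c + (b ^ 2 + c ^ 2) * (w - 1) + b * c * (w ^ 2 - w + 1) +
    (a + b * w + c * w ^ 2) * c * w * (w - 1))) * hquad

lemma exists_sq_add_three_mul_sq (h : p % 3 = 1) (hg : ∀ x, x ∈ Subgroup.zpowers g)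
    (he : ∀ a ≠ 0, (g : ZMod p) ^ e a = a) : ∃ a b : ℤ, (p : ℤ) = a ^ 2 + 3 * b ^ 2 ∧
      cubicClassSum e 0 = cubicClassSum e 2 + a + b ∧
      cubicClassSum e 1 = cubicClassSum e 2 + 2 * b := by
  obtain ⟨b, hb⟩ := two_dvd_cubicClassSum_sub h hg he
  refine ⟨cubicClassSum e 0 - cubicClassSum e 2 - b, b, ?_, by ring, by linear_combination hb⟩
  rw [← cubicClassSum_norm h hg he, sub_eq_iff_eq_add.1 hb]
  ring

lemma exists_jacobiSum_teichmuller_quadratic {m : ℕ} (h : p = 6 * m + 1) (hm : 0 < m) :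
    ∃ a b : ℤ, (p : ℤ) = a ^ 2 + 3 * b ^ 2 ∧
      jacobiSum (teichmuller p 3 ^ (5 * m)) (teichmuller p 3 ^ (3 * m)) ^ 2 -
        2 * a * jacobiSum (teichmuller p 3 ^ (5 * m)) (teichmuller p 3 ^ (3 * m)) + p = 0 := by
  obtain ⟨g, hg⟩ := IsCyclic.exists_generator (α := (ZMod p)ˣ)
  obtain ⟨e, he⟩ := exists_pow_eq_of_generator hg
  obtain ⟨a, b, hp_eq, h₀, h₁⟩ := exists_sq_add_three_mul_sq (by omega) hg he
  have hp_cast : (p : ZMod (p ^ 3)) = a ^ 2 + 3 * b ^ 2 := by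
    rw [← Int.cast_natCast p, hp_eq]
    push_cast
    rfl
  have hroot : teichmuller p 3 ^ (3 * m) = quadraticCharIn p (ZMod (p ^ 3)) := by
    rw [show 3 * m = p / 2 by omega, teichmuller_pow_half (by omega), quadraticCharIn]
  set w := teichmuller p 3 g ^ (2 * m) with hw
  have hw3 : w ^ 3 = 1 := by
    rw [hw, ← pow_mul, show 2 * m * 3 = p - 1 by omega, teichmuller_pow_card_sub_one g.ne_zero]
  have hw1 : IsUnit (w - 1) := isUnit_of_reduction_ne_zero (by
    rw [hw, map_sub, map_pow, reduction_teichmuller, map_one, sub_ne_zero, Ne,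
      pow_eq_one_iff_of_generator hg]
    exact Nat.not_dvd_of_pos_of_lt (by omega) (by omega))
  have hquad : w ^ 2 + w + 1 = 0 :=
    hw1.mul_right_eq_zero.1 (by linear_combination hw3)
  have hJ := jacobiSum_mul_quadraticCharIn hw3 (χ := teichmuller p 3 ^ (2 * m)) (e := e)
    fun x hx => by
      rw [MulChar.pow_apply' _ (by omega), hw, pow_right_comm, ← map_pow _ (g : ZMod p), he x hx]
  rw [← hroot, ← pow_add, show 2 * m + 3 * m = 5 * m by ring, h₀, h₁] at hJ
  refine ⟨a, b, hp_eq, ?_⟩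
  rw [hJ, hp_cast]
  push_cast
  generalize (cubicClassSum e 2 : ZMod (p ^ 3)) = c
  linear_combination (4 * (b : ZMod (p ^ 3)) ^ 2 + c * (c * (w ^ 2 + w + 1) +
    2 * b * (1 + 2 * w))) * hquad

theorem prime_pow_three_dvd_jacobiChoose {m : ℕ} (h : p = 6 * m + 1) {x y : ℤ}
    (hxy : (p : ℤ) = x ^ 2 + 3 * y ^ 2) : (p : ℤ) ^ 3 ∣
      jacobiChoose m ^ 4 + 4096 * p ^ 2 - 64 * (4 * x ^ 2 - 2 * p) * jacobiChoose m ^ 2 := by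
  have hm : 0 < m := by have := hp.out.one_lt; omega
  obtain ⟨a, b, hab, hJ⟩ := exists_jacobiSum_teichmuller_quadratic h hm
  have hC := eight_mul_jacobiSum_teichmuller h hm
  set J := jacobiSum (teichmuller p 3 ^ (5 * m)) (teichmuller p 3 ^ (3 * m))
  have hax : (a : ZMod (p ^ 3)) ^ 2 = x ^ 2 := by
    exact_mod_cast congrArg (Int.cast (R := ZMod (p ^ 3)))
      (prime_eq_sq_add_three_mul_sq_unique hab hxy)
  have hsq : (jacobiChoose m : ZMod (p ^ 3)) ^ 2 = 64 * J ^ 2 := by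
    have hsgn : ((-1 : ZMod (p ^ 3)) ^ m) ^ 2 = 1 := by
      rw [← pow_mul, mul_comm, pow_mul, neg_one_sq, one_pow]
    linear_combination (-(8 * J) - (-1) ^ m * jacobiChoose m) * hC -
      (jacobiChoose m : ZMod (p ^ 3)) ^ 2 * hsgn
  rw [← Nat.cast_pow, ← ZMod.intCast_zmod_eq_zero_iff_dvd]
  push_cast
  linear_combination 4096 * (J ^ 2 + 2 * a * J + p) * hJ + 16384 * J ^ 2 * hax +
    (jacobiChoose m ^ 2 + 64 * J ^ 2 - 64 * (4 * x ^ 2 - 2 * p)) * hsq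

end CubicClassSums

/-! ### Binomial coefficients near the Jacobi sum -/

section JacobiChoose

lemma factorial_mul_add (q p k : ℕ) : ((q * p + k).factorial : ℚ) =
    (q * p).factorial * k.factorial * risingRatio p k (-q) := by
  rw [mul_assoc, ← ascPochhammer_eval_one_sub (z := ((q * p + 1 : ℕ) : ℚ)) (by push_cast; ring),
    ← ascPochhammer_eval_cast, ascPochhammer_nat_eq_ascFactorial]
  exact_mod_cast (Nat.factorial_mul_ascFactorial _ _).symm

lemma succ_mul_factorial {r p l : ℕ} (h : r + 1 = p + l) : (p + l : ℚ) * r.factorial =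
    p.factorial * l.factorial * risingRatio p l (-1) := by
  have hfac := factorial_mul_add 1 p l
  rw [one_mul, ← h, Nat.factorial_succ, h] at hfac
  exact_mod_cast hfac

lemma succ_mul_succ_mul_factorial {r p l : ℕ} (h : r + 2 = 2 * p + l) :
    (2 * p + l : ℚ) * (2 * p + l - 1) * r.factorial =
      (2 * p).factorial * l.factorial * risingRatio p l (-2) := by
  have hfac := factorial_mul_add 2 p l
  have hr : (r : ℚ) + 2 = 2 * p + l := by exact_mod_cast h
  rw [← h, Nat.factorial_succ, Nat.factorial_succ] at hfac
  push_cast at hfac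
  rw [← hfac, ← hr]
  ring

lemma factorial_two_mul {p : ℕ} (hp : 0 < p) : ((2 * p).factorial : ℚ) =
    2 * p.factorial ^ 2 * risingRatio p (p - 1) (-1) := by
  have hfac := factorial_mul_add 1 p p
  have hsucc : risingRatio p p (-1) = risingRatio p (p - 1) (-1) * 2 := by
    obtain ⟨n, rfl⟩ := Nat.exists_eq_succ_of_ne_zero hp.ne'
    have hn : ((n + 1 : ℕ) : ℚ) * (n + 1 : ℚ)⁻¹ = 1 := by
      rw [← Nat.cast_succ]
      exact mul_inv_cancel₀ (Nat.cast_ne_zero.2 n.succ_ne_zero)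
    rw [risingRatio, prod_range_succ, Nat.succ_eq_add_one, hn, risingRatio, Nat.add_sub_cancel]
    norm_num
  rw [one_mul, ← two_mul] at hfac
  push_cast at hfac
  rw [hfac, hsucc]
  ring

variable {p k l r s : ℕ}

lemma choose_add_of_succ_eq (h : r + 1 = p + l) :
    (p + k + l) * ((r + k).choose k : ℚ) * risingRatio p l (-1) =
      (p + l) * (l + k).choose k * risingRatio p (l + k) (-1) := by
  have hkl : ((l + k).choose k * l.factorial * k.factorial : ℚ) = (l + k).factorial :=
    mod_cast Nat.add_choose_mul_factorial_mul_factorial l k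
  have hkr : ((r + k).choose k * r.factorial * k.factorial : ℚ) = (r + k).factorial :=
    mod_cast Nat.add_choose_mul_factorial_mul_factorial r k
  have hr := succ_mul_factorial h
  have hkr' := succ_mul_factorial (r := r + k) (l := l + k) (p := p) (by omega)
  rw [← hkl, ← hkr] at hkr'
  push_cast at hkr'
  have hne : (p.factorial * k.factorial * l.factorial : ℚ) ≠ 0 := by positivity
  refine mul_left_cancel₀ hne ?_
  linear_combination (p + l : ℚ) * hkr' -
    (p + k + l) * ((r + k).choose k * k.factorial) * hr

lemma choose_add_of_succ_succ_eq (h : r + 2 = 2 * p + l) :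
    (2 * p + k + l) * (2 * p + k + l - 1) * ((r + k).choose k : ℚ) * risingRatio p l (-2) =
      (2 * p + l) * (2 * p + l - 1) * (l + k).choose k * risingRatio p (l + k) (-2) := by
  have hkl : ((l + k).choose k * l.factorial * k.factorial : ℚ) = (l + k).factorial :=
    mod_cast Nat.add_choose_mul_factorial_mul_factorial l k
  have hkr : ((r + k).choose k * r.factorial * k.factorial : ℚ) = (r + k).factorial :=
    mod_cast Nat.add_choose_mul_factorial_mul_factorial r k
  have hr := succ_mul_succ_mul_factorial h
  have hkr' := succ_mul_succ_mul_factorial (r := r + k) (l := l + k) (p := p) (by omega)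
  rw [← hkl, ← hkr] at hkr'
  push_cast at hkr'
  have hne : ((2 * p).factorial * k.factorial * l.factorial : ℚ) ≠ 0 := by positivity
  refine mul_left_cancel₀ hne ?_
  linear_combination (2 * p + l : ℚ) * (2 * p + l - 1) * hkr' -
    (2 * p + k + l) * (2 * p + k + l - 1) * ((r + k).choose k * k.factorial) * hr

lemma choose_add_of_succ_eq_of_succ_eq (hp : 0 < p) (hr : r + 1 = p + k) (hs : s + 1 = p + l) :
    (2 * p + k + l) * (2 * p + k + l - 1) * ((s + r).choose r : ℚ) *
        (risingRatio p k (-1) * risingRatio p l (-1)) =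
      2 * (p + k) * (p + l) * (l + k).choose k *
        (risingRatio p (p - 1) (-1) * risingRatio p (l + k) (-2)) := by
  have hkl : ((l + k).choose k * l.factorial * k.factorial : ℚ) = (l + k).factorial :=
    mod_cast Nat.add_choose_mul_factorial_mul_factorial l k
  have hrs : ((s + r).choose r * s.factorial * r.factorial : ℚ) = (s + r).factorial :=
    mod_cast Nat.add_choose_mul_factorial_mul_factorial s r
  have hr' := succ_mul_factorial hr
  have hs' := succ_mul_factorial hs
  have hrs' := succ_mul_succ_mul_factorial (r := s + r) (l := l + k) (p := p) (by omega)
  rw [← hkl, ← hrs, factorial_two_mul hp] at hrs'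
  push_cast at hrs'
  have hne : (p.factorial ^ 2 * k.factorial * l.factorial : ℚ) ≠ 0 := by positivity
  refine mul_left_cancel₀ hne ?_
  linear_combination (p + l : ℚ) * (p + k) * hrs' -
    (2 * p + k + l) * (2 * p + k + l - 1) * (s + r).choose r *
      ((p + l) * s.factorial * hr' + p.factorial * k.factorial * risingRatio p k (-1) * hs')

lemma risingRatio_ne_zero (q p k : ℕ) : risingRatio p k (-q) ≠ 0 :=
  right_ne_zero_of_mul (factorial_mul_add q p k ▸ cast_factorial_ne_zero (q * p + k))

variable {m : ℕ}

lemma choose_nine_mul (h : p = 6 * m + 1) :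
    ((9 * m).choose m : ℚ) = (3 * m).choose m * (2 / 3 * (1 - 4 * p) *
      (risingRatio p (3 * m) (-1) / (risingRatio p (2 * m) (-1) * (1 - 3 * p)))) ∧
    ((9 * m).choose (7 * m) : ℚ) = (3 * m).choose m * (1 / 3 * (1 - 7 * p) *
      (risingRatio p (3 * m) (-1) / (risingRatio p m (-1) * (1 - 3 * p)))) := by
  have h₁ := choose_add_of_succ_eq (p := p) (k := m) (r := 8 * m) (l := 2 * m) (by omega)
  have h₂ := choose_add_of_succ_eq (p := p) (k := 2 * m) (r := 7 * m) (l := m) (by omega)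
  rw [← Nat.choose_symm_add, show 7 * m + 2 * m = 9 * m by ring, ← Nat.choose_symm_add (a := m),
    show m + 2 * m = 3 * m by ring] at h₂
  rw [show 8 * m + m = 9 * m by ring, show 2 * m + m = 3 * m by ring] at h₁
  have hp : (p : ℚ) = 6 * m + 1 := by exact_mod_cast h
  have hm : (m : ℚ) = (p - 1) / 6 := by linarith
  have hpos : (1 : ℚ) ≤ p := by rw [hp]; linarith [m.cast_nonneg (α := ℚ)]
  have hd : 1 - 3 * (p : ℚ) ≠ 0 := by linarith
  have hR (k : ℕ) : risingRatio p k (-1) ≠ 0 := by simpa using risingRatio_ne_zero 1 p k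
  push_cast [hm] at h₁ h₂
  constructor
  · rw [← mul_div_assoc, ← mul_div_assoc, eq_div_iff (mul_ne_zero (hR _) hd)]
    linear_combination (-2) * h₁
  · rw [← mul_div_assoc, ← mul_div_assoc, eq_div_iff (mul_ne_zero (hR _) hd)]
    linear_combination (-2) * h₂

lemma choose_fifteen_mul (h : p = 6 * m + 1) :
    ((15 * m).choose m : ℚ) = (3 * m).choose m * (4 / 27 * (4 - 7 * p) * (1 - 7 * p) *
      (risingRatio p (3 * m) (-2) /
        (risingRatio p (2 * m) (-2) * ((1 - 5 * p) * (1 - 5 / 3 * p))))) ∧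
    ((15 * m).choose (13 * m) : ℚ) = (3 * m).choose m * (1 / 27 * (7 - 13 * p) *
      (1 - 13 * p) * (risingRatio p (3 * m) (-2) /
        (risingRatio p m (-2) * ((1 - 5 * p) * (1 - 5 / 3 * p))))) ∧
    ((15 * m).choose (7 * m) : ℚ) = (3 * m).choose m * (4 / 27 * (1 - 7 * p) *
      (1 - 4 * p) * (risingRatio p (p - 1) (-1) * risingRatio p (3 * m) (-2) /
        (risingRatio p m (-1) * risingRatio p (2 * m) (-1) *
          ((1 - 5 * p) * (1 - 5 / 3 * p))))) := by
  have h₁ := choose_add_of_succ_succ_eq (p := p) (k := m) (r := 14 * m) (l := 2 * m) (by omega)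
  have h₂ := choose_add_of_succ_succ_eq (p := p) (k := 2 * m) (r := 13 * m) (l := m) (by omega)
  have h₃ := choose_add_of_succ_eq_of_succ_eq (p := p) (k := m) (l := 2 * m) (r := 7 * m)
    (s := 8 * m) (by omega) (by omega) (by omega)
  rw [show 14 * m + m = 15 * m by ring, show 2 * m + m = 3 * m by ring] at h₁
  rw [← Nat.choose_symm_add, show 13 * m + 2 * m = 15 * m by ring,
    ← Nat.choose_symm_add (a := m), show m + 2 * m = 3 * m by ring] at h₂
  rw [show 8 * m + 7 * m = 15 * m by ring, show 2 * m + m = 3 * m by ring] at h₃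
  have hp : (p : ℚ) = 6 * m + 1 := by exact_mod_cast h
  have hm : (m : ℚ) = (p - 1) / 6 := by linarith
  have hpos : (1 : ℚ) ≤ p := by rw [hp]; linarith [m.cast_nonneg (α := ℚ)]
  have hd : (1 - 5 * (p : ℚ)) * (1 - 5 / 3 * p) ≠ 0 :=
    mul_ne_zero (by linarith) (by linarith)
  have hR₁ (k : ℕ) : risingRatio p k (-1) ≠ 0 := by simpa using risingRatio_ne_zero 1 p k
  have hR₂ (k : ℕ) : risingRatio p k (-2) ≠ 0 := risingRatio_ne_zero 2 p k
  push_cast [hm] at h₁ h₂ h₃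
  refine ⟨?_, ?_, ?_⟩
  · rw [← mul_div_assoc, ← mul_div_assoc, eq_div_iff (mul_ne_zero (hR₂ _) hd)]
    linear_combination 4 / 3 * h₁
  · rw [← mul_div_assoc, ← mul_div_assoc, eq_div_iff (mul_ne_zero (hR₂ _) hd)]
    linear_combination 4 / 3 * h₂
  · rw [← mul_div_assoc, ← mul_div_assoc,
      eq_div_iff (mul_ne_zero (mul_ne_zero (hR₁ _) (hR₁ _)) hd)]
    linear_combination 4 / 3 * h₃

end JacobiChoose

section JacobiChooseCongruence

variable {p : ℕ} [hp : Fact p.Prime] [h3 : Fact (3 < p)]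

lemma hasJet_linear (r s : ℚ) (y z : ℤ) (hr : 6 ^ 3 * r = y) (hs : 6 ^ 3 * s = z) :
    HasJet p p (r + s * p) r s 0 :=
  ((HasJet.const (mem_pInt_of_six_pow_mul_eq 3 y hr)).add
    (.mul .prime (.const (mem_pInt_of_six_pow_mul_eq 3 z hs)) .self)).congr
      (by ring) (by ring) (by ring)

lemma hasJet_binomial_combination {u₁ u₂ u₃ u₄ u₅ v₁ v₂ v₃ v₄ v₅ w₁ w₂ w₃ w₄ w₅ : ℚ}
    (h₁ : HasJet p p u₁ 1 v₁ w₁) (h₂ : HasJet p p u₂ 1 v₂ w₂) (h₃ : HasJet p p u₃ 1 v₃ w₃)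
    (h₄ : HasJet p p u₄ 1 v₄ w₄) (h₅ : HasJet p p u₅ 1 v₅ w₅) :
    HasJet p p ((p - 1) / 8 * (15 -
      10 * (2 / 3 * (1 - 4 * p) * u₁ + 1 / 3 * (1 - 7 * p) * u₂) +
      1 / 9 * (4 * (4 - 7 * p) * (1 - 7 * p) * u₃ + (7 - 13 * p) * (1 - 13 * p) * u₄ +
        4 * (1 - 7 * p) * (1 - 4 * p) * u₅)))
      (-1)
      ((60 * v₁ + 30 * v₂ - 16 * v₃ - 7 * v₄ - 4 * v₅ - 90) / 72)
      ((60 * w₁ + 30 * w₂ - 16 * w₃ - 7 * w₄ - 4 * w₅ -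
        300 * v₁ - 240 * v₂ + 156 * v₃ + 111 * v₄ + 48 * v₅ - 315) / 72) := by
  have hsum := (((((HasJet.const (natCast_mem _ 15)).add
    (.mul .prime
      (hasJet_linear (-20 / 3) (80 / 3) (-1440) 5760 (by norm_num) (by norm_num)) h₁)).add
    (.mul .prime
      (hasJet_linear (-10 / 3) (70 / 3) (-720) 5040 (by norm_num) (by norm_num)) h₂)).add
    (.mul .prime (.mul .prime
      (hasJet_linear (16 / 9) (-28 / 9) 384 (-672) (by norm_num) (by norm_num))
      (hasJet_linear 1 (-7) 216 (-1512) (by norm_num) (by norm_num))) h₃)).add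
    (.mul .prime (.mul .prime
      (hasJet_linear (7 / 9) (-13 / 9) 168 (-312) (by norm_num) (by norm_num))
      (hasJet_linear 1 (-13) 216 (-2808) (by norm_num) (by norm_num))) h₄)).add
    (.mul .prime (.mul .prime
      (hasJet_linear (4 / 9) (-28 / 9) 96 (-672) (by norm_num) (by norm_num))
      (hasJet_linear 1 (-4) 216 (-864) (by norm_num) (by norm_num))) h₅)
  have hprod := HasJet.mul .prime
    (hasJet_linear (-1 / 8) (1 / 8) (-27) 27 (by norm_num) (by norm_num)) hsum
  convert hprod using 1 <;> push_cast <;> ring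

lemma binomial_combination_pModEq_of_hasLog {u₁ u₂ u₃ u₄ u₅ ξ : ℚ}
    (h₁ : HasLog p u₁ (p * (harmonic (p / 2) - harmonic (p / 3) + 3) +
      p ^ 2 * (1 / 2 * harmonicSq (p / 3) + 9 / 2)))
    (h₂ : HasLog p u₂ (p * (3 - harmonic (p / 3)) + p ^ 2 * (3 * harmonicSq (p / 3) + 9 / 2)))
    (h₃ : HasLog p u₃ (p * (2 * harmonic (p / 2) - 2 * harmonic (p / 3) + 20 / 3) +
      p ^ 2 * (2 * harmonicSq (p / 3) + 125 / 9)))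
    (h₄ : HasLog p u₄ (p * (20 / 3 - 2 * harmonic (p / 3)) +
      p ^ 2 * (11 * harmonicSq (p / 3) + 125 / 9)))
    (h₅ : HasLog p u₅ (p * (harmonic (p / 2) - 2 * harmonic (p / 3) + 20 / 3) +
      p ^ 2 * (7 / 2 * harmonicSq (p / 3) + 125 / 9)))
    (hξ : HasLog p ξ (p * (harmonic (p / 3) / 2 - harmonic (p / 2) / 3) +
      p ^ 2 * (harmonicSq (p / 3) / 24))) :
    PModEq p 3 ((p - 1) / 8 * (15 -
      10 * (2 / 3 * (1 - 4 * p) * u₁ + 1 / 3 * (1 - 7 * p) * u₂) +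
      1 / 9 * (4 * (4 - 7 * p) * (1 - 7 * p) * u₃ + (7 - 13 * p) * (1 - 13 * p) * u₄ +
        4 * (1 - 7 * p) * (1 - 4 * p) * u₅))) (-ξ) := by
  have hlt := h3.out
  have ha : harmonic (p / 2) ∈ pInt p := harmonic_mem_pInt (by omega)
  have hb : harmonic (p / 3) ∈ pInt p := harmonic_mem_pInt (by omega)
  have hc : harmonicSq (p / 3) ∈ pInt p := harmonicSq_mem_pInt (by omega)
  have hconst (r : ℚ) (z : ℤ) (hr : 6 ^ 3 * r = z) : r ∈ pInt p :=
    mem_pInt_of_six_pow_mul_eq 3 z hr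
  have hthree : (3 : ℚ) ∈ pInt p := natCast_mem _ 3
  have hrat₁ := hconst (20 / 3) 1440 (by norm_num)
  have hrat₂ := hconst (9 / 2) 972 (by norm_num)
  have hrat₃ := hconst (125 / 9) 3000 (by norm_num)
  have hu₁ := h₁.hasJet (add_mem (sub_mem ha hb) hthree)
    (add_mem (mul_mem (hconst (1 / 2) 108 (by norm_num)) hc) hrat₂)
  have hu₂ := h₂.hasJet (sub_mem hthree hb) (add_mem (mul_mem hthree hc) hrat₂)
  have hu₃ := h₃.hasJet
    (add_mem (sub_mem (mul_mem (natCast_mem _ 2) ha) (mul_mem (natCast_mem _ 2) hb)) hrat₁)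
    (add_mem (mul_mem (natCast_mem _ 2) hc) hrat₃)
  have hu₄ := h₄.hasJet (sub_mem hrat₁ (mul_mem (natCast_mem _ 2) hb))
    (add_mem (mul_mem (natCast_mem _ 11) hc) hrat₃)
  have hu₅ := h₅.hasJet (add_mem (sub_mem ha (mul_mem (natCast_mem _ 2) hb)) hrat₁)
    (add_mem (mul_mem (hconst (7 / 2) 756 (by norm_num)) hc) hrat₃)
  have hneg := HasJet.mul .prime (.const (neg_mem (one_mem _))) ((hξ.congr rfl
    (show _ = p * (1 / 2 * harmonic (p / 3) - 1 / 3 * harmonic (p / 2)) +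
      p ^ 2 * (1 / 24 * harmonicSq (p / 3)) by ring)).hasJet
    (sub_mem (mul_mem (hconst (1 / 2) 108 (by norm_num)) hb)
      (mul_mem (hconst (1 / 3) 72 (by norm_num)) ha))
    (mul_mem (hconst (1 / 24) 9 (by norm_num)) hc))
  exact (hasJet_binomial_combination hu₁ hu₂ hu₃ hu₄ hu₅).pModEq_of_eq hneg (by ring) (by ring)
    (by ring) |>.congr (by ring)

lemma jacobiChoose_pModEq (h : p % 3 = 1) {ξ : ℚ}
    (hξ : HasLog p ξ (p * (harmonic (p / 3) / 2 - harmonic (p / 2) / 3) +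
      p ^ 2 * (harmonicSq (p / 3) / 24))) :
    PModEq p 3 (jacobiChoose (p / 6) / 8) (-(sixthChoose p * ξ)) := by
  have hmod := mod_six_eq (p := p)
  have h₆ : p = 6 * (p / 6) + 1 := by omega
  obtain ⟨e₁, e₂⟩ := choose_nine_mul h₆
  obtain ⟨e₃, e₄, e₅⟩ := choose_fifteen_mul h₆
  have hβ : ((3 * (p / 6)).choose (p / 6) : ℚ) = sixthChoose p := by
    rw [sixthChoose, show p / 2 = 3 * (p / 6) by omega]
  have hm : ((p / 6 : ℕ) : ℚ) = (p - 1) / 6 := by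
    have : (p : ℚ) = 6 * ((p / 6 : ℕ) : ℚ) + 1 := by exact_mod_cast h₆
    linarith
  have hone : (-1 : ℚ) ∈ pInt p := neg_mem (one_mem _)
  have htwo : (-2 : ℚ) ∈ pInt p := neg_mem (natCast_mem _ 2)
  have hthree : (5 / 3 : ℚ) ∈ pInt p := mem_pInt_of_six_pow_mul_eq 1 10 (by norm_num)
  have hd₉ := HasLog.one_sub (PDvd.prime.const_mul (show (3 : ℚ) ∈ pInt p from natCast_mem _ 3))
  have hd₁₅ := (HasLog.one_sub
    (PDvd.prime.const_mul (show (5 : ℚ) ∈ pInt p from natCast_mem _ 5))).mul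
    (HasLog.one_sub (PDvd.prime.const_mul hthree))
  simp only [hβ] at e₁ e₂ e₃ e₄ e₅
  simp only [show 3 * (p / 6) = p / 2 by omega, show 2 * (p / 6) = p / 3 by omega]
    at e₁ e₂ e₃ e₄ e₅
  have hcomb := binomial_combination_pModEq_of_hasLog
    (((hasLog_risingRatio_half hone).div ((hasLog_risingRatio_third hone).mul hd₉)).congr rfl
      (by ring))
    (((hasLog_risingRatio_half hone).div ((hasLog_risingRatio_sixth hone).mul hd₉)).congr rfl
      (by ring))
    (((hasLog_risingRatio_half htwo).div ((hasLog_risingRatio_third htwo).mul hd₁₅)).congr rfl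
      (by ring))
    (((hasLog_risingRatio_half htwo).div ((hasLog_risingRatio_sixth htwo).mul hd₁₅)).congr rfl
      (by ring))
    ((((hasLog_risingRatio_pred hone).mul (hasLog_risingRatio_half htwo)).div
      (((hasLog_risingRatio_sixth hone).mul (hasLog_risingRatio_third hone)).mul hd₁₅)).congr rfl
      (by ring)) hξ
  refine .of_sub_eq (hcomb.const_mul (mem_pInt_of_norm_eq_one norm_sixthChoose)) ?_
  rw [jacobiChoose]
  push_cast [-Int.natCast_ediv, hβ, hm, e₁, e₂, e₃, e₄, e₅]
  ring

end JacobiChooseCongruence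

section CentralSums

variable {p : ℕ} {V X : ℚ} [hp : Fact p.Prime]

lemma pDvd_sub_of_quadratic (hV : padicNorm p V = 1)
    (h : PDvd p 3 (V ^ 2 + p ^ 2 - (4 * X - 2 * p) * V)) : PDvd p 1 (4 * X - V) := by
  have hpV : PDvd p 1 (p * (p + 2 * V)) := PDvd.prime.mul_const
    (add_mem PDvd.prime.mem (mul_mem (natCast_mem _ 2) (mem_pInt_of_norm_eq_one hV)))
  exact .of_unit_mul hV ((hpV.sub (h.mono (by norm_num))).congr (by ring))

lemma pModEq_of_quadratic (hV : padicNorm p V = 1)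
    (h : PDvd p 3 (V ^ 2 + p ^ 2 - (4 * X - 2 * p) * V)) :
    PModEq p 3 V (4 * X - 2 * p - p ^ 2 / (4 * X)) := by
  have hdiff := pDvd_sub_of_quadratic hV h
  have hX : padicNorm p (4 * X) = 1 := norm_eq_one_of_pDvd_sub hV hdiff
  have hX0 : X ≠ 0 := right_ne_zero_of_mul (ne_zero_of_norm_eq_one hX)
  have hcorr : PDvd p 3 (p * p * (4 * X - V) * (4 * X)⁻¹) :=
    ((PDvd.prime.mul .prime).mul hdiff).mul_const (inv_mem_pInt_of_norm_eq_one hX)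
  refine .of_unit_mul hV ((h.sub hcorr).congr ?_)
  field_simp
  ring

variable [h3 : Fact (3 < p)]

lemma exists_hasLog_harmonic : ∃ ξ, HasLog p ξ (p * (harmonic (p / 3) / 2 - harmonic (p / 2) / 3) +
    p ^ 2 * (harmonicSq (p / 3) / 24)) := by
  have hlt := h3.out
  have ha : harmonic (p / 2) ∈ pInt p := harmonic_mem_pInt (by omega)
  have hb : harmonic (p / 3) ∈ pInt p := harmonic_mem_pInt (by omega)
  have hc : harmonicSq (p / 3) ∈ pInt p := harmonicSq_mem_pInt (by omega)
  have hconst (r : ℚ) (z : ℤ) (hr : 6 ^ 3 * r = z) : r ∈ pInt p := mem_pInt_of_six_pow_mul_eq 3 z hr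
  refine ⟨_, .truncExp ((PDvd.prime.mul_const (add_mem (sub_mem
    (mul_mem (hconst (1 / 2) 108 (by norm_num)) hb)
    (mul_mem (hconst (1 / 3) 72 (by norm_num)) ha)) (mul_mem PDvd.prime.mem
      (mul_mem (hconst (1 / 24) 9 (by norm_num)) hc)))).congr (by ring))⟩

lemma signed_sumF_zero_pModEq_jacobiChoose (h : p % 3 = 1) :
    PModEq p 3 ((-1) ^ (p / 2) * sumF 0 (p / 2 + 1)) ((jacobiChoose (p / 6) / 8 : ℚ) ^ 2) ∧
    PDvd p 1 ((jacobiChoose (p / 6) / 8 : ℚ) ^ 2 - sixthChoose p ^ 2) := by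
  obtain ⟨ξ, hξ⟩ := exists_hasLog_harmonic (p := p)
  have hβ := mem_pInt_of_norm_eq_one (norm_sixthChoose (p := p))
  have hξ' := neg_mem (mul_mem hβ hξ.mem)
  have hJ := jacobiChoose_pModEq h hξ
  have hsq := hJ.mul hJ hξ' (hJ.mem hξ')
  refine ⟨(signed_sumF_zero h hξ).trans (hsq.symm.congr (by ring)), ?_⟩
  have hξsq := (hξ.pow 2).pDvd_sub_one.const_mul (pow_mem hβ 2)
  exact (PDvd.add (hsq.mono (by norm_num)) hξsq).congr (by ring)

lemma jacobiChoose_quadratic (h : p % 3 = 1) {x y : ℤ} (hxy : (p : ℤ) = x ^ 2 + 3 * y ^ 2) :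
    PDvd p 3 (((jacobiChoose (p / 6) / 8 : ℚ) ^ 2) ^ 2 + p ^ 2 -
      (4 * x ^ 2 - 2 * p) * (jacobiChoose (p / 6) / 8 : ℚ) ^ 2) := by
  have hmod := mod_six_eq (p := p)
  have hdvd := pDvd_intCast_iff.2 (prime_pow_three_dvd_jacobiChoose (m := p / 6) (by omega) hxy)
  have hunit : (4096⁻¹ : ℚ) ∈ pInt p := mem_pInt_of_six_pow_mul_eq 12 531441 (by norm_num)
  refine (hdvd.const_mul hunit).congr ?_
  push_cast
  ring

theorem signed_centralSum_two (h : p % 3 = 1) {x y : ℤ} (hxy : (p : ℤ) = x ^ 2 + 3 * y ^ 2) :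
    PModEq p 3 ((-1) ^ (p / 2) * centralSum 2 p)
      (1 / 9 * x ^ 2 - p / 18 - p ^ 2 / (72 * x ^ 2)) := by
  obtain ⟨hF, hV⟩ := signed_sumF_zero_pModEq_jacobiChoose h
  set V := (jacobiChoose (p / 6) / 8 : ℚ) ^ 2
  have hβ := norm_sixthChoose (p := p)
  have hβsq : padicNorm p (sixthChoose p ^ 2) = 1 := by
    rw [IsAbsoluteValue.abv_pow (padicNorm p), hβ, one_pow]
  have hVunit := norm_eq_one_of_pDvd_sub hβsq hV
  have hquad := jacobiChoose_quadratic h hxy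
  have hroot := pModEq_of_quadratic hVunit hquad
  have hXV := pDvd_sub_of_quadratic hVunit hquad
  have hX := norm_eq_one_of_pDvd_sub hVunit hXV
  have hx0 : (x : ℚ) ≠ 0 := pow_ne_zero_iff two_ne_zero |>.1
    (right_ne_zero_of_mul (ne_zero_of_norm_eq_one hX))
  have hβ0 := ne_zero_of_norm_eq_one hβ
  have hconst : (1 / 36 : ℚ) ∈ pInt p := mem_pInt_of_six_pow_mul_eq 2 1 (by norm_num)
  have hW : PDvd p 3 (p * p * (4 * x ^ 2 - V + (V - sixthChoose p ^ 2)) *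
      (1 / 36 * (4 * x ^ 2 : ℚ)⁻¹ * (sixthChoose p ^ 2)⁻¹)) :=
    ((PDvd.prime.mul .prime).mul (hXV.add hV)).mul_const
      (mul_mem (mul_mem hconst (inv_mem_pInt_of_norm_eq_one hX))
        (inv_mem_pInt_of_norm_eq_one hβsq))
  have hS := (centralSum_two_pModEq (odd_of_three_lt (p := p))).const_mul
    (pow_mem (neg_mem (one_mem (pInt p))) (p / 2))
  refine hS.trans (.of_sub_eq (PDvd.sub (PDvd.add (PDvd.const_mul (hF.trans hroot) hconst)
    (signed_sumW_zero h)) hW) ?_)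
  field_simp
  ring

theorem signed_centralSum_three (h : p % 3 = 1) {x y : ℤ} (hxy : (p : ℤ) = x ^ 2 + 3 * y ^ 2) :
    PModEq p 3 ((-1) ^ (p / 2) * centralSum 3 p)
      (1 / 18 * x ^ 2 + p / 72 - p ^ 2 / (144 * x ^ 2)) := by
  have htwo := (signed_centralSum_two h hxy).const_mul inv_two_mem_pInt
  refine signed_centralSum_three_pModEq.trans (.of_sub_eq htwo ?_)
  rw [show (144 * x ^ 2 : ℚ) = 72 * x ^ 2 * 2 by ring, ← div_div]
  ring

end CentralSums

end CentralBinomCubes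

theorem statement4 (p : ℕ) (hp : p.Prime) (hp3 : 3 < p) :
    (∀ x y : ℤ, p % 3 = 1 → (p : ℤ) = x^2 + 3*y^2 →
      ratCongr p 3
        ((-1:ℚ)^((p-1)/2) *
          ∑ k ∈ Finset.range p, (k:ℚ)^2 * ((2*k).choose k : ℚ)^3 / 256^k)
        (1/9*(x:ℚ)^2 - (p:ℚ)/18 - (p:ℚ)^2/(72*(x:ℚ)^2)) ∧
      ratCongr p 3
        ((-1:ℚ)^((p-1)/2) *
          ∑ k ∈ Finset.range p, (k:ℚ)^3 * ((2*k).choose k : ℚ)^3 / 256^k)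
        (1/18*(x:ℚ)^2 + (p:ℚ)/72 - (p:ℚ)^2/(144*(x:ℚ)^2))) ∧
    (p % 3 = 2 →
      ratCongr p 2
        ((-1:ℚ)^((p-1)/2) *
          ∑ k ∈ Finset.range p, (k:ℚ)^2 * ((2*k).choose k : ℚ)^3 / 256^k)
        (-(2/9)*R3 p) ∧
      ratCongr p 2
        ((-1:ℚ)^((p-1)/2) *
          ∑ k ∈ Finset.range p, (k:ℚ)^3 * ((2*k).choose k : ℚ)^3 / 256^k)
        (-(1/9)*R3 p + (p:ℚ)/24)) := by
  have : Fact p.Prime := ⟨hp⟩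
  have : Fact (3 < p) := ⟨hp3⟩
  have hodd := CentralBinomCubes.odd_of_three_lt (p := p)
  rw [show (p - 1) / 2 = p / 2 by omega]
  exact ⟨fun x y h hxy => ⟨(CentralBinomCubes.signed_centralSum_two h hxy).ratCongr,
      (CentralBinomCubes.signed_centralSum_three h hxy).ratCongr⟩,
    fun h => ⟨(CentralBinomCubes.signed_centralSum_two_of_mod_three_eq_two h).ratCongr,
      (CentralBinomCubes.signed_centralSum_three_of_mod_three_eq_two h).ratCongr⟩⟩
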